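/- (Dyer–Grossman) For n ≥ 2, Out(B_n) has order 2; more precisely, every automorphism φ of B_n is either inner or inner composed with ε: for every group automorphism φ : B_n ≃* B_n there exists w ∈ B_n such that either φ(x) = w⁻¹xw for all x ∈ B_n, or φ(x) = w⁻¹ε(x)w for all x ∈ B_n; and ε itself is not inner, i.e. there is no w ∈ B_n with ε(x) = w⁻¹xw for all x. -/

import Mathlib

/-!
Write `Br k` for the braid group on `k + 1` strands, with generators `s k i`. Three homomorphic
invariants are used: the permutation `perm`, the exponent sum `expo`, and the signed crossing
numbers `cr b a c` of pairs of strands, which are linking numbers on pure braids and are equivariant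
under conjugation (`cr_conj`).

*Structure.* The stabiliser of the last strand in `Br (k + 1)` is the semidirect product of a free
group `F k`, of rank `k + 1`, by `Br k` acting through the Artin representation (`iota_injective`,
`exists_iota`). Injectivity comes from an explicit action of `Br (k + 1)` on a model of the cosets.
By induction, a finitely generated normal subgroup of the pure braid group with vanishing linking
numbers is trivial (`fg_normal_pure`), because this holds in free groups.

*The pure braid group is characteristic* (`aut_pure`). For an automorphism `φ`, the permutations of
the `φ (s k i)` generate the symmetric group and satisfy the braid relations. For at least five
strands Artin's counting argument shows that they are involutions (`artin_involution`). For four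
strands the alternative is that they are four-cycles; it contradicts the divisibility of linking
numbers (`four_case_inv`) or makes the image of the kernel of `B₄ → B₃` a forbidden finitely
generated normal subgroup (`four_case_same`).

*The permutations can be normalised* (`perm_conj`). Conjugation by a braid acts on linking numbers;
the trace of this action is invariant under automorphisms (`trace_aut`), which forces the
permutations of the `φ (s k i)` to be transpositions (`ug_swap`). Hence `φ` induces an inner
automorphism of the symmetric group, and after an inner correction it preserves permutations. An
integrality argument then shows that it multiplies linking numbers by a sign (`cr_sign`), and
composition with `ε` makes this sign equal to `1`.

*Normalised automorphisms are inner* (`Norm.inner`), by induction on the number of strands. Such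
an automorphism of `Br (k + 1)` preserves the free group `F k` (`Norm.map_freeHom`) and induces a
normalised automorphism of `Br k`, which may be assumed to be the identity. The braid `dd` permutes
the letters of `F k` cyclically; a version of Hilbert 90 for this cyclic action
(`Free.hilbert90`) yields a further inner correction after which `dd` is fixed (`Norm.fix_dd`).
The automorphism of `F k` then commutes with the rotation of the letters and preserves exponent
sums, so it is the identity by small cancellation (`Free.rigid`), and `φ` itself is the identity
(`Norm.eq_id`).

Finally `ε` is not inner since it changes the sign of the exponent sum.
-/

def braidRels (m : ℕ) : Set (FreeGroup (Fin m)) :=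
  { r | (∃ i j : Fin m, (i : ℕ) + 1 < (j : ℕ) ∧
          r = FreeGroup.of i * FreeGroup.of j * (FreeGroup.of i)⁻¹ * (FreeGroup.of j)⁻¹) ∨
        (∃ i j : Fin m, (i : ℕ) + 1 = (j : ℕ) ∧
          r = FreeGroup.of i * FreeGroup.of j * FreeGroup.of i *
              (FreeGroup.of j)⁻¹ * (FreeGroup.of i)⁻¹ * (FreeGroup.of j)⁻¹) }

/-- The braid group on `n` strands. -/
abbrev B (n : ℕ) := PresentedGroup (braidRels (n - 1))

/-- The Artin generators. -/
def σ {n : ℕ} (i : Fin (n - 1)) : B n := PresentedGroup.of i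

/-- Evaluation of a signed word in the generators. -/
def π {n : ℕ} (w : List (Fin (n - 1) × Bool)) : B n :=
  (w.map (fun p => if p.2 then σ p.1 else (σ p.1)⁻¹)).prod

/-- The submonoid of positive braids. -/
def P (n : ℕ) : Submonoid (B n) := Submonoid.closure (Set.range (σ (n := n)))

def σ' {n : ℕ} (j : ℕ) : B n := if h : j < n - 1 then σ ⟨j, h⟩ else 1

/-- The Garside half-twist element Δ. -/
def Δ (n : ℕ) : B n :=
  ((List.range (n - 1)).map
    (fun k => (((List.range (k + 1)).reverse).map (σ' (n := n))).prod)).prod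

/-- Simple elements: positive prefixes of Δ. -/
def Simple {n : ℕ} (s : B n) : Prop := s ∈ P n ∧ s⁻¹ * Δ n ∈ P n

/-- Palindromic-free positive braids. -/
def PalFree {n : ℕ} (x : B n) : Prop :=
  ∀ i : Fin (n - 1), (σ i)⁻¹ * x * (σ i)⁻¹ ∉ P n

/-- Canonical length at most `m`. -/
def lenLE {n : ℕ} (x : B n) (m : ℕ) : Prop :=
  ∃ p : ℤ, (Δ n) ^ (-p) * x ∈ P n ∧ x⁻¹ * (Δ n) ^ (p + (m : ℤ)) ∈ P n

/-- Canonical length exactly `m`. -/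
def lenEQ {n : ℕ} (x : B n) (m : ℕ) : Prop :=
  lenLE x m ∧ (1 ≤ m → ¬ lenLE x (m - 1))

/-- Left normal form (as a list of simple factors). -/
def IsLeftNF {n : ℕ} (x : B n) (L : List (B n)) : Prop :=
  (∀ s ∈ L, Simple s ∧ s ≠ 1) ∧ L.prod = x ∧
  ∀ i : ℕ, i + 1 < L.length → ∀ u : B n, Simple u →
    u⁻¹ * (L.getD i 1 * L.getD (i + 1) 1) ∈ P n → u⁻¹ * L.getD i 1 ∈ P n

/-- Right normal form (as a list of simple factors). -/
def IsRightNF {n : ℕ} (x : B n) (L : List (B n)) : Prop :=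
  (∀ s ∈ L, Simple s ∧ s ≠ 1) ∧ L.prod = x ∧
  ∀ i : ℕ, i + 1 < L.length → ∀ u : B n, Simple u →
    (L.getD i 1 * L.getD (i + 1) 1) * u⁻¹ ∈ P n → L.getD (i + 1) 1 * u⁻¹ ∈ P n

namespace DG

/-! ### Braid groups: generators, homomorphisms and induction -/

/-- The braid group with `k` Artin generators, i.e. on `k + 1` strands. -/
abbrev Br (k : ℕ) := PresentedGroup (braidRels k)

/-- The `i`-th Artin generator, indexed by natural numbers; it is `1` if `i ≥ k`. -/
def s (k i : ℕ) : Br k := if h : i < k then PresentedGroup.of ⟨i, h⟩ else 1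

theorem of_eq_s {k : ℕ} (i : Fin k) : (PresentedGroup.of i : Br k) = s k i := by
  simp [s, i.2]

theorem s_comm {k i j : ℕ} (h : i + 1 < j) : s k i * s k j = s k j * s k i := by
  unfold s
  split_ifs with h1 h2
  · have := PresentedGroup.one_of_mem (rels := braidRels k)
      (x := FreeGroup.of ⟨i, h1⟩ * FreeGroup.of ⟨j, h2⟩ * (FreeGroup.of ⟨i, h1⟩)⁻¹ *
        (FreeGroup.of ⟨j, h2⟩)⁻¹) (Or.inl ⟨_, _, h, rfl⟩)
    simp only [map_mul, map_inv] at this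
    rw [mul_inv_eq_one, mul_inv_eq_iff_eq_mul] at this
    exact this
  all_goals simp

theorem s_comm' {k i j : ℕ} (h : i + 1 < j ∨ j + 1 < i) : Commute (s k i) (s k j) := by
  rcases h with h | h
  · exact s_comm h
  · exact (s_comm h).symm

theorem s_braid {k i : ℕ} (h : i + 1 < k) :
    s k i * s k (i + 1) * s k i = s k (i + 1) * s k i * s k (i + 1) := by
  have h1 : i < k := by omega
  unfold s
  rw [dif_pos h, dif_pos h1]
  have := PresentedGroup.one_of_mem (rels := braidRels k)
      (x := FreeGroup.of ⟨i, h1⟩ * FreeGroup.of ⟨i + 1, h⟩ * FreeGroup.of ⟨i, h1⟩ *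
        (FreeGroup.of ⟨i + 1, h⟩)⁻¹ * (FreeGroup.of ⟨i, h1⟩)⁻¹ * (FreeGroup.of ⟨i + 1, h⟩)⁻¹)
        (Or.inr ⟨_, _, rfl, rfl⟩)
  simp only [map_mul, map_inv] at this
  rw [mul_inv_eq_one, mul_inv_eq_iff_eq_mul, mul_inv_eq_iff_eq_mul] at this
  exact this

/-- Homomorphisms out of a braid group, from images of the generators indexed by `ℕ`. -/
def lift {G : Type*} [Group G] (k : ℕ) (f : ℕ → G)
    (hc : ∀ i j, i + 1 < j → j < k → f i * f j = f j * f i)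
    (hb : ∀ i, i + 1 < k → f i * f (i + 1) * f i = f (i + 1) * f i * f (i + 1)) : Br k →* G :=
  PresentedGroup.toGroup (f := fun i : Fin k => f i) (by
    rintro r (⟨i, j, h, rfl⟩ | ⟨i, j, h, rfl⟩)
    · simp only [map_mul, map_inv, FreeGroup.lift_apply_of]
      rw [mul_inv_eq_one, mul_inv_eq_iff_eq_mul]
      exact hc _ _ h j.2
    · simp only [map_mul, map_inv, FreeGroup.lift_apply_of]
      rw [mul_inv_eq_one, mul_inv_eq_iff_eq_mul, mul_inv_eq_iff_eq_mul, ← h]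
      exact hb _ (by have := j.2; omega))

theorem lift_s {G : Type*} [Group G] {k : ℕ} {f : ℕ → G} {hc hb} {i : ℕ} (hi : i < k) :
    lift k f hc hb (s k i) = f i := by
  unfold s lift
  rw [dif_pos hi]
  exact PresentedGroup.toGroup.of _

theorem closure_s (k : ℕ) : Subgroup.closure {x : Br k | ∃ i < k, x = s k i} = ⊤ := by
  rw [eq_top_iff, ← PresentedGroup.closure_range_of, Subgroup.closure_le]
  rintro _ ⟨i, rfl⟩
  exact Subgroup.subset_closure ⟨i, i.2, of_eq_s i⟩

theorem ind {k : ℕ} {p : Br k → Prop} (h1 : p 1) (hs : ∀ i < k, p (s k i))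
    (hm : ∀ a b, p a → p b → p (a * b)) (hi : ∀ a, p a → p a⁻¹) (b : Br k) : p b := by
  have : b ∈ Subgroup.closure {x : Br k | ∃ i < k, x = s k i} := by
    rw [closure_s]; trivial
  induction this using Subgroup.closure_induction with
  | mem x hx => obtain ⟨i, h, rfl⟩ := hx; exact hs i h
  | one => exact h1
  | mul a b _ _ ha hb => exact hm a b ha hb
  | inv a _ ha => exact hi a ha

/-- Induction by left multiplication by generators and their inverses. -/
theorem ind_left {k : ℕ} {p : Br k → Prop} (h1 : p 1)
    (hs : ∀ i < k, ∀ b, p b → p (s k i * b)) (hs' : ∀ i < k, ∀ b, p b → p ((s k i)⁻¹ * b))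
    (b : Br k) : p b := by
  have : (∀ c, p c → p (b * c)) ∧ (∀ c, p c → p (b⁻¹ * c)) := by
    induction b using ind with
    | h1 => simp
    | hs i h => exact ⟨hs i h, hs' i h⟩
    | hm a b ha hb =>
      refine ⟨fun c hc => ?_, fun c hc => ?_⟩
      · rw [mul_assoc]; exact ha.1 _ (hb.1 _ hc)
      · rw [mul_inv_rev, mul_assoc]; exact hb.2 _ (ha.2 _ hc)
    | hi a ha => exact ⟨ha.2, by simpa using ha.1⟩
  simpa using this.1 1 h1

theorem hom_ext {G : Type*} [Group G] {k : ℕ} {f g : Br k →* G}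
    (h : ∀ i < k, f (s k i) = g (s k i)) : f = g := by
  ext i
  have := h i i.2
  rwa [← of_eq_s] at this

/-- The inverting endomorphism `σ_i ↦ σ_i⁻¹`. -/
def epsHom (k : ℕ) : Br k →* Br k :=
  lift k (fun i => (s k i)⁻¹)
    (fun i j h _ => by rw [← mul_inv_rev, ← mul_inv_rev, s_comm h])
    (fun i h => by
      simp only [← mul_inv_rev]
      rw [← mul_assoc, ← mul_assoc, s_braid h])

theorem epsHom_s {k i : ℕ} (h : i < k) : epsHom k (s k i) = (s k i)⁻¹ := lift_s h

theorem epsHom_epsHom (k : ℕ) : (epsHom k).comp (epsHom k) = MonoidHom.id _ :=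
  hom_ext fun i h => by simp [epsHom_s h]

/-- The inverting automorphism `ε`. -/
def eps (k : ℕ) : Br k ≃* Br k :=
  MonoidHom.toMulEquiv (epsHom k) (epsHom k) (epsHom_epsHom k) (epsHom_epsHom k)

theorem eps_s {k i : ℕ} (h : i < k) : eps k (s k i) = (s k i)⁻¹ := epsHom_s h

theorem eps_eps {k : ℕ} (b : Br k) : eps k (eps k b) = b := DFunLike.congr_fun (epsHom_epsHom k) b

/-- The exponent sum. -/
def expo (k : ℕ) : Br k →* Multiplicative ℤ :=
  lift k (fun _ => Multiplicative.ofAdd 1) (fun _ _ _ _ => rfl) (fun _ _ => rfl)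

theorem expo_s {k i : ℕ} (h : i < k) : expo k (s k i) = Multiplicative.ofAdd 1 := lift_s h

/-- Consecutive generators are conjugate, hence all generators are. -/
theorem s_isConj {k i j : ℕ} (hi : i < k) (hj : j < k) : IsConj (s k i) (s k j) := by
  have key : ∀ i, i < k → IsConj (s k 0) (s k i) := by
    intro i
    induction i with
    | zero => intro _; exact IsConj.refl _
    | succ i ih =>
      intro h
      refine (ih (by omega)).trans ?_
      rw [isConj_iff]
      refine ⟨s k i * s k (i + 1), ?_⟩
      rw [mul_inv_eq_iff_eq_mul, s_braid h, mul_assoc]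
  exact (key i hi).symm.trans (key j hj)

/-! ### The permutation of a braid -/

open Equiv in
/-- The permutation of a braid, acting on all of `ℕ` (fixing every point beyond `k`), so that
it is compatible with adding strands. -/
def perm (k : ℕ) : Br k →* Perm ℕ :=
  lift k (fun i => swap i (i + 1))
    (fun i j h _ => by
      refine Equiv.ext fun x => ?_
      simp only [Perm.mul_apply, swap_apply_def]
      split_ifs <;> omega)
    (fun i _ => by
      refine Equiv.ext fun x => ?_
      simp only [Perm.mul_apply, swap_apply_def]
      split_ifs <;> omega)

theorem perm_s {k i : ℕ} (h : i < k) : perm k (s k i) = Equiv.swap i (i + 1) := lift_s h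

theorem perm_fix {k : ℕ} (b : Br k) {j : ℕ} (hj : k < j) : perm k b j = j := by
  induction b using ind with
  | h1 => simp
  | hs i h => rw [perm_s h, Equiv.swap_apply_of_ne_of_ne] <;> omega
  | hm a b ha hb => simp [ha, hb]
  | hi a ha => rw [map_inv, Equiv.Perm.inv_eq_iff_eq, ha]

theorem perm_le {k : ℕ} (b : Br k) {j : ℕ} (hj : j ≤ k) : perm k b j ≤ k := by
  by_contra! h
  have := perm_fix b h
  have := (perm k b).injective this
  omega

theorem perm_eps {k : ℕ} (b : Br k) : perm k (eps k b) = perm k b := by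
  have : (perm k).comp (eps k).toMonoidHom = perm k := hom_ext fun i h => by
    simp [eps_s h, perm_s h]
  exact DFunLike.congr_fun this b

/-- The permutation of a braid as a permutation of the `k + 1` strands. -/
def permF (k : ℕ) : Br k →* Equiv.Perm (Fin (k + 1)) where
  toFun b := (perm k b).subtypePerm (p := fun j => j < k + 1) (fun x => by
    constructor
    · intro h
      by_contra h'
      rw [perm_fix b (by omega)] at h
      exact h' h
    · intro h
      have := perm_le b (j := x) (by omega)
      omega) |> Equiv.permCongr (Fin.equivSubtype.symm)
  map_one' := by ext; simp
  map_mul' a b := by ext; simp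

theorem permF_val {k : ℕ} (b : Br k) (j : Fin (k + 1)) : (permF k b j : ℕ) = perm k b j := by
  simp [permF]

theorem permF_s {k : ℕ} (i : Fin k) : permF k (s k i) = Equiv.swap i.castSucc i.succ := by
  ext j
  rw [permF_val, perm_s i.2, Equiv.swap_apply_def, Equiv.swap_apply_def]
  simp only [Fin.ext_iff, Fin.val_castSucc, Fin.val_succ]
  split_ifs <;> rfl

theorem permF_eq_iff {k : ℕ} {a b : Br k} : permF k a = permF k b ↔ perm k a = perm k b := by
  constructor
  · intro h
    ext j
    by_cases hj : j ≤ k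
    · have := congrArg (fun e => ((e (⟨j, by omega⟩ : Fin (k + 1)) : Fin (k + 1)) : ℕ)) h
      simpa [permF_val] using this
    · rw [perm_fix a (by omega), perm_fix b (by omega)]
  · intro h
    ext j
    rw [permF_val, permF_val, h]

theorem permF_eq_one {k : ℕ} {a : Br k} : permF k a = 1 ↔ perm k a = 1 := by
  have := permF_eq_iff (a := a) (b := 1)
  simpa using this

theorem permF_surj (k : ℕ) : Function.Surjective (permF k) := by
  rw [← MonoidHom.range_eq_top, eq_top_iff]
  intro g _
  have h := Equiv.Perm.mclosure_swap_castSucc_succ k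
  have hg : g ∈ Submonoid.closure
    (Set.range fun i : Fin k => Equiv.swap i.castSucc i.succ) := by rw [h]; trivial
  refine (Submonoid.closure_le (S := (permF k).range.toSubmonoid)).2 ?_ hg
  rintro _ ⟨i, rfl⟩
  exact ⟨s k i, permF_s i⟩

/-- The pure braid group. -/
def Pure (k : ℕ) : Subgroup (Br k) := (perm k).ker

instance (k : ℕ) : (Pure k).Normal := by unfold Pure; infer_instance

theorem mem_Pure {k : ℕ} {b : Br k} : b ∈ Pure k ↔ perm k b = 1 := Iff.rfl

theorem mem_Pure' {k : ℕ} {b : Br k} : b ∈ Pure k ↔ permF k b = 1 := permF_eq_one.symm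

theorem eps_mem_Pure {k : ℕ} {b : Br k} : eps k b ∈ Pure k ↔ b ∈ Pure k := by
  rw [mem_Pure, perm_eps, mem_Pure]

end DG

namespace DG

/-! ### The crossing cocycle -/

open Equiv

/-- The indicator of the unordered pair `{p, q}`. -/
def E (p q a b : ℕ) : ℤ := if (a = p ∧ b = q) ∨ (a = q ∧ b = p) then 1 else 0

theorem E_perm (g : Perm ℕ) (p q a b : ℕ) : E p q (g⁻¹ a) (g⁻¹ b) = E (g p) (g q) a b := by
  simp only [E, Perm.inv_eq_iff_eq]

theorem E_comm (p q a b : ℕ) : E p q a b = E p q b a := by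
  simp only [E]; congr 1; simp only [eq_iff_iff]; tauto

theorem E_symm (p q a b : ℕ) : E p q a b = E q p a b := by
  simp only [E]; congr 1; simp only [eq_iff_iff]; tauto

/-- The affine permutation of `ℕ → ℕ → ℤ` attached to the generator `σ_i`. -/
def crGen (i : ℕ) : Perm (ℕ → ℕ → ℤ) where
  toFun v a b := v ((swap i (i + 1))⁻¹ a) ((swap i (i + 1))⁻¹ b) + E i (i + 1) a b
  invFun v a b := v (swap i (i + 1) a) (swap i (i + 1) b)
    - E i (i + 1) (swap i (i + 1) a) (swap i (i + 1) b)
  left_inv v := by funext a b; simp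
  right_inv v := by funext a b; simp

theorem crGen_apply (i : ℕ) (v a b) :
    crGen i v a b = v ((swap i (i + 1))⁻¹ a) ((swap i (i + 1))⁻¹ b) + E i (i + 1) a b := rfl

/-- The affine action of a braid on `ℕ → ℕ → ℤ`, whose translation part counts signed crossings
between pairs of strands. -/
def crAct (k : ℕ) : Br k →* Perm (ℕ → ℕ → ℤ) :=
  lift k crGen
    (fun i j h _ => by
      have hc : swap i (i + 1) * swap j (j + 1) = swap j (j + 1) * swap i (i + 1) := by
        refine Equiv.ext fun x => ?_
        simp only [Perm.mul_apply, swap_apply_def]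
        split_ifs <;> omega
      refine Equiv.ext fun v => funext fun a => funext fun b => ?_
      simp only [Perm.mul_apply, crGen_apply, E_perm]
      simp only [← Perm.mul_apply, ← mul_inv_rev, hc]
      rw [swap_apply_of_ne_of_ne, swap_apply_of_ne_of_ne, swap_apply_of_ne_of_ne,
        swap_apply_of_ne_of_ne] <;> omega)
    (fun i _ => by
      have hc : swap i (i + 1) * (swap (i + 1) (i + 1 + 1) * swap i (i + 1)) =
          swap (i + 1) (i + 1 + 1) * (swap i (i + 1) * swap (i + 1) (i + 1 + 1)) := by
        refine Equiv.ext fun x => ?_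
        simp only [Perm.mul_apply, swap_apply_def]
        split_ifs <;> omega
      refine Equiv.ext fun v => funext fun a => funext fun b => ?_
      simp only [Perm.mul_apply, crGen_apply, E_perm]
      simp only [← Perm.mul_apply, ← mul_inv_rev, hc, mul_assoc]
      have e1 : swap (i + 1) (i + 1 + 1) i = i := swap_apply_of_ne_of_ne (by omega) (by omega)
      have e2 : swap i (i + 1) (i + 1 + 1) = i + 1 + 1 :=
        swap_apply_of_ne_of_ne (by omega) (by omega)
      simp only [Perm.mul_apply, swap_apply_left, swap_apply_right, e1, e2]
      ring)

/-- The signed crossing numbers of a braid. -/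
def cr {k : ℕ} (b : Br k) : ℕ → ℕ → ℤ := crAct k b 0

theorem crAct_eq {k : ℕ} (g : Br k) (v : ℕ → ℕ → ℤ) (a b : ℕ) :
    crAct k g v a b = v ((perm k g)⁻¹ a) ((perm k g)⁻¹ b) + cr g a b := by
  induction g using ind_left generalizing v a b with
  | h1 => simp [cr]
  | hs i h g ih =>
    have e : ∀ v, crAct k (s k i * g) v = crGen i (crAct k g v) := fun v => by
      rw [map_mul, Perm.mul_apply, crAct, lift_s h]
    rw [cr, e, e, crGen_apply, crGen_apply, ih, ih 0, map_mul, perm_s h, mul_inv_rev]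
    simp only [Perm.mul_apply, Pi.zero_apply]
    ring
  | hs' i h g ih =>
    have e : ∀ v, crAct k ((s k i)⁻¹ * g) v = (crGen i).symm (crAct k g v) := fun v => by
      rw [map_mul, Perm.mul_apply, map_inv, crAct, lift_s h]; rfl
    have e2 : ∀ v a b, (crGen i).symm v a b = v (swap i (i + 1) a) (swap i (i + 1) b)
      - E i (i + 1) (swap i (i + 1) a) (swap i (i + 1) b) := fun _ _ _ => rfl
    rw [cr, e, e, e2, e2, ih, ih 0, map_mul, map_inv, perm_s h, mul_inv_rev]
    simp only [Perm.mul_apply, Pi.zero_apply, inv_inv]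
    ring

theorem cr_mul {k : ℕ} (g h : Br k) (a b : ℕ) :
    cr (g * h) a b = cr h ((perm k g)⁻¹ a) ((perm k g)⁻¹ b) + cr g a b := by
  rw [cr, map_mul, Perm.mul_apply, crAct_eq]
  rfl

theorem cr_one {k : ℕ} : cr (1 : Br k) = 0 := by simp [cr]

theorem cr_s {k i : ℕ} (h : i < k) : cr (s k i) = E i (i + 1) := by
  funext a b
  rw [cr, crAct, lift_s h, crGen_apply]
  simp

theorem cr_inv {k : ℕ} (g : Br k) (a b : ℕ) :
    cr g⁻¹ a b = - cr g (perm k g a) (perm k g b) := by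
  have := cr_mul g g⁻¹ (perm k g a) (perm k g b)
  simp [cr_one] at this
  linarith

theorem cr_mul_pure {k : ℕ} {g : Br k} (hg : g ∈ Pure k) (h : Br k) :
    cr (g * h) = cr g + cr h := by
  funext a b
  rw [cr_mul, mem_Pure.1 hg]
  simp [add_comm]

theorem cr_inv_pure {k : ℕ} {g : Br k} (hg : g ∈ Pure k) : cr g⁻¹ = - cr g := by
  funext a b
  rw [cr_inv, mem_Pure.1 hg]
  simp

theorem cr_conj {k : ℕ} (g : Br k) {h : Br k} (hh : h ∈ Pure k) (a b : ℕ) :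
    cr (g * h * g⁻¹) a b = cr h ((perm k g)⁻¹ a) ((perm k g)⁻¹ b) := by
  rw [mul_assoc, cr_mul, cr_mul_pure hh]
  simp [cr_inv]

theorem cr_symm {k : ℕ} (g : Br k) (a b : ℕ) : cr g a b = cr g b a := by
  induction g using ind generalizing a b with
  | h1 => simp [cr_one]
  | hs i h => rw [cr_s h, E_comm]
  | hm g h ihg ihh => rw [cr_mul, cr_mul, ihg, ihh]
  | hi g ih => rw [cr_inv, cr_inv, ih]

theorem cr_diag {k : ℕ} (g : Br k) (a : ℕ) : cr g a a = 0 := by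
  induction g using ind generalizing a with
  | h1 => simp [cr_one]
  | hs i h => rw [cr_s h, E, if_neg]; omega
  | hm g h ihg ihh => rw [cr_mul, ihg, ihh, add_zero]
  | hi g ih => rw [cr_inv, ih, neg_zero]

theorem cr_out {k : ℕ} (g : Br k) {a : ℕ} (b : ℕ) (ha : k < a) : cr g a b = 0 := by
  induction g using ind generalizing b with
  | h1 => simp [cr_one]
  | hs i h => rw [cr_s h, E, if_neg]; omega
  | hm g h ihg ihh =>
    rw [cr_mul, ihg, show (perm k g)⁻¹ a = a by rw [← map_inv]; exact perm_fix _ ha, ihh, add_zero]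
  | hi g ih => rw [cr_inv, perm_fix _ ha, ih, neg_zero]

theorem cr_eps {k : ℕ} (g : Br k) (a b : ℕ) : cr (eps k g) a b = - cr g a b := by
  induction g using ind generalizing a b with
  | h1 => simp [cr_one]
  | hs i h =>
    rw [eps_s h, cr_inv, cr_s h, perm_s h]
    have := E_perm (swap i (i + 1))⁻¹ i (i + 1) a b
    rw [inv_inv] at this
    rw [this]
    simp [E_symm]
  | hm g h ihg ihh => rw [map_mul, cr_mul, cr_mul, ihg, ihh, perm_eps]; ring
  | hi g ih => rw [map_inv, cr_inv, cr_inv, ih, perm_eps]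

/-- The parity of the crossing number of two strands records whether they are inverted. -/
theorem cr_even_iff {k : ℕ} (g : Br k) {a b : ℕ} (hab : a ≠ b) :
    Even (cr g a b) ↔ ((perm k g)⁻¹ a < (perm k g)⁻¹ b ↔ a < b) := by
  induction g using ind_left generalizing a b with
  | h1 => simp [cr_one]
  | hs i h g ih =>
    have h1 : (swap i (i + 1)) a ≠ (swap i (i + 1)) b := fun h => hab (Equiv.injective _ h)
    rw [cr_mul, Int.even_add, map_mul, mul_inv_rev, perm_s h, cr_s h]
    simp only [Perm.mul_apply, swap_inv]
    rw [ih h1]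
    have : ((swap i (i + 1)) a < (swap i (i + 1)) b ↔ a < b) ↔ Even (E i (i + 1) a b) := by
      unfold E
      simp only [swap_apply_def]
      split_ifs <;> simp <;> omega
    tauto
  | hs' i h g ih =>
    have h1 : (swap i (i + 1)) a ≠ (swap i (i + 1)) b := fun h => hab (Equiv.injective _ h)
    rw [cr_mul, Int.even_add, map_mul, mul_inv_rev, map_inv, cr_inv, perm_s h, cr_s h]
    simp only [Perm.mul_apply, swap_inv]
    rw [ih h1, even_neg]
    have : ((swap i (i + 1)) a < (swap i (i + 1)) b ↔ a < b) ↔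
        Even (E i (i + 1) (swap i (i + 1) a) (swap i (i + 1) b)) := by
      unfold E
      simp only [swap_apply_def]
      split_ifs <;> simp <;> omega
    tauto

theorem cr_even {k : ℕ} {g : Br k} (hg : g ∈ Pure k) (a b : ℕ) : Even (cr g a b) := by
  by_cases hab : a = b
  · subst hab; simp [cr_diag]
  · rw [cr_even_iff g hab, mem_Pure.1 hg]; simp

theorem s_sq_pure {k i : ℕ} (h : i < k) : s k i * s k i ∈ Pure k := by
  rw [mem_Pure, map_mul, perm_s h, swap_mul_self]

theorem cr_s_sq {k i : ℕ} (h : i < k) : cr (s k i * s k i) = fun a b => 2 * E i (i + 1) a b := by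
  funext a b
  rw [cr_mul, cr_s h, perm_s h, E_perm]
  simp [E_symm (i + 1) i]
  ring

end DG

namespace DG

/-! ### The Artin action on a free group -/

theorem mulAut_ext {α : Type*} {f g : MulAut (FreeGroup α)}
    (h : ∀ j, f (FreeGroup.of j) = g (FreeGroup.of j)) : f = g := by
  have : f.toMonoidHom = g.toMonoidHom := FreeGroup.ext_hom _ _ h
  exact MulEquiv.ext fun x => DFunLike.congr_fun this x

section artin
variable {α : Type*} [DecidableEq α]

/-- `a ↦ b`, `b ↦ b⁻¹ a b`. -/
def artFwd (a b : α) : FreeGroup α →* FreeGroup α :=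
  FreeGroup.lift fun j => if j = a then FreeGroup.of b else
    if j = b then (FreeGroup.of b)⁻¹ * FreeGroup.of a * FreeGroup.of b else FreeGroup.of j

/-- `b ↦ a`, `a ↦ a b a⁻¹`. -/
def artBwd (a b : α) : FreeGroup α →* FreeGroup α :=
  FreeGroup.lift fun j => if j = b then FreeGroup.of a else
    if j = a then FreeGroup.of a * FreeGroup.of b * (FreeGroup.of a)⁻¹ else FreeGroup.of j

/-- The automorphism of a free group induced by an Artin generator exchanging the letters `a`
and `b`: it sends `a` to `b` and `b` to `b⁻¹ a b`. -/
def art (a b : α) (h : a ≠ b) : MulAut (FreeGroup α) :=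
  MonoidHom.toMulEquiv (artFwd a b) (artBwd a b)
    (by
      ext j
      by_cases ha : j = a
      · subst ha; simp [artFwd, artBwd]
      · by_cases hb : j = b
        · subst hb; simp [artFwd, artBwd, h, ha, mul_assoc]
        · simp [artFwd, artBwd, ha, hb])
    (by
      ext j
      by_cases ha : j = a
      · subst ha; simp [artFwd, artBwd, h, Ne.symm h, mul_assoc]
      · by_cases hb : j = b
        · subst hb; simp [artFwd, artBwd]
        · simp [artFwd, artBwd, ha, hb])

theorem art_of_left {a b : α} (h : a ≠ b) : art a b h (FreeGroup.of a) = FreeGroup.of b := by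
  simp [art, artFwd]

theorem art_of_right {a b : α} (h : a ≠ b) : art a b h (FreeGroup.of b) =
    (FreeGroup.of b)⁻¹ * FreeGroup.of a * FreeGroup.of b := by
  simp [art, artFwd, Ne.symm h]

theorem art_of_ne {a b j : α} (h : a ≠ b) (ha : j ≠ a) (hb : j ≠ b) :
    art a b h (FreeGroup.of j) = FreeGroup.of j := by
  simp [art, artFwd, ha, hb]

theorem art_comm {a b c d : α} (hab : a ≠ b) (hcd : c ≠ d) (hac : a ≠ c) (had : a ≠ d)
    (hbc : b ≠ c) (hbd : b ≠ d) :
    art a b hab * art c d hcd = art c d hcd * art a b hab := by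
  refine mulAut_ext fun j => ?_
  simp only [MulAut.mul_apply]
  by_cases h1 : j = a
  · subst h1
    rw [art_of_ne hcd hac had, art_of_left, art_of_ne hcd hbc hbd]
  by_cases h2 : j = b
  · subst h2
    rw [art_of_ne hcd hbc hbd, art_of_right, map_mul, map_mul, map_inv, art_of_ne hcd hac had,
      art_of_ne hcd hbc hbd]
  rw [art_of_ne hab h1 h2]
  by_cases h3 : j = c
  · subst h3
    rw [art_of_left, art_of_ne hab had.symm hbd.symm]
  by_cases h4 : j = d
  · subst h4
    rw [art_of_right, map_mul, map_mul, map_inv, art_of_ne hab h1 h2,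
      art_of_ne hab hac.symm hbc.symm]
  rw [art_of_ne hcd h3 h4, art_of_ne hab h1 h2]

theorem art_braid {a b c : α} (hab : a ≠ b) (hbc : b ≠ c) (hac : a ≠ c) :
    art a b hab * art b c hbc * art a b hab = art b c hbc * art a b hab * art b c hbc := by
  refine mulAut_ext fun j => ?_
  simp only [MulAut.mul_apply]
  by_cases h1 : j = a
  · subst h1
    simp only [art_of_left, art_of_ne hbc hab hac, art_of_ne hab hac.symm hbc.symm]
  by_cases h2 : j = b
  · subst h2
    simp only [art_of_left, art_of_right, map_mul, map_inv, art_of_ne hbc hab hac,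
      art_of_ne hab hac.symm hbc.symm]
  by_cases h3 : j = c
  · subst h3
    simp only [art_of_left, art_of_right, map_mul, map_inv, art_of_ne hbc hab hac,
      art_of_ne hab hac.symm hbc.symm]
    group
  simp only [art_of_ne hab h1 h2, art_of_ne hbc h2 h3]

end artin

/-- The free group on `k + 1` letters. -/
abbrev F (k : ℕ) := FreeGroup (Fin (k + 1))

/-- The `j`-th letter of the free group; `1` if `j > k`. -/
def x (k j : ℕ) : F k := if h : j < k + 1 then FreeGroup.of ⟨j, h⟩ else 1

theorem of_eq_x {k : ℕ} (j : Fin (k + 1)) : FreeGroup.of j = x k j := by simp [x, j.2]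

/-- The action of the braid group on the free group. -/
def artin (k : ℕ) : Br k →* MulAut (F k) :=
  lift k (fun i => if h : i < k then
      art (⟨i, by omega⟩ : Fin (k + 1)) ⟨i + 1, by omega⟩ (by simp) else 1)
    (fun i j h hj => by
      rw [dif_pos hj, dif_pos (by omega)]
      apply art_comm <;> simp <;> omega)
    (fun i h => by
      rw [dif_pos h, dif_pos (by omega)]
      apply art_braid
      simp
      omega)

theorem artin_s {k i : ℕ} (h : i < k) : artin k (s k i) =
    art (⟨i, by omega⟩ : Fin (k + 1)) ⟨i + 1, by omega⟩ (by simp) := by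
  rw [artin, lift_s h, dif_pos h]

theorem artin_left {k i : ℕ} (h : i < k) : artin k (s k i) (x k i) = x k (i + 1) := by
  rw [artin_s h, x, dif_pos (by omega), art_of_left, x, dif_pos (by omega)]

theorem artin_right {k i : ℕ} (h : i < k) : artin k (s k i) (x k (i + 1)) =
    (x k (i + 1))⁻¹ * x k i * x k (i + 1) := by
  rw [artin_s h, x, dif_pos (by omega), art_of_right, x, dif_pos (by omega)]

theorem artin_ne {k i j : ℕ} (h : i < k) (h1 : j ≠ i) (h2 : j ≠ i + 1) :
    artin k (s k i) (x k j) = x k j := by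
  rw [artin_s h, x]
  split_ifs with h3
  · rw [art_of_ne] <;> simpa
  · simp

/-- The semidirect product of the free group by the braid group. -/
abbrev S (k : ℕ) := F k ⋊[artin k] Br k

/-- Letters in the semidirect product. -/
abbrev xS (k j : ℕ) : S k := SemidirectProduct.inl (x k j)

/-- Generators of the braid group in the semidirect product. -/
abbrev sS (k j : ℕ) : S k := SemidirectProduct.inr (s k j)

theorem sS_xS_left {k i : ℕ} (h : i < k) : sS k i * xS k i = xS k (i + 1) * sS k i := by
  have := SemidirectProduct.inl_aut (φ := artin k) (s k i) (x k i)
  rw [artin_left h, map_inv, eq_mul_inv_iff_mul_eq] at this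
  exact this.symm

theorem sS_xS_ne {k i j : ℕ} (h : i < k) (h1 : j ≠ i) (h2 : j ≠ i + 1) :
    sS k i * xS k j = xS k j * sS k i := by
  have := SemidirectProduct.inl_aut (φ := artin k) (s k i) (x k j)
  rw [artin_ne h h1 h2, map_inv, eq_mul_inv_iff_mul_eq] at this
  exact this.symm

theorem sS_xS_right {k i : ℕ} (h : i < k) :
    sS k i * (xS k i * xS k (i + 1)) = xS k i * xS k (i + 1) * sS k i := by
  have := SemidirectProduct.inl_aut (φ := artin k) (s k i) (x k i * x k (i + 1))
  rw [map_mul, artin_left h, artin_right h, map_inv, eq_mul_inv_iff_mul_eq] at this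
  simp only [xS, sS]
  rw [← map_mul, ← this]
  congr 2
  group

theorem sS_comm {k i j : ℕ} (h : i + 1 < j) : sS k i * sS k j = sS k j * sS k i := by
  simp only [sS, ← map_mul, s_comm h]

theorem sS_braid {k i : ℕ} (h : i + 1 < k) :
    sS k i * (sS k (i + 1) * sS k i) = sS k (i + 1) * (sS k i * sS k (i + 1)) := by
  simp only [sS, ← map_mul, ← mul_assoc, s_braid h]

/-! ### The stabiliser of the last strand is the semidirect product -/

/-- `tw k j l = σ_{j+l-1} ⋯ σ_{j+1} σ_j` in `Br k`. -/
def tw (k : ℕ) : ℕ → ℕ → Br k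
  | _, 0 => 1
  | j, l + 1 => tw k (j + 1) l * s k j

/-- `T k j = σ_k ⋯ σ_j` in `Br (k + 1)`, moving strand `j` to the last place. -/
def T (k j : ℕ) : Br (k + 1) := tw (k + 1) j (k + 1 - j)

theorem T_last (k : ℕ) : T k (k + 1) = 1 := by simp [T, tw]

theorem T_succ {k j : ℕ} (h : j ≤ k) : T k j = T k (j + 1) * s (k + 1) j := by
  unfold T
  rw [show k + 1 - j = (k + 1 - (j + 1)) + 1 by omega, tw]

theorem tw_comm {k i j l : ℕ} (h : i + 1 < j) : Commute (tw k j l) (s k i) := by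
  induction l generalizing j with
  | zero => exact Commute.one_left _
  | succ l ih => exact (ih (by omega)).mul_left (s_comm' (Or.inr h))

theorem T_comm {k i j : ℕ} (h : i + 1 < j) : T k j * s (k + 1) i = s (k + 1) i * T k j :=
  tw_comm h

theorem T_shift {k i j : ℕ} (h : j ≤ i) (hi : i < k) :
    T k j * s (k + 1) (i + 1) = s (k + 1) i * T k j := by
  obtain ⟨d, rfl⟩ := Nat.exists_eq_add_of_le h
  induction d generalizing j with
  | zero =>
    simp only [add_zero] at *
    rw [T_succ (by omega : j ≤ k), T_succ (by omega : j + 1 ≤ k), mul_assoc, mul_assoc,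
      ← mul_assoc (s (k + 1) (j + 1)), ← s_braid (by omega), ← mul_assoc, ← mul_assoc,
      T_comm (by omega)]
    simp only [mul_assoc]
  | succ d ih =>
    have := ih (j := j + 1) (by omega) (by omega)
    rw [T_succ (by omega : j ≤ k), mul_assoc, s_comm (by omega), ← mul_assoc,
      show j + (d + 1) + 1 = j + 1 + d + 1 by omega, this,
      show j + 1 + d = j + (d + 1) by omega, mul_assoc]

/-- The pure braid `X_j` winding the last strand around strand `j`. -/
def X (k j : ℕ) : Br (k + 1) := T k j * s (k + 1) j * (T k (j + 1))⁻¹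

theorem X_comm_lt {k i j : ℕ} (h : i + 1 < j) : Commute (s (k + 1) i) (X k j) := by
  have h1 : Commute (s (k + 1) i) (T k j) := (T_comm h).symm
  have h2 : Commute (s (k + 1) i) (T k (j + 1)) := (T_comm (by omega)).symm
  exact (h1.mul_right (s_comm' (Or.inl h))).mul_right h2.inv_right

theorem X_comm_gt {k i j : ℕ} (h : j < i) (hi : i < k) : Commute (s (k + 1) i) (X k j) := by
  have h1 := T_shift (k := k) h.le hi
  have h2 := T_shift (k := k) (j := j + 1) (i := i) h hi
  have h3 : (T k (j + 1))⁻¹ * s (k + 1) i = s (k + 1) (i + 1) * (T k (j + 1))⁻¹ := by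
    rw [inv_mul_eq_iff_eq_mul, ← mul_assoc, h2]; group
  show _ * _ = _ * _
  rw [X, mul_assoc _ _ (s (k + 1) i), h3, ← mul_assoc, ← mul_assoc, ← h1, mul_assoc (T k j),
    ← s_comm (i := j) (j := i + 1) (by omega)]
  simp only [mul_assoc]

theorem braid_aux1 {G : Type*} [Group G] {a b : G} (h : a * b * a = b * a * b) :
    a * b * a * a = b * b * a * b := by
  rw [h, mul_assoc, mul_assoc, ← mul_assoc a b a, h]; simp only [mul_assoc]

theorem braid_aux2 {G : Type*} [Group G] {a b : G} (h : a * b * a = b * a * b) :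
    a * (b * a * a * b) = b * a * a * b * a := by
  calc a * (b * a * a * b) = (a * b * a) * (a * b) := by simp only [mul_assoc]
    _ = b * a * (b * a * b) := by rw [h]; simp only [mul_assoc]
    _ = b * a * a * b * a := by rw [← h]; simp only [mul_assoc]

theorem X_left {k i : ℕ} (h : i < k) : s (k + 1) i * X k i = X k (i + 1) * s (k + 1) i := by
  have hb := s_braid (k := k + 1) (i := i) (by omega)
  have h2 := T_comm (k := k) (i := i) (j := i + 2) (by omega)
  have h3 : (T k (i + 2))⁻¹ * s (k + 1) i = s (k + 1) i * (T k (i + 2))⁻¹ := by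
    rw [inv_mul_eq_iff_eq_mul, ← mul_assoc, h2]; group
  rw [X, X, mul_assoc (T k (i + 1) * _), h3, T_succ h.le, T_succ (by omega : i + 1 ≤ k)]
  simp only [mul_inv_rev, ← mul_assoc]
  rw [show i + 1 + 1 = i + 2 from rfl, ← h2]
  congr 1
  rw [mul_inv_eq_iff_eq_mul]
  have := braid_aux1 hb
  simp only [mul_assoc] at this ⊢
  rw [this]

theorem X_right {k i : ℕ} (h : i < k) : Commute (s (k + 1) i) (X k i * X k (i + 1)) := by
  have hb := s_braid (k := k + 1) (i := i) (by omega)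
  have h2 := T_comm (k := k) (i := i) (j := i + 2) (by omega)
  have e : X k i * X k (i + 1) = T k (i + 2) *
      (s (k + 1) (i + 1) * s (k + 1) i * s (k + 1) i * s (k + 1) (i + 1)) * (T k (i + 2))⁻¹ := by
    rw [X, X, T_succ h.le, T_succ (by omega : i + 1 ≤ k)]
    group
  have h1 : Commute (s (k + 1) i) (T k (i + 2)) := h2.symm
  rw [e]
  refine (h1.mul_right ?_).mul_right h1.inv_right
  show _ * _ = _ * _
  exact braid_aux2 hb

end DG

namespace DG

/-! ### Adding a strand and the coset action -/

open Equiv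

/-- Adding a last strand. -/
def up (k : ℕ) : Br k →* Br (k + 1) :=
  lift k (fun i => s (k + 1) i) (fun _ _ h _ => s_comm h) (fun _ h => s_braid (by omega))

theorem up_s {k i : ℕ} (h : i < k) : up k (s k i) = s (k + 1) i := lift_s h

/-- The free group of braids in which only the last strand moves. -/
def freeHom (k : ℕ) : F k →* Br (k + 1) := FreeGroup.lift fun j => X k j

theorem freeHom_x {k j : ℕ} (h : j ≤ k) : freeHom k (x k j) = X k j := by
  rw [x, dif_pos (by omega), freeHom, FreeGroup.lift_apply_of]

theorem freeHom_artin {k : ℕ} (b : Br k) (f : F k) :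
    freeHom k (artin k b f) = up k b * freeHom k f * (up k b)⁻¹ := by
  induction b using ind generalizing f with
  | h1 => simp
  | hs i h =>
    have : (freeHom k).comp (artin k (s k i)).toMonoidHom =
        (MulAut.conj (up k (s k i))).toMonoidHom.comp (freeHom k) := by
      ext j
      simp only [MonoidHom.coe_comp, Function.comp_apply, MulEquiv.coe_toMonoidHom,
        MulAut.conj_apply, up_s h]
      rw [of_eq_x, eq_mul_inv_iff_mul_eq]
      have hj := j.2
      generalize (j : ℕ) = j at *
      rcases lt_trichotomy j i with h1 | h1 | h1
      · rw [artin_ne h (by omega) (by omega), freeHom_x (by omega)]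
        exact (X_comm_gt h1 h).symm
      · subst h1
        rw [artin_left h, freeHom_x (by omega), freeHom_x (by omega), X_left h]
      · rcases eq_or_lt_of_le (Nat.succ_le_of_lt h1) with h2 | h2
        · simp only [Nat.succ_eq_add_one] at h2
          subst h2
          rw [artin_right h, map_mul, map_mul, map_inv, freeHom_x (by omega),
            freeHom_x (by omega)]
          have := X_right (k := k) h
          have h3 := X_left (k := k) h
          have h4 : s (k + 1) i * (X k i * X k (i + 1)) = X k i * X k (i + 1) * s (k + 1) i := this
          rw [← mul_assoc, h3, mul_assoc] at h4
          rw [mul_assoc, mul_assoc, inv_mul_eq_iff_eq_mul, h4, mul_assoc]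
        · rw [artin_ne h (by omega) (by omega), freeHom_x (by omega)]
          exact (X_comm_lt (by omega)).symm
    exact DFunLike.congr_fun this f
  | hm a b ha hb => rw [map_mul, MulAut.mul_apply, ha, hb, map_mul]; group
  | hi a ha =>
    have := ha (artin k a⁻¹ f)
    rw [← MulAut.mul_apply, ← map_mul, mul_inv_cancel, map_one, MulAut.one_apply] at this
    rw [this, map_inv (up k)]
    simp only [mul_assoc, inv_mul_cancel, inv_mul_cancel_left, mul_one, inv_inv]

/-- The homomorphism from the semidirect product to the braid group with one more strand. -/
def iota (k : ℕ) : S k →* Br (k + 1) :=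
  SemidirectProduct.lift (freeHom k) (up k) (fun b => MonoidHom.ext fun f => by
    simp [freeHom_artin])

theorem iota_inl {k : ℕ} (f : F k) : iota k (SemidirectProduct.inl f) = freeHom k f := by
  simp [iota]

theorem iota_inr {k : ℕ} (b : Br k) : iota k (SemidirectProduct.inr b) = up k b := by
  simp [iota]

theorem iota_eq {k : ℕ} (g : S k) : iota k g = freeHom k g.left * up k g.right := by
  conv_lhs => rw [← SemidirectProduct.inl_left_mul_inr_right g]
  rw [map_mul, iota_inl, iota_inr]

/-- The cocycle in `T_j σ_i = H_i(j) T_{σ_i j}`. -/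
def H (k i j : ℕ) : S k :=
  if k + 1 < j then 1 else if j < i then sS k (i - 1) else if j = i then xS k i else
  if j = i + 1 then 1 else sS k i

theorem iota_H {k i j : ℕ} (hi : i ≤ k) (hj : j ≤ k + 1) :
    T k j * s (k + 1) i = iota k (H k i j) * T k (swap i (i + 1) j) := by
  unfold H
  rw [if_neg (by omega)]
  split_ifs with h1 h2 h3
  · rw [swap_apply_of_ne_of_ne (by omega) (by omega), iota_inr, up_s (by omega)]
    have := T_shift (k := k) (j := j) (i := i - 1) (by omega) (by omega)
    rwa [show i - 1 + 1 = i by omega] at this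
  · subst h2
    rw [swap_apply_left, iota_inl, freeHom_x hi, X]
    group
  · subst h3
    rw [swap_apply_right, map_one, one_mul, T_succ hi]
  · rw [swap_apply_of_ne_of_ne (by omega) (by omega), iota_inr, up_s (by omega),
      T_comm (by omega)]

/-- The permutation of `ℕ × S k` by which `σ_i` acts on (a model of) the cosets of the
stabiliser of the last strand. -/
def cosGen (k i : ℕ) : Perm (ℕ × S k) where
  toFun p := (swap i (i + 1) p.1, H k i (swap i (i + 1) p.1) * p.2)
  invFun p := (swap i (i + 1) p.1, (H k i p.1)⁻¹ * p.2)
  left_inv p := by simp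
  right_inv p := by simp

theorem cosGen_apply (k i j : ℕ) (g : S k) :
    cosGen k i (j, g) = (swap i (i + 1) j, H k i (swap i (i + 1) j) * g) := rfl

theorem cos_lt {k i j : ℕ} (g : S k) (h : j < i) (hi : i ≤ k) :
    cosGen k i (j, g) = (j, sS k (i - 1) * g) := by
  rw [cosGen_apply, swap_apply_of_ne_of_ne (by omega) (by omega), H, if_neg (by omega), if_pos h]

theorem cos_left {k i : ℕ} (g : S k) :
    cosGen k i (i, g) = (i + 1, g) := by
  rw [cosGen_apply, swap_apply_left, H]
  split_ifs <;> first | omega | simp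

theorem cos_right {k i : ℕ} (g : S k) (hi : i ≤ k) :
    cosGen k i (i + 1, g) = (i, xS k i * g) := by
  rw [cosGen_apply, swap_apply_right, H, if_neg (by omega), if_neg (by omega), if_pos rfl]

theorem cos_gt {k i j : ℕ} (g : S k) (h : i + 1 < j) (hj : j ≤ k + 1) :
    cosGen k i (j, g) = (j, sS k i * g) := by
  rw [cosGen_apply, swap_apply_of_ne_of_ne (by omega) (by omega), H, if_neg (by omega),
    if_neg (by omega), if_neg (by omega), if_neg (by omega)]

theorem cos_out {k i j : ℕ} (g : S k) (hi : i ≤ k) (hj : k + 1 < j) :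
    cosGen k i (j, g) = (j, g) := by
  rw [cosGen_apply, swap_apply_of_ne_of_ne (by omega) (by omega), H, if_pos (by omega), one_mul]

theorem cos_comm {k i j : ℕ} (h : i + 1 < j) (hj : j ≤ k) :
    cosGen k i * cosGen k j = cosGen k j * cosGen k i := by
  refine Equiv.ext fun ⟨t, g⟩ => ?_
  simp only [Perm.mul_apply]
  obtain h1 | h1 | h1 | h1 | h1 | h1 | h1 | h1 : t < i ∨ t = i ∨ t = i + 1 ∨ (i + 1 < t ∧ t < j) ∨
    t = j ∨ t = j + 1 ∨ (j + 1 < t ∧ t ≤ k + 1) ∨ (k + 1 < t) := by omega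
  · have e1 := fun g : S k => cos_lt g h1 (by omega : i ≤ k)
    have e2 := fun g : S k => cos_lt g (by omega : t < j) hj
    simp only [e1, e2, ← mul_assoc]
    rw [sS_comm (by omega)]
  · subst h1
    have e2 := fun g : S k => cos_lt g (by omega : t < j) hj
    have e3 := fun g : S k => cos_lt g (by omega : t + 1 < j) hj
    simp only [e2, e3, cos_left]
  · subst h1
    have e1 := fun g : S k => cos_right (i := i) g (by omega)
    have e2 := fun g : S k => cos_lt g (by omega : i + 1 < j) hj
    have e3 := fun g : S k => cos_lt g (by omega : i < j) hj
    simp only [e1, e2, e3, ← mul_assoc]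
    rw [sS_xS_ne (by omega) (by omega) (by omega)]
  · have e1 := fun g : S k => cos_gt g h1.1 (by omega : t ≤ k + 1)
    have e2 := fun g : S k => cos_lt g h1.2 hj
    simp only [e1, e2, ← mul_assoc]
    rw [sS_comm (by omega)]
  · subst h1
    have e1 := fun g : S k => cos_gt g h (by omega : t ≤ k + 1)
    have e2 := fun g : S k => cos_gt g (by omega : i + 1 < t + 1) (by omega : t + 1 ≤ k + 1)
    simp only [e1, e2, cos_left]
  · subst h1
    have e1 := fun g : S k => cos_gt g h (by omega : j ≤ k + 1)
    have e2 := fun g : S k => cos_gt g (by omega : i + 1 < j + 1) (by omega : j + 1 ≤ k + 1)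
    have e3 := fun g : S k => cos_right (i := j) g (by omega)
    simp only [e1, e2, e3, ← mul_assoc]
    rw [sS_xS_ne (by omega) (by omega) (by omega)]
  · have e1 := fun g : S k => cos_gt g (by omega : i + 1 < t) h1.2
    have e2 := fun g : S k => cos_gt g h1.1 h1.2
    simp only [e1, e2, ← mul_assoc]
    rw [sS_comm (by omega)]
  · have e1 := fun g : S k => cos_out g (by omega : i ≤ k) h1
    have e2 := fun g : S k => cos_out g hj h1
    simp only [e1, e2]

theorem cos_braid {k i : ℕ} (h : i + 1 ≤ k) :
    cosGen k i * cosGen k (i + 1) * cosGen k i =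
      cosGen k (i + 1) * cosGen k i * cosGen k (i + 1) := by
  refine Equiv.ext fun ⟨t, g⟩ => ?_
  simp only [Perm.mul_apply]
  obtain h1 | h1 | h1 | h1 | h1 | h1 : t < i ∨ t = i ∨ t = i + 1 ∨ t = i + 1 + 1 ∨
    (i + 1 + 1 < t ∧ t ≤ k + 1) ∨ (k + 1 < t) := by omega
  · obtain ⟨i, rfl⟩ : ∃ m, i = m + 1 := ⟨i - 1, by omega⟩
    have e1 := fun g : S k => cos_lt g (by omega : t < i + 1) (by omega : i + 1 ≤ k)
    have e2 := fun g : S k => cos_lt g (by omega : t < i + 1 + 1) (by omega : i + 1 + 1 ≤ k)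
    have := sS_braid (k := k) (i := i) (by omega)
    simp only [e1, e2, Nat.add_sub_cancel, ← mul_assoc] at *
    rw [this]
  · subst h1
    have e2 := fun g : S k => cos_lt g (by omega : t < t + 1) (by omega : t + 1 ≤ k)
    have e3 := fun g : S k => cos_gt g (by omega : t + 1 < t + 1 + 1) (by omega : t + 1 + 1 ≤ k + 1)
    simp only [cos_left, e2, e3, Nat.add_sub_cancel]
  · subst h1
    have e1 := fun g : S k => cos_right (i := i) g (by omega)
    have e2 := fun g : S k => cos_lt g (by omega : i < i + 1) (by omega : i + 1 ≤ k)
    have e3 := fun g : S k => cos_gt g (by omega : i + 1 < i + 1 + 1) (by omega : i + 1 + 1 ≤ k + 1)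
    have e4 := fun g : S k => cos_right (i := i + 1) g (by omega)
    simp only [cos_left, e1, e2, e3, e4, Nat.add_sub_cancel, ← mul_assoc]
    rw [sS_xS_left (by omega)]
  · subst h1
    have e1 := fun g : S k => cos_right (i := i) g (by omega)
    have e2 := fun g : S k => cos_lt g (by omega : i < i + 1) (by omega : i + 1 ≤ k)
    have e3 := fun g : S k => cos_gt g (by omega : i + 1 < i + 1 + 1) (by omega : i + 1 + 1 ≤ k + 1)
    have e4 := fun g : S k => cos_right (i := i + 1) g (by omega)
    have := sS_xS_right (k := k) (i := i) (by omega)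
    simp only [e1, e2, e3, e4, Nat.add_sub_cancel, ← mul_assoc] at *
    rw [← this]
  · have e1 := fun g : S k => cos_gt g (by omega : i + 1 < t) h1.2
    have e2 := fun g : S k => cos_gt g h1.1 h1.2
    have := sS_braid (k := k) (i := i) (by omega)
    simp only [e1, e2, ← mul_assoc] at *
    rw [this]
  · have e1 := fun g : S k => cos_out g (by omega : i ≤ k) h1
    have e2 := fun g : S k => cos_out g h h1
    simp only [e1, e2]

/-- The action of `Br (k + 1)` on the model of the cosets. -/
def cosAct (k : ℕ) : Br (k + 1) →* Perm (ℕ × S k) :=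
  lift (k + 1) (cosGen k) (fun _ _ h hj => cos_comm h (by omega)) (fun _ h => cos_braid (by omega))

theorem cosAct_s {k i : ℕ} (h : i ≤ k) : cosAct k (s (k + 1) i) = cosGen k i :=
  lift_s (by omega)

/-- The action commutes with right multiplication. -/
theorem cosAct_right {k : ℕ} (b : Br (k + 1)) (j : ℕ) (g g' : S k) :
    cosAct k b (j, g * g') = ((cosAct k b (j, g)).1, (cosAct k b (j, g)).2 * g') := by
  induction b using ind generalizing j g g' with
  | h1 => simp
  | hs i h => rw [cosAct_s (by omega), cosGen_apply, cosGen_apply, mul_assoc]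
  | hm a b ha hb => rw [map_mul, Perm.mul_apply, Perm.mul_apply, hb, ha]
  | hi a ha =>
    rw [map_inv, Perm.inv_eq_iff_eq, ha]
    simp

theorem cosAct_T {k j : ℕ} (hj : j ≤ k + 1) : cosAct k (T k j) (j, 1) = (k + 1, 1) := by
  obtain ⟨d, hd⟩ := Nat.exists_eq_add_of_le hj
  induction d generalizing j with
  | zero => rw [show j = k + 1 by omega, T_last]; simp
  | succ d ih =>
    rw [T_succ (by omega), map_mul, Perm.mul_apply, cosAct_s (by omega), cos_left,
      ih (by omega) (by omega)]

theorem cosAct_T' {k j : ℕ} (hj : j ≤ k + 1) (g : S k) :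
    cosAct k (T k j) (j, g) = (k + 1, g) := by
  have := cosAct_right (T k j) j 1 g
  simpa [cosAct_T hj] using this

theorem cosAct_iota {k : ℕ} (h : S k) : cosAct k (iota k h) (k + 1, 1) = (k + 1, h) := by
  suffices H : (∀ f : F k, ∀ g, cosAct k (freeHom k f) (k + 1, g) =
      (k + 1, SemidirectProduct.inl f * g)) ∧ (∀ b : Br k, ∀ g, cosAct k (up k b) (k + 1, g) =
      (k + 1, SemidirectProduct.inr b * g)) by
    rw [iota_eq, map_mul, Perm.mul_apply, H.2, H.1, mul_one]
    rw [SemidirectProduct.inl_left_mul_inr_right]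
  constructor
  · intro f
    induction f using FreeGroup.induction_on with
    | C1 => simp
    | of j =>
      intro g
      have hj := j.2
      rw [of_eq_x, freeHom_x (by omega), X]
      generalize (j : ℕ) = j at *
      have : (cosAct k (T k (j + 1)))⁻¹ (k + 1, g) = (j + 1, g) := by
        rw [Perm.inv_eq_iff_eq, cosAct_T' (by omega)]
      rw [map_mul, map_mul, map_inv, Perm.mul_apply, Perm.mul_apply, this, cosAct_s (by omega),
        cos_right _ (by omega), cosAct_T' (by omega)]
    | inv_of j ih =>
      intro g
      rw [map_inv, map_inv, Perm.inv_eq_iff_eq, ih]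
      simp
    | mul a b ha hb =>
      intro g
      rw [map_mul, map_mul, Perm.mul_apply, hb, ha, map_mul, mul_assoc]
  · intro b
    induction b using ind with
    | h1 => simp
    | hs i h => intro g; rw [up_s h, cosAct_s (by omega), cos_gt _ (by omega) (by omega)]
    | hm a b ha hb =>
      intro g
      rw [map_mul, map_mul, Perm.mul_apply, hb, ha, map_mul, mul_assoc]
    | hi a ih =>
      intro g
      rw [map_inv, map_inv, Perm.inv_eq_iff_eq, ih]
      simp

theorem iota_injective (k : ℕ) : Function.Injective (iota k) := by
  intro a b h
  have h1 := cosAct_iota a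
  rw [h, cosAct_iota b] at h1
  exact (Prod.mk.inj h1).2.symm

/-- Every braid moves the last strand by some `T_j⁻¹` and then lies in the stabiliser. -/
theorem exists_T {k : ℕ} (b : Br (k + 1)) :
    ∀ j ≤ k + 1, ∃ j' ≤ k + 1, ∃ h : S k, T k j * b = iota k h * T k j' := by
  induction b using ind_left with
  | h1 => exact fun j hj => ⟨j, hj, 1, by simp⟩
  | hs i hi b ih =>
    intro j hj
    obtain ⟨j', hj', h, e⟩ := ih (swap i (i + 1) j) (by rw [swap_apply_def]; split_ifs <;> omega)
    refine ⟨j', hj', H k i j * h, ?_⟩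
    rw [← mul_assoc, iota_H (by omega) hj, mul_assoc, e, map_mul, mul_assoc]
  | hs' i hi b ih =>
    intro j hj
    have hj2 : swap i (i + 1) j ≤ k + 1 := by rw [swap_apply_def]; split_ifs <;> omega
    obtain ⟨j', hj', h, e⟩ := ih (swap i (i + 1) j) hj2
    have e2 := iota_H (k := k) (i := i) (by omega) hj2
    rw [← Perm.mul_apply, swap_mul_self, Perm.one_apply] at e2
    refine ⟨j', hj', (H k i (swap i (i + 1) j))⁻¹ * h, ?_⟩
    rw [map_mul, mul_assoc, ← e, map_inv, ← mul_assoc, ← mul_assoc]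
    congr 1
    rw [eq_inv_mul_iff_mul_eq, ← mul_assoc, ← e2]
    group

theorem perm_T {k j : ℕ} (hj : j ≤ k + 1) : perm (k + 1) (T k j) j = k + 1 := by
  obtain ⟨d, hd⟩ := Nat.exists_eq_add_of_le hj
  induction d generalizing j with
  | zero => rw [show j = k + 1 by omega, T_last]; simp
  | succ d ih =>
    rw [T_succ (by omega), map_mul, Perm.mul_apply, perm_s (by omega), swap_apply_left,
      ih (by omega) (by omega)]

theorem perm_up {k : ℕ} (b : Br k) : perm (k + 1) (up k b) = perm k b := by
  have : (perm (k + 1)).comp (up k) = perm k := hom_ext fun i h => by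
    rw [MonoidHom.comp_apply, up_s h, perm_s h, perm_s (by omega)]
  exact DFunLike.congr_fun this b

theorem cr_up {k : ℕ} (g : Br k) : cr (up k g) = cr g := by
  funext a b
  induction g using ind generalizing a b with
  | h1 => simp [cr_one]
  | hs i h => rw [up_s h, cr_s h, cr_s (by omega)]
  | hm g h ihg ihh => rw [map_mul, cr_mul, cr_mul, ihg, ihh, perm_up]
  | hi g ih => rw [map_inv, cr_inv, cr_inv, ih, perm_up]

theorem X_eq {k j : ℕ} (h : j ≤ k) :
    X k j = T k (j + 1) * (s (k + 1) j * s (k + 1) j) * (T k (j + 1))⁻¹ := by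
  rw [X, T_succ h]; group

theorem X_pure {k j : ℕ} (h : j ≤ k) : X k j ∈ Pure (k + 1) := by
  rw [X_eq h]
  exact Subgroup.Normal.conj_mem inferInstance _ (s_sq_pure (by omega)) _

theorem perm_T_lt {k i j : ℕ} (h : i < j) : perm (k + 1) (T k j) i = i := by
  rcases Nat.lt_or_ge (k + 1) j with h1 | h1
  · simp [T, show k + 1 - j = 0 by omega, tw]
  obtain ⟨d, hd⟩ := Nat.exists_eq_add_of_le h1
  induction d generalizing j with
  | zero => rw [show j = k + 1 by omega, T_last]; simp
  | succ d ih =>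
    rw [T_succ (by omega), map_mul, Perm.mul_apply, perm_s (by omega),
      swap_apply_of_ne_of_ne (by omega) (by omega), ih (by omega) (by omega) (by omega)]

theorem cr_X {k j : ℕ} (h : j ≤ k) (a b : ℕ) : cr (X k j) a b = 2 * E j (k + 1) a b := by
  rw [X_eq h, cr_conj _ (s_sq_pure (by omega)), cr_s_sq (by omega)]
  simp only []
  rw [E_perm, perm_T (by omega),
    perm_T_lt (by omega)]

theorem freeHom_pure {k : ℕ} (f : F k) : freeHom k f ∈ Pure (k + 1) := by
  have : (freeHom k).range ≤ Pure (k + 1) := by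
    rw [freeHom, FreeGroup.range_lift_eq_closure, Subgroup.closure_le]
    rintro _ ⟨j, rfl⟩
    exact X_pure (by omega)
  exact this ⟨f, rfl⟩

theorem perm_iota {k : ℕ} (g : S k) : perm (k + 1) (iota k g) = perm k g.right := by
  rw [iota_eq, map_mul, mem_Pure.1 (freeHom_pure _), one_mul, perm_up]

theorem cr_iota {k : ℕ} (g : S k) : cr (iota k g) = cr (freeHom k g.left) + cr g.right := by
  rw [iota_eq, cr_mul_pure (freeHom_pure _), cr_up]

/-- The image of `iota` is the stabiliser of the last strand. -/
theorem exists_iota {k : ℕ} {b : Br (k + 1)} (hb : perm (k + 1) b (k + 1) = k + 1) :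
    ∃ g, iota k g = b := by
  obtain ⟨j, hj, h, e⟩ := exists_T b⁻¹ (k + 1) le_rfl
  rw [T_last, one_mul] at e
  have h1 : perm (k + 1) b⁻¹ (k + 1) = k + 1 := by rw [map_inv, Perm.inv_eq_iff_eq, hb]
  have h2 : j = k + 1 := by
    have h3 := congrArg (fun e => perm (k + 1) e (k + 1)) e
    simp only [map_mul, Perm.mul_apply] at h3
    rw [h1, perm_iota] at h3
    have h4 : perm (k + 1) (T k j) (k + 1) = k + 1 := by
      apply (perm k h.right).injective
      rw [← h3, perm_fix _ (by omega)]
    exact ((perm (k + 1) (T k j)).injective (h4.trans (perm_T hj).symm)).symm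
  rw [h2, T_last, mul_one] at e
  exact ⟨h⁻¹, by rw [map_inv, ← e, inv_inv]⟩

theorem iota_last {k : ℕ} (g : S k) : perm (k + 1) (iota k g) (k + 1) = k + 1 := by
  rw [perm_iota, perm_fix _ (by omega)]

theorem iota_pure {k : ℕ} (g : S k) : iota k g ∈ Pure (k + 1) ↔ g.right ∈ Pure k := by
  rw [mem_Pure, perm_iota, mem_Pure]

theorem exists_iota_pure {k : ℕ} {b : Br (k + 1)} (hb : b ∈ Pure (k + 1)) :
    ∃ g, iota k g = b ∧ g.right ∈ Pure k := by
  obtain ⟨g, rfl⟩ := exists_iota (b := b) (by rw [mem_Pure.1 hb]; rfl)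
  exact ⟨g, rfl, (iota_pure g).1 hb⟩

end DG

namespace DG

/-! ### Free groups -/

namespace Free
open FreeGroup hiding map_mul map_one map_inv

variable {α : Type*}

/-- The inverse of a signed letter. -/
def bar (l : α × Bool) : α × Bool := (l.1, !l.2)

theorem bar_bar (l : α × Bool) : bar (bar l) = l := by simp [bar]

theorem bar_ne (l : α × Bool) : bar l ≠ l := by
  intro h
  have := congrArg Prod.snd h
  simp [bar] at this

theorem rel_iff {a b : α × Bool} : (a.1 = b.1 → a.2 = b.2) ↔ b ≠ bar a := by
  obtain ⟨a1, a2⟩ := a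
  obtain ⟨b1, b2⟩ := b
  cases a2 <;> cases b2 <;> simp [bar, eq_comm]

theorem isReduced_append {A B : List (α × Bool)} : IsReduced (A ++ B) ↔
    IsReduced A ∧ IsReduced B ∧ ∀ a ∈ A.getLast?, ∀ b ∈ B.head?, b ≠ bar a := by
  unfold FreeGroup.IsReduced
  rw [List.isChain_append]
  simp only [rel_iff]

theorem mk_append (A B : List (α × Bool)) : mk (A ++ B) = mk A * mk B := mul_mk.symm

theorem isReduced_glue {A R B : List (α × Bool)} (hR : R ≠ []) (h1 : IsReduced (A ++ R))
    (h2 : IsReduced (R ++ B)) : IsReduced (A ++ R ++ B) := by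
  rw [isReduced_append] at h1 h2 ⊢
  refine ⟨isReduced_append.2 h1, h2.2.1, ?_⟩
  rw [List.getLast?_append_of_ne_nil _ hR]
  exact h2.2.2

theorem invRev_single (l : α × Bool) : invRev [l] = [bar l] := by simp [invRev, bar]

theorem mk_pow_letter (l : α × Bool) (N : ℕ) : mk [l] ^ N = mk (List.replicate N l) := by
  induction N with
  | zero => rfl
  | succ n ih => rw [pow_succ', ih, List.replicate_succ, mul_mk]; rfl

/-- Splitting off the maximal cancellation in a product of two reduced words. -/
theorem max_cancel (R P : List (α × Bool)) (hR : IsReduced R) (hP : IsReduced P) :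
    ∃ R' t B, R = R' ++ t ∧ P = invRev t ++ B ∧ IsReduced (R' ++ B) := by
  induction P generalizing R with
  | nil => exact ⟨R, [], [], by simp, by simp, by simpa⟩
  | cons p P ih =>
    by_cases h : R.getLast? = some (bar p)
    · obtain ⟨R₀, rfl⟩ := List.getLast?_eq_some_iff.1 h
      obtain ⟨R', t, B, h1, h2, h3⟩ := ih R₀ (isReduced_append.1 hR).1
        (isReduced_append (A := [p]).1 hP).2.1
      refine ⟨R', t ++ [bar p], B, by rw [h1, List.append_assoc], ?_, h3⟩
      rw [invRev_append, invRev_single, bar_bar, h2]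
      simp
    · refine ⟨R, [], p :: P, by simp, by simp, isReduced_append.2 ⟨hR, hP, ?_⟩⟩
      intro a ha b hb hba
      simp only [List.head?_cons, Option.mem_def, Option.some.injEq] at hb
      subst hb
      rw [hba, bar_bar] at h
      exact h ha

variable [DecidableEq α]

theorem toWord_mk_of {L : List (α × Bool)} (h : IsReduced L) : (mk L).toWord = L := by
  rw [toWord_mk, h.reduce_eq]

theorem eq_mk {g : FreeGroup α} {L : List (α × Bool)} (h : g.toWord = L) : g = mk L := by
  rw [← h, mk_toWord]

/-- Right multiplication by a letter either appends it or deletes the last letter. -/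
theorem toWord_mul_letter (g : FreeGroup α) (l : α × Bool) :
    (g * mk [l]).toWord = g.toWord ++ [l] ∨ (g * mk [l]).toWord <+: g.toWord := by
  obtain ⟨R', t, B, h1, h2, h3⟩ := max_cancel g.toWord [l] isReduced_toWord (by simp)
  have e : (g * mk [l]).toWord = R' ++ B := by
    rw [← toWord_mk_of h3]
    congr 1
    conv_lhs => rw [eq_mk h1, h2, mk_append, mk_append, ← inv_mk]
    rw [mk_append]
    group
  cases t with
  | nil =>
    left
    simp only [invRev_empty, List.nil_append, List.append_nil] at h1 h2
    rw [e, ← h2, h1]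
  | cons a t =>
    right
    have hB : B = [] := by
      have := congrArg List.length h2
      simp only [List.length_append, invRev_length, List.length_cons, List.length_nil] at this
      exact List.length_eq_zero_iff.1 (by omega)
    rw [e, hB, List.append_nil, h1]
    exact List.prefix_append _ _

/-- A letter that cancels neither at the start of `h` nor, inverted, at its end. -/
theorem exists_letter [Nontrivial α] {h : FreeGroup α} (hh : h ≠ 1) : ∃ l : α × Bool, ∀ N : ℕ,
    (mk [l] ^ N * h * (mk [l] ^ N)⁻¹).toWord =
      List.replicate N l ++ h.toWord ++ List.replicate N (bar l) := by
  have hw : h.toWord ≠ [] := fun e => hh (toWord_eq_nil_iff.1 e)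
  obtain ⟨a, ha⟩ : ∃ a, h.toWord.head? = some a := by
    cases e : h.toWord with
    | nil => exact absurd e hw
    | cons a _ => exact ⟨a, rfl⟩
  obtain ⟨z, hz⟩ : ∃ z, h.toWord.getLast? = some z :=
    ⟨_, List.getLast?_eq_some_getLast hw⟩
  obtain ⟨l, h1, h2⟩ : ∃ l : α × Bool, a ≠ bar l ∧ bar l ≠ bar z := by
    obtain ⟨j, hj⟩ := exists_ne a.1
    by_cases hjz : (j, true) = z
    · refine ⟨(j, false), ?_, ?_⟩
      · rintro rfl; simp [bar] at hj
      · rw [← hjz]; simp [bar]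
    · refine ⟨(j, true), ?_, ?_⟩
      · rintro rfl; simp [bar] at hj
      · intro e
        exact hjz (by rw [← bar_bar (j, true), e, bar_bar])
  refine ⟨l, fun N => ?_⟩
  have hbar : (mk [l])⁻¹ = mk [bar l] := by rw [inv_mk, invRev_single]
  have hred : ∀ (l : α × Bool), IsReduced (List.replicate N l) := by
    intro l
    rw [isReduced_iff_reduce_eq]
    exact reduce_replicate N l
  have : IsReduced (List.replicate N l ++ h.toWord ++ List.replicate N (bar l)) := by
    rw [isReduced_append, isReduced_append]
    refine ⟨⟨hred _, isReduced_toWord, ?_⟩, hred _, ?_⟩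
    · intro b hb c hc
      have hb := List.mem_of_getLast? hb
      rw [List.eq_of_mem_replicate hb]
      rw [ha, Option.mem_def, Option.some.injEq] at hc
      rw [← hc]
      exact h1
    · intro b hb c hc
      rw [List.getLast?_append_of_ne_nil _ hw, hz, Option.mem_def, Option.some.injEq] at hb
      have hc := List.mem_of_mem_head? hc
      rw [List.eq_of_mem_replicate hc, ← hb]
      exact h2
  rw [← toWord_mk_of this, mk_append, mk_append, mk_toWord, ← inv_pow, hbar, mk_pow_letter, mk_pow_letter]

theorem center_trivial [Nontrivial α] {z : FreeGroup α} (hz : ∀ g, g * z = z * g) : z = 1 := by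
  by_contra h
  obtain ⟨l, hl⟩ := exists_letter h
  have := hl 1
  rw [hz, mul_inv_cancel_right] at this
  have := congrArg List.length this
  simp at this
  omega

/-- The exponent sum of a signed letter. -/
def chi (l : α × Bool) : FreeGroup α →* Multiplicative ℤ :=
  FreeGroup.lift fun j => if j = l.1 then Multiplicative.ofAdd (if l.2 then 1 else -1) else 1

theorem chi_self (l : α × Bool) : (chi l (mk [l])).toAdd = 1 := by
  obtain ⟨a, b⟩ := l
  cases b <;> simp [chi]

theorem chi_le_one (l l' : α × Bool) : (chi l (mk [l'])).toAdd ≤ 1 := by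
  obtain ⟨a, b⟩ := l
  obtain ⟨c, d⟩ := l'
  by_cases h : c = a <;> cases b <;> cases d <;> simp [chi, h]

theorem chi_le_length (l : α × Bool) (w : List (α × Bool)) :
    (chi l (mk w)).toAdd ≤ w.length := by
  induction w with
  | nil => simp [← one_eq_mk]
  | cons a w ih =>
    rw [show a :: w = [a] ++ w from rfl, mk_append, map_mul, toAdd_mul]
    have := chi_le_one l a
    simp
    omega

theorem pref_bound (l : α × Bool) (K : ℕ) (g : FreeGroup α) (hg : chi l g = 1)
    (h : ¬ List.replicate (K + 1) l <+: g.toWord) (w : List (α × Bool)) (hw : w.length ≤ K) :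
    ¬ List.replicate (K + 1) l <+: (g * mk w).toWord := by
  induction w using List.reverseRecOn with
  | nil => simpa [← one_eq_mk] using h
  | append_singleton w a ih =>
    have ih := ih (by simp at hw; omega)
    rw [mk_append, ← mul_assoc]
    rcases toWord_mul_letter (g * mk w) a with e | e
    · intro hp
      rw [e, List.prefix_concat_iff] at hp
      rcases hp with hp | hp
      · have h1 : g * mk w * mk [a] = mk (List.replicate (K + 1) l) := by
          rw [hp, ← e, mk_toWord]
        have h2 := congrArg (fun z => (chi l z).toAdd) h1
        rw [mul_assoc, ← mk_append, ← mk_pow_letter] at h2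
        simp only [map_mul, hg, one_mul, map_pow, toAdd_pow, chi_self] at h2
        have h4 := chi_le_length l (w ++ [a])
        rw [h2] at h4
        simp at h4 hw
        omega
      · exact ih hp
    · exact fun hp => ih (hp.trans e)

/-- A finitely generated normal subgroup of a nonabelian free group on which all exponent sums
vanish is trivial: the words of its elements begin with a bounded power of each letter, but
conjugating by powers of a suitable letter produces unbounded ones. -/
theorem fg_normal_trivial [Nontrivial α] (M : Subgroup (FreeGroup α)) (hfg : M.FG)
    (hn : ∀ m ∈ M, ∀ g, g * m * g⁻¹ ∈ M) (hchi : ∀ m ∈ M, ∀ l, chi l m = 1) : M = ⊥ := by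
  rw [Subgroup.eq_bot_iff_forall]
  intro h hh
  by_contra h1
  obtain ⟨l, hl⟩ := exists_letter h1
  obtain ⟨G, hG⟩ := hfg
  obtain ⟨K, hK⟩ : ∃ K, ∀ g ∈ G, g.norm ≤ K :=
    ⟨G.sup FreeGroup.norm, fun g hg => Finset.le_sup hg⟩
  have key : ∀ m ∈ M, ¬ List.replicate (K + 1) l <+: m.toWord := by
    intro m hm
    rw [← hG] at hm
    have hGM : ∀ m ∈ Subgroup.closure (G : Set (FreeGroup α)), chi l m = 1 := by
      rw [hG]; exact fun m hm => hchi m hm l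
    induction hm using Subgroup.closure_induction_right with
    | one => simp
    | mul_right x hx y hy ih =>
      have := pref_bound l K x (hGM _ hx) ih y.toWord (hK y hy)
      rwa [mk_toWord] at this
    | mul_inv_cancel x hx y hy ih =>
      have := pref_bound l K x (hGM _ hx) ih y⁻¹.toWord (by
        have := hK y hy
        rwa [← norm_inv_eq] at this)
      rwa [mk_toWord] at this
  refine key _ (hn h hh (mk [l] ^ (K + 1))) ?_
  rw [hl, List.append_assoc]
  exact List.prefix_append _ _

theorem mem_commutator [Fintype α] (g : FreeGroup α) (h : ∀ j, chi (j, true) g = 1) :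
    g ∈ commutator (FreeGroup α) := by
  let p : FreeGroup α →* Abelianization (FreeGroup α) :=
    ∏ j : α, (zpowersHom _ (Abelianization.of (FreeGroup.of j))).comp (chi (j, true))
  have hp : p = Abelianization.of := by
    refine FreeGroup.ext_hom _ _ fun a => ?_
    simp only [p, MonoidHom.finsetProd_apply, MonoidHom.comp_apply]
    rw [Finset.prod_eq_single a]
    · simp [chi]
    · intro b _ hb
      simp [chi, hb.symm]
    · simp
  have : p g = 1 := by
    simp [p, MonoidHom.finsetProd_apply, h]
  rw [hp] at this
  rw [← Abelianization.ker_of]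
  exact this

end Free

end DG

namespace DG

/-! ### Cyclic actions on free groups -/

namespace Free
open FreeGroup hiding map_mul map_one map_inv

variable {α : Type*}

theorem isReduced_map (c : α → α) (hc : Function.Injective c) {w : List (α × Bool)}
    (hw : IsReduced w) : IsReduced (w.map fun p => (c p.1, p.2)) := by
  unfold FreeGroup.IsReduced at *
  rw [List.isChain_map]
  exact hw.imp fun a b h e => h (hc e)

/-- The twisted norm `f · D f ⋯ D^{j-1} f`. -/
def tnorm (D : FreeGroup α →* FreeGroup α) (f : FreeGroup α) : ℕ → FreeGroup α
  | 0 => 1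
  | j + 1 => f * D (tnorm D f j)

theorem tnorm_conj (D : FreeGroup α →* FreeGroup α) (f a : FreeGroup α) (j : ℕ) :
    tnorm D (a⁻¹ * f * D a) j = a⁻¹ * tnorm D f j * (D^[j] a) := by
  induction j with
  | zero => simp [tnorm]
  | succ j ih =>
    rw [tnorm, ih, tnorm, Function.iterate_succ_apply', map_mul, map_mul, map_inv]
    group

/-- The letters of `invRev`. -/
theorem getElem_invRev (w : List (α × Bool)) (i : ℕ) (hi : i < w.length) :
    (invRev w)[i]'(by simpa) = bar (w[w.length - 1 - i]'(by omega)) := by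
  unfold invRev
  rw [List.getElem_reverse]
  simp [bar]

section pieces
variable [AddGroup α]

/-- Translation of the letters of a word. -/
def sh (a : α) (w : List (α × Bool)) : List (α × Bool) := w.map fun p => (p.1 + a, p.2)

/-- The image words of the signed letters under an endomorphism commuting with translations. -/
def pc (W : List (α × Bool)) (l : α × Bool) : List (α × Bool) :=
  if l.2 then sh l.1 W else invRev (sh l.1 W)

theorem pc_length (W : List (α × Bool)) (l : α × Bool) : (pc W l).length = W.length := by
  unfold pc sh
  split_ifs <;> simp

theorem pc_reduced {W : List (α × Bool)} (hW : IsReduced W) (l : α × Bool) :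
    IsReduced (pc W l) := by
  classical
  have : IsReduced (sh l.1 W) := isReduced_map _ (add_left_injective l.1) hW
  unfold pc
  split_ifs
  · exact this
  · rw [isReduced_iff_reduce_eq, reduce_invRev, this.reduce_eq]

theorem pc_sign {W : List (α × Bool)} {l l' : α × Bool} (h : l.2 = l'.2) (i : ℕ)
    (hi : i < W.length) :
    ((pc W l)[i]'(by rwa [pc_length])).2 = ((pc W l')[i]'(by rwa [pc_length])).2 := by
  by_cases h1 : l.2 = true
  · have h2 : l'.2 = true := h ▸ h1
    simp [pc, h1, h2, sh]
  · have h2 : ¬ l'.2 = true := h ▸ h1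
    have e1 : pc W l = invRev (sh l.1 W) := if_neg h1
    have e2 : pc W l' = invRev (sh l'.1 W) := if_neg h2
    simp only [e1, e2]
    rw [getElem_invRev _ _ (by simpa [sh]), getElem_invRev _ _ (by simpa [sh])]
    simp [sh, bar]

/-- Less than half of an image word cancels in the image of a reduced word: pieces of opposite
sign do not cancel at all as translations act freely, and for pieces of the same sign the middle
letter cannot cancel. -/
theorem pc_cancel {W : List (α × Bool)} (hodd : Odd W.length) {l l' : α × Bool} (hl : l' ≠ bar l)
    {A t B : List (α × Bool)} (h1 : pc W l = A ++ t) (h2 : pc W l' = invRev t ++ B) :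
    2 * t.length < W.length := by
  have e1 := congrArg List.length h1
  have e2 := congrArg List.length h2
  rw [pc_length, List.length_append] at e1 e2
  rw [invRev_length] at e2
  have hm : ∀ i, i < t.length → ∃ (h : i < W.length), (pc W l')[i]'(by rwa [pc_length]) =
      bar ((pc W l)[W.length - 1 - i]'(by rw [pc_length]; omega)) := by
    intro i hi
    refine ⟨by omega, ?_⟩
    simp only [h1, h2]
    rw [List.getElem_append_left (by simpa), getElem_invRev _ _ hi,
      List.getElem_append_right (by omega)]
    congr 2
    omega
  by_cases hs : l.2 = l'.2
  · by_contra hlt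
    obtain ⟨q, hq⟩ := hodd
    obtain ⟨h, e⟩ := hm q (by omega)
    have e := congrArg Prod.snd e
    have h3 := pc_sign (W := W) hs q h
    rw [← h3] at e
    simp only [bar, show W.length - 1 - q = q by omega] at e
    simp at e
  · have : t.length = 0 := by
      by_contra h0
      obtain ⟨h, e⟩ := hm 0 (by omega)
      have e := congrArg Prod.fst e
      apply hl
      obtain ⟨a, b⟩ := l
      obtain ⟨a', b'⟩ := l'
      have hb : b' = !b := by cases b <;> cases b' <;> simp_all
      suffices a = a' by rw [this, hb]; rfl
      cases b <;> simp only [Bool.not_false, Bool.not_true] at hb <;> subst hb <;>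
        simp only [pc, if_true, Bool.false_eq_true, if_false] at e
      · rw [show (invRev (sh a W))[W.length - 1 - 0]'(by simp [sh]; omega) =
          bar ((sh a W)[0]'(by simp [sh]; omega)) by
            rw [getElem_invRev _ _ (by simp [sh]; omega)]
            congr 2
            simp [sh]] at e
        simp [sh, bar] at e
        exact e.symm
      · rw [getElem_invRev _ _ (by simp [sh]; omega)] at e
        simp [sh, bar] at e
        exact e.symm
    have := hodd.pos
    omega

end pieces

variable [DecidableEq α]

/-- Hilbert 90 for a permutation of the letters of a free group. -/
theorem hilbert90 (c : Equiv.Perm α) (m : ℕ) (hm : 1 ≤ m) (hc : c ^ m = 1) (f : FreeGroup α)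
    (hf : tnorm (FreeGroup.map c) f m = 1) : ∃ g, f = g * (FreeGroup.map c g)⁻¹ := by
  have hD : ∀ g : FreeGroup α, (FreeGroup.map c)^[m] g = g := by
    have : ∀ j (g : FreeGroup α), (FreeGroup.map c)^[j] g = FreeGroup.map (c ^ j : Equiv.Perm α) g := by
      intro j
      induction j with
      | zero => intro g; simp
      | succ j ih =>
        intro g
        rw [Function.iterate_succ_apply', ih, FreeGroup.map.comp, pow_succ']
        rfl
    intro g
    rw [this, hc]
    simp
  induction hL : f.norm using Nat.strong_induction_on generalizing f with
  | _ L ih =>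
  by_cases h1 : f = 1
  · exact ⟨1, by simp [h1]⟩
  set w := f.toWord with hw
  have hwne : w ≠ [] := fun e => h1 (toWord_eq_nil_iff.1 e)
  obtain ⟨a, w', hw'⟩ : ∃ a w', w = a :: w' := List.exists_cons_of_ne_nil hwne
  set a' : α × Bool := (c a.1, a.2) with ha'
  by_cases hcan : w.getLast? = some (bar a')
  · -- the end of the word of `f` cancels against the start of the word of `D f`
    obtain ⟨v, hv⟩ := List.getLast?_eq_some_iff.1 hcan
    cases v with
    | nil =>
      exfalso
      rw [hw'] at hv
      simp only [List.nil_append, List.cons.injEq] at hv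
      have := congrArg Prod.snd hv.1
      simp [ha', bar] at this
    | cons b v =>
      have hab : b = a := by
        rw [hw'] at hv
        simp only [List.cons_append, List.cons.injEq] at hv
        exact hv.1.symm
      subst hab
      have hfe : f = mk [b] * mk v * (FreeGroup.map c (mk [b]))⁻¹ := by
        rw [eq_mk hw.symm, hv, FreeGroup.map.mk, inv_mk, List.map_singleton, invRev_single,
          ← mk_append, ← mk_append]
        rfl
      have hve : mk v = (mk [b])⁻¹ * f * FreeGroup.map c (mk [b]) := by rw [hfe]; group
      have hlen : (mk v).norm < L := by
        have := norm_mk_le (L₁ := v)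
        have h2 : f.norm = (b :: v ++ [bar a']).length := by rw [← hv]; rfl
        simp only [List.length_append, List.length_cons] at h2
        omega
      obtain ⟨g, hg⟩ := ih _ hlen (mk v) (by rw [hve, tnorm_conj, hf, hD]; group) rfl
      exact ⟨mk [b] * g, by rw [hfe, hg, map_mul]; group⟩
  · -- no cancellation: the twisted norm is a nonempty reduced word
    exfalso
    have key : ∀ j, ∃ v, tnorm (FreeGroup.map c) f (j + 1) = mk (w ++ v) ∧ IsReduced (w ++ v) := by
      intro j
      induction j with
      | zero => exact ⟨[], by simp [tnorm, hw, mk_toWord], by simp [hw, isReduced_toWord]⟩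
      | succ j ihj =>
        obtain ⟨v, hv, hr⟩ := ihj
        refine ⟨(w ++ v).map fun p => (c p.1, p.2), ?_, ?_⟩
        · rw [tnorm, hv, FreeGroup.map.mk, mk_append, hw, mk_toWord]
        · rw [isReduced_append]
          refine ⟨hw ▸ isReduced_toWord, isReduced_map c c.injective hr, ?_⟩
          intro z hz b hb hbz
          rw [hw'] at hb
          simp only [List.cons_append, List.map_cons, List.head?_cons, Option.mem_def,
            Option.some.injEq] at hb
          rw [← hb, ← ha'] at hbz
          apply hcan
          rw [hbz, bar_bar]
          exact hz
    obtain ⟨v, hv, hr⟩ := key (m - 1)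
    rw [show m - 1 + 1 = m by omega, hf] at hv
    have := toWord_mk_of hr
    rw [← hv, toWord_one] at this
    simp [hwne] at this

theorem chi_parity (w : List (α × Bool)) [Fintype α] :
    Even ((∑ j, (chi (j, true) (mk w)).toAdd) - w.length) := by
  induction w with
  | nil => simp [← one_eq_mk]
  | cons a w ih =>
    rw [show a :: w = [a] ++ w from rfl, mk_append]
    simp only [map_mul, toAdd_mul, Finset.sum_add_distrib]
    have : Even ((∑ j, (chi (j, true) (mk [a])).toAdd) - 1) := by
      rw [Finset.sum_eq_single a.1]
      · obtain ⟨a, b⟩ := a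
        cases b <;> simp [chi]
      · intro b _ hb
        obtain ⟨a, c⟩ := a
        have : a ≠ b := Ne.symm hb
        cases c <;> simp [chi, this]
      · simp
    have h := this.add ih
    rw [sub_add_sub_comm] at h
    rw [List.length_append, List.length_singleton]
    push_cast
    exact h

section rigid
variable [AddGroup α]

theorem norm_le_of_pc {W : List (α × Bool)} (hW : IsReduced W) (hodd : Odd W.length)
    (θ : FreeGroup α →* FreeGroup α) (hθ : ∀ a, θ (FreeGroup.of a) = mk (sh a W))
    (u : FreeGroup α) : u.norm ≤ (θ u).norm := by
  have hl : ∀ l, θ (mk [l]) = mk (pc W l) := by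
    rintro ⟨a, b⟩
    cases b
    · have : (mk [(a, false)] : FreeGroup α) = (FreeGroup.of a)⁻¹ := by simp [FreeGroup.of, inv_mk, invRev]
      rw [this, map_inv, hθ, inv_mk]
      rfl
    · exact hθ a
  have key : ∀ (w : List (α × Bool)) (l : α × Bool), IsReduced (w ++ [l]) →
      ∃ Z A R, θ (mk (w ++ [l])) = mk (Z ++ R) ∧ IsReduced (Z ++ R) ∧ pc W l = A ++ R ∧
        W.length < 2 * R.length ∧ w.length ≤ Z.length := by
    intro w
    induction w using List.reverseRecOn with
    | nil =>
      intro l _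
      refine ⟨[], [], pc W l, by simpa using hl l, by simpa using pc_reduced hW l, rfl, ?_, by simp⟩
      rw [pc_length]
      have := hodd.pos
      omega
    | append_singleton w l ih =>
      intro l' hr
      have hr' := isReduced_append.1 hr
      obtain ⟨Z, A, R, h1, h2, h3, h4, h5⟩ := ih l hr'.1
      have hne : l' ≠ bar l := hr'.2.2 l (by simp) l' (by simp)
      obtain ⟨R', t, B, h6, h7, h8⟩ := max_cancel R (pc W l') (isReduced_append.1 h2).2.1
        (pc_reduced hW l')
      have h9 := pc_cancel hodd hne (A := A ++ R') (t := t) (B := B)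
        (by rw [h3, h6, List.append_assoc]) h7
      have hlenR : R.length = R'.length + t.length := by rw [h6, List.length_append]
      have hlenP : W.length = t.length + B.length := by
        have := congrArg List.length h7
        rwa [pc_length, List.length_append, invRev_length] at this
      have hR' : R' ≠ [] := by
        rintro rfl
        simp at hlenR
        omega
      refine ⟨Z ++ R', invRev t, B, ?_, ?_, h7, by omega, ?_⟩
      · rw [mk_append, map_mul, h1, hl, h6, h7]
        simp only [mk_append, ← inv_mk]
        group
      · refine isReduced_glue hR' ?_ h8
        rw [h6, ← List.append_assoc] at h2
        exact (isReduced_append.1 h2).1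
      · simp only [List.length_append, List.length_singleton]
        have := List.length_pos_of_ne_nil hR'
        omega
  rcases List.eq_nil_or_concat u.toWord with h | ⟨w, l, h⟩
  · rw [FreeGroup.norm, h]; simp
  · rw [List.concat_eq_append] at h
    have hr : IsReduced (w ++ [l]) := h ▸ isReduced_toWord
    obtain ⟨Z, A, R, h1, h2, -, h4, h5⟩ := key w l hr
    rw [← eq_mk h] at h1
    rw [FreeGroup.norm, FreeGroup.norm, h, h1, toWord_mk_of h2]
    simp
    omega

/-- An automorphism of a free group that commutes with translations of the letters and preserves
exponent sums is the identity. -/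
theorem rigid [Fintype α] (θ : FreeGroup α ≃* FreeGroup α)
    (hD : ∀ a, θ (FreeGroup.of a) = FreeGroup.map (· + a) (θ (FreeGroup.of 0)))
    (hchi : ∀ j u, chi (j, true) (θ u) = chi (j, true) u) (u : FreeGroup α) : θ u = u := by
  set W := (θ (FreeGroup.of 0)).toWord with hWdef
  have hodd : Odd W.length := by
    have h1 := chi_parity W
    rw [hWdef, mk_toWord] at h1
    simp only [hchi] at h1
    rw [Finset.sum_eq_single 0] at h1
    · rw [← hWdef] at h1
      simp only [chi, lift_apply_of, if_true, toAdd_ofAdd] at h1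
      rw [Int.even_sub] at h1
      simp only [Int.not_even_one, false_iff] at h1
      exact Nat.not_even_iff_odd.1 (by exact_mod_cast h1)
    · intro b _ hb
      simp [chi, hb.symm]
    · simp
  have hn := norm_le_of_pc (W := W) isReduced_toWord hodd θ.toMonoidHom (fun a => by
    change θ (FreeGroup.of a) = _
    rw [hD, ← mk_toWord (x := θ (FreeGroup.of 0)), FreeGroup.map.mk]
    rfl)
  have h0 : θ (FreeGroup.of 0) = FreeGroup.of 0 := by
    have h1 := hn (θ.symm (FreeGroup.of 0))
    simp only [MulEquiv.toMonoidHom_eq_coe, MonoidHom.coe_coe, MulEquiv.apply_symm_apply,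
      norm_of] at h1
    have h2 : ∀ j, chi (j, true) (θ.symm (FreeGroup.of 0)) = chi (j, true) (FreeGroup.of (0 : α)) := by
      intro j
      rw [← hchi, MulEquiv.apply_symm_apply]
    suffices θ.symm (FreeGroup.of 0) = FreeGroup.of 0 by
      rw [← this, MulEquiv.apply_symm_apply, this]
    have h3 := h2 0
    rw [FreeGroup.norm] at h1
    rw [← mk_toWord (x := θ.symm (FreeGroup.of 0))] at h3 ⊢
    match hw : (θ.symm (FreeGroup.of 0)).toWord with
    | [] =>
      rw [hw] at h3
      simp [← one_eq_mk, chi] at h3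
      exact absurd (congrArg Multiplicative.toAdd h3) (by simp)
    | [(a, b)] =>
      rw [hw] at h3
      by_cases ha : a = 0
      · subst ha
        cases b
        · simp [chi] at h3
          exact absurd (congrArg Multiplicative.toAdd h3) (by simp)
        · rfl
      · cases b <;> simp [chi, ha] at h3 <;>
          exact absurd (congrArg Multiplicative.toAdd h3) (by simp)
    | _ :: _ :: _ => rw [hw] at h1; simp at h1
  have : θ.toMonoidHom = MonoidHom.id _ := by
    refine FreeGroup.ext_hom _ _ fun a => ?_
    change θ (FreeGroup.of a) = FreeGroup.of a
    rw [hD, h0]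
    simp
  exact DFunLike.congr_fun this u

end rigid

end Free
end DG

namespace DG

/-! ### The pure braid group -/

open Equiv

theorem br_zero (b : Br 0) : b = 1 := by
  induction b using ind_left with
  | h1 => rfl
  | hs i hi => omega
  | hs' i hi => omega

theorem freeHom_of {k : ℕ} (j : Fin (k + 1)) : freeHom k (FreeGroup.of j) = X k j := by
  simp [freeHom]

theorem cr_freeHom_last {k : ℕ} (f : F k) (j : Fin (k + 1)) :
    cr (freeHom k f) j (k + 1) = 2 * (Free.chi (j, true) f).toAdd := by
  induction f using FreeGroup.induction_on with
  | C1 => simp [cr_one]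
  | of i =>
    rw [freeHom_of, cr_X (by omega), E, Free.chi, FreeGroup.lift_apply_of]
    by_cases h : i = j
    · simp [h]
    · have : (j : ℕ) ≠ i := fun e => h (Fin.ext e.symm)
      have h2 : (j : ℕ) ≠ k + 1 := by omega
      simp [h, this, h2]
  | inv_of i ih =>
    rw [map_inv, map_inv, cr_inv_pure (freeHom_pure _), Pi.neg_apply, Pi.neg_apply, ih]
    simp
  | mul f g hf hg =>
    rw [map_mul, map_mul, cr_mul_pure (freeHom_pure _), Pi.add_apply, Pi.add_apply, hf, hg]
    simp [mul_add]

theorem cr_freeHom_le {k : ℕ} (f : F k) {a b : ℕ} (ha : a ≤ k) (hb : b ≤ k) :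
    cr (freeHom k f) a b = 0 := by
  induction f using FreeGroup.induction_on with
  | C1 => simp [cr_one]
  | of i =>
    rw [freeHom_of, cr_X (by omega), E, if_neg (by omega), mul_zero]
  | inv_of i ih =>
    rw [map_inv, cr_inv_pure (freeHom_pure _), Pi.neg_apply, Pi.neg_apply, ih, neg_zero]
  | mul f g hf hg =>
    rw [map_mul, cr_mul_pure (freeHom_pure _), Pi.add_apply, Pi.add_apply, hf, hg, add_zero]

theorem up_pure {k : ℕ} {b : Br k} : up k b ∈ Pure (k + 1) ↔ b ∈ Pure k := by
  rw [mem_Pure, mem_Pure, perm_up]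

/-- The standard generators of the pure braid group, for `i < j ≤ k`. -/
def A : (k : ℕ) → ℕ → ℕ → Br k
  | 0, _, _ => 1
  | k + 1, i, j => if j = k + 1 then X k i else up k (A k i j)

theorem A_pure {k i j : ℕ} (hij : i < j) (hj : j ≤ k) : A k i j ∈ Pure k := by
  induction k with
  | zero => omega
  | succ k ih =>
    rw [A]
    split_ifs with h
    · exact X_pure (by omega)
    · exact up_pure.2 (ih (by omega))

theorem cr_A {k i j : ℕ} (hij : i < j) (hj : j ≤ k) (a b : ℕ) : cr (A k i j) a b = 2 * E i j a b := by
  induction k with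
  | zero => omega
  | succ k ih =>
    rw [A]
    split_ifs with h
    · rw [cr_X (by omega), h]
    · rw [cr_up, ih (by omega)]

theorem A_conj {k i j : ℕ} (hij : i < j) (hj : j ≤ k) :
    ∃ g, ∃ t < k, A k i j = g * (s k t * s k t) * g⁻¹ := by
  induction k with
  | zero => omega
  | succ k ih =>
    rw [A]
    split_ifs with h
    · exact ⟨_, i, by omega, X_eq (by omega)⟩
    · obtain ⟨g, t, ht, e⟩ := ih (by omega)
      exact ⟨up k g, t, by omega, by rw [e]; simp [up_s ht]⟩

theorem Pure_le {k : ℕ} (H : Subgroup (Br k)) (h : ∀ i j, i < j → j ≤ k → A k i j ∈ H) :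
    Pure k ≤ H := by
  induction k with
  | zero => intro b _; rw [br_zero b]; exact H.one_mem
  | succ k ih =>
    intro b hb
    obtain ⟨g, rfl, hg⟩ := exists_iota_pure hb
    rw [iota_eq]
    refine H.mul_mem ?_ ?_
    · have : (freeHom k).range ≤ H := by
        rw [freeHom, FreeGroup.range_lift_eq_closure, Subgroup.closure_le]
        rintro _ ⟨j, rfl⟩
        have := h j (k + 1) (by omega) le_rfl
        rwa [A, if_pos rfl] at this
      exact this ⟨_, rfl⟩
    · refine ih (H.comap (up k)) (fun i j hij hj => ?_) hg
      have := h i j hij (by omega)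
      rwa [A, if_neg (by omega)] at this

/-- Induction over the pure braid group. -/
theorem pure_ind {k : ℕ} {p : Br k → Prop} (h1 : p 1)
    (hA : ∀ i j, i < j → j ≤ k → p (A k i j))
    (hm : ∀ a ∈ Pure k, ∀ b ∈ Pure k, p a → p b → p (a * b)) (hi : ∀ a ∈ Pure k, p a → p a⁻¹)
    {b : Br k} (hb : b ∈ Pure k) : p b := by
  let H : Subgroup (Br k) :=
    { carrier := {b | b ∈ Pure k ∧ p b}
      one_mem' := ⟨one_mem _, h1⟩
      mul_mem' := fun ha hb => ⟨mul_mem ha.1 hb.1, hm _ ha.1 _ hb.1 ha.2 hb.2⟩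
      inv_mem' := fun ha => ⟨inv_mem ha.1, hi _ ha.1 ha.2⟩ }
  exact (Pure_le H (fun i j h1 h2 => ⟨A_pure h1 h2, hA i j h1 h2⟩) hb).2

/-- A homomorphism that kills the squares of the generators kills the pure braid group. -/
theorem kill_sq {k : ℕ} {G : Type*} [Group G] (f : Br k →* G)
    (h : ∀ i < k, f (s k i) * f (s k i) = 1) {p : Br k} (hp : p ∈ Pure k) : f p = 1 := by
  refine Pure_le f.ker (fun i j h1 h2 => ?_) hp
  obtain ⟨g, t, ht, e⟩ := A_conj h1 h2
  rw [MonoidHom.mem_ker, e]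
  simp [h t ht]

theorem freeHom_injective (k : ℕ) : Function.Injective (freeHom k) := by
  intro a b h
  rw [← iota_inl, ← iota_inl] at h
  exact SemidirectProduct.inl_injective (iota_injective k h)

/-- The centraliser of the pure braid group inside it is the centre of the braid group. -/
theorem pure_centre {k : ℕ} {e : Br k} (he : e ∈ Pure k) (hc : ∀ p ∈ Pure k, Commute p e)
    (b : Br k) : Commute b e := by
  induction k with
  | zero => rw [br_zero b]; exact Commute.one_left e
  | succ k ih =>
    rcases Nat.eq_zero_or_pos k with rfl | hk
    · have key : ∀ b : Br 1, Commute (s 1 0) b := by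
        intro b
        induction b using ind with
        | h1 => exact Commute.one_right _
        | hs i hi => rw [show i = 0 by omega]
        | hm a b ha hb => exact ha.mul_right hb
        | hi a ha => exact ha.inv_right
      induction b using ind with
      | h1 => exact Commute.one_left _
      | hs i hi => rw [show i = 0 by omega]; exact key e
      | hm a b ha hb => exact ha.mul_left hb
      | hi a ha => exact ha.inv_left
    -- generators other than the last one
    have first : ∀ e ∈ Pure (k + 1), (∀ p ∈ Pure (k + 1), Commute p e) →
        ∀ i < k, Commute (s (k + 1) i) e := by
      intro e he hc i hi
      obtain ⟨g, rfl, hg⟩ := exists_iota_pure he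
      have h1 : Commute (s k i) g.right := by
        refine ih hg (fun p hp => ?_) _
        have := hc (up k p) (up_pure.2 hp)
        rw [← iota_inr] at this
        have := iota_injective k ((map_mul _ _ _).trans (this.eq.trans (map_mul _ _ _).symm))
        exact (by simpa using congrArg SemidirectProduct.right this : p * g.right = g.right * p)
      set c := s (k + 1) i * iota k g * (s (k + 1) i)⁻¹ * (iota k g)⁻¹ with hcdef
      have hcc : ∀ p ∈ Pure (k + 1), Commute p c := by
        intro p hp
        refine Commute.mul_right ?_ (hc p hp).inv_right
        have hp' := Subgroup.Normal.conj_mem (inferInstance : (Pure (k + 1)).Normal) p hp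
          (s (k + 1) i)⁻¹
        have := hc _ hp'
        rw [inv_inv] at this
        have := (SemiconjBy.eq (this.map (MulAut.conj (s (k + 1) i))))
        simp only [MulAut.conj_apply] at this
        rw [commute_iff_eq]
        convert this using 1 <;> group
      have h2 : c = iota k (SemidirectProduct.inr (s k i) * g *
          (SemidirectProduct.inr (s k i))⁻¹ * g⁻¹) := by
        simp [iota_inr, up_s hi, hcdef]
      obtain ⟨f, hf⟩ : ∃ f, SemidirectProduct.inl f = (SemidirectProduct.inr (s k i) * g *
          (SemidirectProduct.inr (s k i))⁻¹ * g⁻¹) := by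
        rw [← MonoidHom.mem_range, SemidirectProduct.range_inl_eq_ker_rightHom, MonoidHom.mem_ker]
        simp only [map_mul, map_inv, SemidirectProduct.rightHom_inr,
          SemidirectProduct.rightHom_eq_right]
        rw [h1.eq]
        group
      rw [← hf, iota_inl] at h2
      have hf1 : f = 1 := by
        obtain ⟨k, rfl⟩ : ∃ k', k = k' + 1 := ⟨k - 1, by omega⟩
        refine Free.center_trivial fun u => freeHom_injective _ ?_
        have := hcc _ (freeHom_pure u)
        rw [h2] at this
        simpa using this.eq
      rw [hf1, map_one, hcdef, mul_inv_eq_one, mul_inv_eq_iff_eq_mul] at h2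
      exact h2
    have all : ∀ i < k + 1, Commute (s (k + 1) i) e := by
      intro i hi
      rcases Nat.lt_or_ge i k with h | h
      · exact first e he hc i h
      · obtain ⟨g, hg⟩ := isConj_iff.1 (s_isConj (k := k + 1) (i := 0) (j := i) (by omega) hi)
        have hN := Subgroup.Normal.conj_mem (inferInstance : (Pure (k + 1)).Normal)
        have := first (g⁻¹ * e * g⁻¹⁻¹) (hN _ he _) (fun p hp => by
          have := (hc _ (hN p hp g)).map (MulAut.conj g⁻¹)
          simp only [MulAut.conj_apply] at this
          convert this using 1
          group) 0 (by omega)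
        have := this.map (MulAut.conj g)
        simp only [MulAut.conj_apply, hg] at this
        convert this using 1
        group
    induction b using ind with
    | h1 => exact Commute.one_left _
    | hs i hi => exact all i hi
    | hm a b ha hb => exact ha.mul_left hb
    | hi a ha => exact ha.inv_left

theorem fg_comap {G H : Type*} [Group G] [Group H] (f : G →* H) (hf : Function.Injective f)
    {M : Subgroup H} (hM : M ≤ f.range) (h : M.FG) : (M.comap f).FG := by
  classical
  obtain ⟨S, hS⟩ := h
  refine ⟨S.preimage f hf.injOn, ?_⟩
  apply Subgroup.map_injective hf
  rw [MonoidHom.map_closure, Subgroup.map_comap_eq_self hM, Finset.coe_preimage,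
    Set.image_preimage_eq_of_subset, hS]
  intro y hy
  exact hM (hS ▸ Subgroup.subset_closure hy)

theorem fg_map {G H : Type*} [Group G] [Group H] (f : G →* H)
    {M : Subgroup G} (h : M.FG) : (M.map f).FG := by
  classical
  obtain ⟨S, hS⟩ := h
  exact ⟨S.image f, by rw [Finset.coe_image, ← MonoidHom.map_closure, hS]⟩

/-- Conclusion of `fg_normal_pure`, isolated for the induction. -/
def FGTriv (k : ℕ) : Prop := ∀ M : Subgroup (Br k), M.FG → M ≤ Pure k →
  (∀ m ∈ M, ∀ g ∈ Pure k, g * m * g⁻¹ ∈ M) → (∀ m ∈ M, cr m = 0) → M = ⊥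

theorem le_range_of {k : ℕ} (hk : FGTriv k) {M : Subgroup (Br (k + 1))} (hfg : M.FG)
    (hM : M ≤ Pure (k + 1)) (hn : ∀ m ∈ M, ∀ g ∈ Pure (k + 1), g * m * g⁻¹ ∈ M)
    (hcr : ∀ m ∈ M, ∀ a ≤ k, ∀ b ≤ k, cr m a b = 0) : M ≤ (freeHom k).range := by
  have hr : M ≤ (iota k).range := fun m hm =>
    let ⟨g, hg, _⟩ := exists_iota_pure (hM hm)
    ⟨g, hg⟩
  have h1 := fg_map SemidirectProduct.rightHom (fg_comap _ (iota_injective k) hr hfg)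
  have h2 := hk _ h1 ?_ ?_ ?_
  · intro m hm
    obtain ⟨g, rfl⟩ := hr hm
    have : g.right = 1 := by
      have : g.right ∈ (⊥ : Subgroup (Br k)) := h2 ▸ ⟨g, hm, rfl⟩
      simpa using this
    exact ⟨g.left, by rw [iota_eq, this, map_one, mul_one]⟩
  · rintro _ ⟨g, hg, rfl⟩
    exact (iota_pure g).1 (hM hg)
  · rintro _ ⟨g, hg, rfl⟩ h hh
    refine ⟨SemidirectProduct.inr h * g * (SemidirectProduct.inr h)⁻¹, ?_, by simp⟩
    change iota k _ ∈ M
    rw [map_mul, map_mul, map_inv, iota_inr]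
    exact hn _ hg _ (up_pure.2 hh)
  · rintro _ ⟨g, hg, rfl⟩
    funext a b
    change cr g.right a b = 0
    by_cases ha : k < a
    · exact cr_out _ _ ha
    by_cases hb : k < b
    · rw [cr_symm]; exact cr_out _ _ hb
    have := hcr _ hg a (by omega) b (by omega)
    rwa [cr_iota, Pi.add_apply, Pi.add_apply, cr_freeHom_le _ (by omega) (by omega), zero_add]
      at this

theorem chi_false {α : Type*} [DecidableEq α] (j : α) (u : FreeGroup α) :
    Free.chi (j, false) u = (Free.chi (j, true) u)⁻¹ := by
  induction u using FreeGroup.induction_on with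
  | C1 => simp
  | of i => simp only [Free.chi, FreeGroup.lift_apply_of]; split_ifs <;> simp_all
  | inv_of i h => rw [map_inv, map_inv, h]
  | mul a b ha hb => rw [map_mul, map_mul, ha, hb, mul_inv]

/-- A finitely generated subgroup of the pure braid group that is normalised by it and has
vanishing linking numbers is trivial. -/
theorem fg_normal_pure (k : ℕ) : FGTriv k := by
  induction k with
  | zero =>
    intro M _ _ _ _
    rw [Subgroup.eq_bot_iff_forall]
    exact fun b _ => br_zero b
  | succ k ih =>
    intro M hfg hM hn hcr
    have hr := le_range_of ih hfg hM hn (fun m hm a _ b _ => by rw [hcr m hm]; rfl)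
    have hchi : ∀ u, freeHom k u ∈ M → ∀ j, Free.chi (j, true) u = 1 := by
      intro u hu j
      have h1 := cr_freeHom_last u j
      rw [hcr _ hu] at h1
      apply Multiplicative.toAdd.injective
      simpa using h1
    suffices M.comap (freeHom k) = ⊥ by
      rw [← Subgroup.map_comap_eq_self hr, this, Subgroup.map_bot]
    rcases Nat.eq_zero_or_pos k with rfl | hk
    · rw [Subgroup.eq_bot_iff_forall]
      intro u hu
      have h1 := Free.mem_commutator u (hchi u hu)
      have h2 : commutator (F 0) = ⊥ := by
        rw [commutator_def, Subgroup.commutator_eq_bot_iff_le_centralizer]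
        intro a _
        rw [Subgroup.mem_centralizer_iff]
        intro b _
        have key : ∀ b : F 0, Commute (FreeGroup.of 0) b := by
          intro b
          induction b using FreeGroup.induction_on with
          | C1 => exact Commute.one_right _
          | of i => rw [show i = 0 from Fin.ext (by omega)]
          | inv_of i h => exact h.inv_right
          | mul a b ha hb => exact ha.mul_right hb
        induction b using FreeGroup.induction_on with
        | C1 => simp
        | of i => rw [show i = 0 from Fin.ext (by omega)]; exact key a
        | inv_of i h => rw [show i = 0 from Fin.ext (by omega)]; exact (key a).inv_left
        | mul b c hb hc => exact Commute.mul_left (hb trivial) (hc trivial)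
      simpa [h2] using h1
    · obtain ⟨k, rfl⟩ : ∃ k', k = k' + 1 := ⟨k - 1, by omega⟩
      refine Free.fg_normal_trivial _ (fg_comap _ (freeHom_injective _) hr hfg) ?_ ?_
      · intro m hm g
        change freeHom _ _ ∈ M
        rw [map_mul, map_mul, map_inv]
        exact hn _ hm _ (freeHom_pure g)
      · rintro m hm ⟨j, b⟩
        cases b
        · rw [chi_false, hchi m hm, inv_one]
        · exact hchi m hm j

end DG

namespace DG

/-! ### Band generators -/

open Equiv

section band
variable {G : Type*} [Group G]

theorem commute_conj_iff {g a b : G} (h : Commute g a) :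
    Commute a (g * b * g⁻¹) ↔ Commute a b := by
  constructor
  · intro h'
    have : Commute (g⁻¹ * a * g) (g⁻¹ * (g * b * g⁻¹) * g) := by
      have := h'.map (MulAut.conj g⁻¹)
      simpa only [MulAut.conj_apply, inv_inv] using this
    rwa [h.inv_left.eq, mul_assoc, inv_mul_cancel, mul_one,
      show g⁻¹ * (g * b * g⁻¹) * g = b by group] at this
  · intro h'
    exact ((h.symm.mul_right h').mul_right h.symm.inv_right)

theorem commute_conj_iff' {g a b : G} (h : Commute g a) :
    Commute a (g⁻¹ * b * g) ↔ Commute a b := by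
  simpa using commute_conj_iff (b := b) h.inv_left

/-- The band generator `a_{i,j}`, `j = i + d + 1`, for a sequence of elements `u`. -/
def band (u : ℕ → G) (i : ℕ) : ℕ → G
  | 0 => u i
  | d + 1 => u (i + d + 1) * band u i d * (u (i + d + 1))⁻¹

/-- A sequence of elements satisfying the braid relations. -/
structure BraidSeq (k : ℕ) (u : ℕ → G) : Prop where
  comm : ∀ i j, i + 1 < j → j < k → Commute (u i) (u j)
  braid : ∀ i, i + 1 < k → u i * u (i + 1) * u i = u (i + 1) * u i * u (i + 1)

variable {k : ℕ} {u : ℕ → G}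

theorem band_succ (hu : BraidSeq k u) {i d : ℕ} (h : i + d + 1 < k) :
    band u i (d + 1) = (u i)⁻¹ * band u (i + 1) d * u i := by
  induction d with
  | zero =>
    have := hu.braid i (by omega)
    simp only [band, add_zero]
    rw [mul_inv_eq_iff_eq_mul, mul_assoc, mul_assoc, eq_inv_mul_iff_mul_eq, ← mul_assoc, this,
      mul_assoc]
  | succ d ih =>
    rw [band, ih (by omega), band, show i + (d + 1) + 1 = i + 1 + d + 1 by ring]
    have h1 : Commute (u i) (u (i + 1 + d + 1)) := hu.comm _ _ (by omega) (by omega)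
    rw [mul_inv_eq_iff_eq_mul]
    have h2 := h1.inv_left.eq
    calc _ = (u (i + 1 + d + 1) * (u i)⁻¹) * band u (i + 1) d * u i := by group
      _ = _ := by
        rw [← h2]
        have h3 := h1.inv_right.eq
        calc _ = (u i)⁻¹ * u (i + 1 + d + 1) * band u (i + 1) d *
            (u (i + 1 + d + 1))⁻¹ * (u (i + 1 + d + 1) * u i) := by group
          _ = _ := by rw [← h1.eq]; group

/-- Generators far from the band commute with it, in the lower range. -/
theorem band_comm_lt (hu : BraidSeq k u) {t i d : ℕ} (ht : t + 1 < i) (h : i + d < k) :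
    Commute (u t) (band u i d) := by
  induction d with
  | zero => exact hu.comm _ _ ht (by omega)
  | succ d ih =>
    rw [band, commute_conj_iff (hu.comm _ _ (by omega) (by omega)).symm]
    exact ih (by omega)

theorem band_comm_gt (hu : BraidSeq k u) {t i d : ℕ} (ht : i + d + 1 < t) (h : t < k) :
    Commute (u t) (band u i d) := by
  induction d with
  | zero => exact (hu.comm _ _ ht h).symm
  | succ d ih =>
    rw [band, commute_conj_iff (hu.comm _ _ (by omega) (by omega))]
    exact ih (by omega)

theorem band_comm_mid (hu : BraidSeq k u) {t i d : ℕ} (hi : i < t) (ht : t < i + d) (h : i + d < k) :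
    Commute (u t) (band u i d) := by
  obtain ⟨e, rfl⟩ : ∃ e, t = i + 1 + e := ⟨t - i - 1, by omega⟩
  induction e generalizing i d with
  | zero =>
    obtain ⟨d, rfl⟩ : ∃ d', d = d' + 2 := ⟨d - 2, by omega⟩
    induction d with
    | zero =>
      have h1 := hu.braid (i + 1) (by omega)
      have h2 := hu.comm i (i + 2) (by omega) (by omega)
      simp only [band, add_zero, commute_iff_eq]
      have e1 : u (i + 1) * (u (i + 2) * u (i + 1)) = u (i + 2) * u (i + 1) * u (i + 2) := by
        rw [← mul_assoc]; exact h1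
      have e2 : (u (i + 2) * u (i + 1))⁻¹ * u (i + 1) = u (i + 2) * (u (i + 2) * u (i + 1))⁻¹ := by
        rw [inv_mul_eq_iff_eq_mul, ← mul_assoc, eq_mul_inv_iff_mul_eq, e1]
      calc u (i + 1) * (u (i + 0 + 1 + 1) * (u (i + 1) * u i * (u (i + 1))⁻¹) *
            (u (i + 0 + 1 + 1))⁻¹)
          = (u (i + 1) * (u (i + 2) * u (i + 1))) * u i * (u (i + 2) * u (i + 1))⁻¹ := by
            simp only [add_zero, show i + 1 + 1 = i + 2 by ring]; group
        _ = (u (i + 2) * u (i + 1)) * u i * (u (i + 2) * (u (i + 2) * u (i + 1))⁻¹) := by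
            rw [e1]
            have := h2.eq
            calc _ = (u (i + 2) * u (i + 1)) * (u (i + 2) * u i) * (u (i + 2) * u (i + 1))⁻¹ := by
                  group
              _ = _ := by rw [← this]; group
        _ = _ := by
            rw [← e2]
            simp only [show i + 1 + 1 = i + 2 by ring]; group
    | succ d ih =>
      rw [band, commute_conj_iff (hu.comm _ _ (by omega) (by omega)).symm]
      exact ih (by omega) (by omega)
  | succ e ih =>
    obtain ⟨d, rfl⟩ : ∃ d', d = d' + 1 := ⟨d - 1, by omega⟩
    rw [band_succ hu (by omega), commute_conj_iff' (hu.comm _ _ (by omega) (by omega)),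
      show i + 1 + (e + 1) = i + 1 + 1 + e by ring]
    exact ih (by omega) (by omega) (by omega)

theorem band_ncomm_gt (hu : BraidSeq k u)
    (hn : ∀ i, i + 1 < k → ¬ Commute (u i) (u (i + 1))) {i d : ℕ} (h : i + d + 1 < k) : ¬ Commute (u (i + d + 1)) (band u i d) := by
  induction d generalizing i with
  | zero => exact fun h' => hn i (by omega) h'.symm
  | succ d ih =>
    rw [band_succ hu (by omega), commute_conj_iff' (hu.comm _ _ (by omega) (by omega)),
      show i + (d + 1) + 1 = i + 1 + d + 1 by ring]
    exact ih (by omega)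

theorem band_ncomm_lt (hu : BraidSeq k u)
    (hn : ∀ i, i + 1 < k → ¬ Commute (u i) (u (i + 1))) {i d : ℕ} (h : i + 1 + d < k) : ¬ Commute (u i) (band u (i + 1) d) := by
  induction d with
  | zero => exact hn i (by omega)
  | succ d ih =>
    rw [band, commute_conj_iff (hu.comm _ _ (by omega) (by omega)).symm]
    exact ih (by omega)

/-- The generator `u t` commutes with `a_{i,j}` iff the transposition `(t, t+1)` preserves
`{i, j}`. -/
theorem band_comm_iff (hu : BraidSeq k u)
    (hn : ∀ i, i + 1 < k → ¬ Commute (u i) (u (i + 1))) {t i d : ℕ} (ht : t < k) (h : i + d < k) :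
    Commute (u t) (band u i d) ↔
      ((t = i ∨ t = i + d + 1) ↔ (t + 1 = i ∨ t + 1 = i + d + 1)) := by
  rcases Nat.lt_trichotomy (t + 1) i with h1 | h1 | h1
  · exact iff_of_true (band_comm_lt hu h1 h) (by omega)
  · subst h1
    exact iff_of_false (band_ncomm_lt hu hn h) (by omega)
  rcases Nat.lt_or_ge i t with h2 | h2
  · rcases Nat.lt_trichotomy t (i + d) with h3 | h3 | h3
    · exact iff_of_true (band_comm_mid hu h2 h3 h) (by omega)
    · subst h3
      obtain ⟨d, rfl⟩ : ∃ d', d = d' + 1 := ⟨d - 1, by omega⟩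
      refine iff_of_false ?_ (by omega)
      rw [band, show i + (d + 1) = i + d + 1 by ring, commute_conj_iff (Commute.refl _)]
      exact band_ncomm_gt hu hn (by omega)
    · rcases Nat.lt_or_ge (i + d + 1) t with h4 | h4
      · exact iff_of_true (band_comm_gt hu h4 ht) (by omega)
      · rw [show t = i + d + 1 by omega]
        exact iff_of_false (band_ncomm_gt hu hn (by omega)) (by omega)
  · have h3 : t = i := by omega
    subst h3
    cases d with
    | zero => exact iff_of_true (Commute.refl _) (by omega)
    | succ d =>
      refine iff_of_false ?_ (by omega)
      rw [band_succ hu (by omega), commute_conj_iff' (Commute.refl _)]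
      exact band_ncomm_lt hu hn (by omega)

theorem iff_step {a b c d z : Prop} (h : (a ↔ c) ↔ z) (h' : (a ↔ b) ↔ (c ↔ d)) :
    (b ↔ d) ↔ z := by
  by_cases a <;> by_cases b <;> by_cases c <;> by_cases d <;> simp_all

/-- With at least five strands the band generators are distinct. -/
theorem band_inj (hu : BraidSeq k u)
    (hn : ∀ i, i + 1 < k → ¬ Commute (u i) (u (i + 1))) (hk : 4 ≤ k) {i d i' d' : ℕ} (h : i + d < k) (h' : i' + d' < k)
    (e : band u i d = band u i' d') : i = i' ∧ d = d' := by
  have key : ∀ t < k, (((t = i ∨ t = i + d + 1) ↔ (t + 1 = i ∨ t + 1 = i + d + 1)) ↔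
      ((t = i' ∨ t = i' + d' + 1) ↔ (t + 1 = i' ∨ t + 1 = i' + d' + 1))) := by
    intro t ht
    rw [← band_comm_iff hu hn ht h, ← band_comm_iff hu hn ht h', e]
  have key2 : ∀ t ≤ k, (((t = i ∨ t = i + d + 1) ↔ (t = i' ∨ t = i' + d' + 1)) ↔
      ((0 = i ∨ 0 = i + d + 1) ↔ (0 = i' ∨ 0 = i' + d' + 1))) := by
    intro t ht
    induction t with
    | zero => rfl
    | succ t ih =>
      exact iff_step (ih (by omega)) (key t (by omega))
  by_cases h0 : ((0 = i ∨ 0 = i + d + 1) ↔ (0 = i' ∨ 0 = i' + d' + 1))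
  · have h1 := (key2 i (by omega)).2 h0
    have h2 := (key2 (i + d + 1) (by omega)).2 h0
    omega
  · exfalso
    have h1 : ∀ t ≤ k, t = i ∨ t = i + d + 1 ∨ t = i' ∨ t = i' + d' + 1 := by
      intro t ht
      by_contra hcon
      rw [not_or, not_or, not_or] at hcon
      exact h0 ((key2 t ht).1 (iff_of_false (by tauto) (by tauto)))
    have h2 : Finset.range 5 ⊆ {i, i + d + 1, i', i' + d' + 1} := by
      intro t ht
      simp only [Finset.mem_insert, Finset.mem_singleton]
      exact h1 t (by simp at ht; omega)
    have h3 := Finset.card_le_card h2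
    have h4 := (Finset.card_le_four (a := i) (b := i + d + 1) (c := i') (d := i' + d' + 1))
    simp at h3
    omega

end band

end DG

namespace DG

/-! ### A count of centralisers in the symmetric group -/

open Equiv

section count
variable {G : Type*} [Group G]

/-- The centraliser of the first `j` elements of a sequence. -/
def cent (u : ℕ → G) (j : ℕ) : Subgroup G := Subgroup.centralizer {g | ∃ i < j, u i = g}

theorem mem_cent {u : ℕ → G} {j : ℕ} {g : G} : g ∈ cent u j ↔ ∀ i < j, Commute (u i) g := by
  rw [cent, Subgroup.mem_centralizer_iff]
  constructor
  · exact fun h i hi => h _ ⟨i, hi, rfl⟩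
  · rintro h _ ⟨i, hi, rfl⟩
    exact h i hi

/-- Orbit counting for the conjugates of `u j` under the centraliser of `u 0, …, u (j-1)`. -/
theorem card_cent [Finite G] (u : ℕ → G) (j : ℕ) {ι : Type*} [Fintype ι] (y : ι → G)
    (hy : Function.Injective y) (h : ∀ t, ∃ g ∈ cent u j, y t = g * u j * g⁻¹) :
    Fintype.card ι * Nat.card (cent u (j + 1)) ≤ Nat.card (cent u j) := by
  choose g hg hgy using h
  rw [← Nat.card_eq_fintype_card, ← Nat.card_prod]
  have hle : ∀ c : cent u (j + 1), (c : G) ∈ cent u j := fun c =>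
    mem_cent.2 fun i hi => mem_cent.1 c.2 i (by omega)
  refine Nat.card_le_card_of_injective
    (fun p : ι × cent u (j + 1) => (⟨g p.1 * p.2, mul_mem (hg p.1) (hle p.2)⟩ : cent u j)) ?_
  rintro ⟨t, c⟩ ⟨t', c'⟩ e
  have e : g t * c = g t' * c' := congrArg Subtype.val e
  have key : ∀ t (c : cent u (j + 1)), g t * c * u j * (g t * c)⁻¹ = y t := by
    intro t c
    have := (mem_cent.1 c.2 j (by omega)).eq
    rw [hgy, mul_assoc (g t), ← this]
    group
  have ht : t = t' := hy (by rw [← key t c, ← key t' c', e])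
  subst ht
  rw [mul_right_inj] at e
  rw [Subtype.ext e]

variable {k : ℕ} {u : ℕ → G}

theorem band_orbit (hu : BraidSeq k u) {j d : ℕ} (h : j + d < k) :
    ∃ g ∈ cent u j, band u j d = g * u j * g⁻¹ := by
  induction d with
  | zero => exact ⟨1, one_mem _, by simp [band]⟩
  | succ d ih =>
    obtain ⟨g, hg, e⟩ := ih (by omega)
    refine ⟨u (j + d + 1) * g, mul_mem (mem_cent.2 fun i hi => hu.comm _ _ (by omega) (by omega)) hg,
      ?_⟩
    rw [band, e]
    group

theorem braidSeq_isConj (hu : BraidSeq k u) {i j : ℕ} (hi : i < k) (hj : j < k) :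
    ∃ g, u j = g * u i * g⁻¹ := by
  obtain ⟨g, hg⟩ := isConj_iff.1 (s_isConj hi hj)
  let f := lift k u (fun i j h1 h2 => hu.comm i j h1 h2) hu.braid
  have h := congrArg f hg
  rw [map_mul, map_mul, map_inv, show f (s k i) = u i from lift_s hi,
    show f (s k j) = u j from lift_s hj] at h
  exact ⟨f g, h.symm⟩

/-- In a group of order `(k+1)!`, generators of the braid group whose neighbours do not commute
are involutions. The proof is a count: the centraliser of the first `k - 2`
generators has order at most two and contains the last generator. -/
theorem artin_involution [Finite G] (hG : Nat.card G = (k + 1).factorial) (hk : 4 ≤ k)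
    (hu : BraidSeq k u) (hn : ∀ i, i + 1 < k → ¬ Commute (u i) (u (i + 1))) :
    ∀ i < k, u i * u i = 1 := by
  have h0 : (∑ j : Fin k, ((j : ℕ) + 1)) * Nat.card (cent u 1) ≤ (k + 1).factorial := by
    have := card_cent u 0 (ι := Σ j : Fin k, Fin (j + 1)) (fun p => band u p.2 (p.1 - p.2)) ?_ ?_
    · rw [← hG]
      refine le_trans ?_ (this.trans (Nat.card_le_card_of_injective _ Subtype.val_injective))
      simp
    · rintro ⟨a, b⟩ ⟨c, d⟩ e
      have e : band u b (a - b) = band u d (c - d) := e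
      obtain ⟨h1, h2⟩ := band_inj hu hn hk (by omega) (by omega) e
      have h3 : a = c := Fin.ext (by omega)
      subst h3
      rw [show b = d from Fin.ext h1]
    · rintro ⟨a, b⟩
      obtain ⟨g, -, hg⟩ := band_orbit hu (j := b) (d := a - b) (by omega)
      obtain ⟨g', hg'⟩ := braidSeq_isConj hu (i := 0) (j := b) (by omega) (by omega)
      refine ⟨g * g', mem_cent.2 fun i hi => by omega, ?_⟩
      change band u b (a - b) = _
      rw [hg, hg']
      group
  have h1 : 2 * (k - 1) * Nat.card (cent u 2) ≤ Nat.card (cent u 1) := by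
    have := card_cent u 1 (ι := Bool × Fin (k - 1))
      (fun p => if p.1 then band u 1 p.2 else band u 0 (p.2 + 1)) ?_ ?_
    · simpa using this
    · rintro ⟨a, b⟩ ⟨c, d⟩ e
      cases a <;> cases c <;> simp at e <;> have := band_inj hu hn hk (by omega) (by omega) e
      · rw [show b = d from Fin.ext (by omega)]
      · omega
      · omega
      · rw [show b = d from Fin.ext (by omega)]
    · rintro ⟨a, b⟩
      obtain ⟨g, hg, e⟩ := band_orbit hu (j := 1) (d := b) (by omega)
      cases a
      · refine ⟨(u 0)⁻¹ * g, mul_mem (inv_mem (mem_cent.2 fun i hi => ?_)) hg, ?_⟩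
        · rw [show i = 0 by omega]
        · simp only [Bool.false_eq_true, if_false]
          rw [band_succ hu (by omega), e]
          group
      · exact ⟨g, hg, by simpa using e⟩
  have hstep : ∀ j < k, (k - j) * Nat.card (cent u (j + 1)) ≤ Nat.card (cent u j) := by
    intro j hj
    have := card_cent u j (ι := Fin (k - j)) (fun p => band u j p) ?_ ?_
    · simpa using this
    · intro a b e
      exact Fin.ext (band_inj hu hn hk (by omega) (by omega) e).2
    · exact fun t => band_orbit hu (by omega)
  have h2 : Nat.card (cent u 2) ≤ (k - 2).factorial := by
    obtain ⟨m, rfl⟩ : ∃ m, k = m + 2 := ⟨k - 2, by omega⟩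
    have e1 : (∑ j : Fin (m + 2), ((j : ℕ) + 1)) * 2 = (m + 3) * (m + 2) := by
      rw [Fin.sum_univ_eq_sum_range (fun j => j + 1)]
      have := Finset.sum_range_id_mul_two (m + 3)
      rw [Finset.sum_range_succ'] at this
      simpa using this
    have e2 : (m + 2 + 1).factorial = (m + 3) * (m + 2) * (m + 1) * m.factorial := by
      rw [Nat.factorial_succ, Nat.factorial_succ, Nat.factorial_succ]; ring
    simp only [show m + 2 - 1 = m + 1 by omega, show m + 2 - 2 = m by omega] at *
    have e3 : (m + 3) * (m + 2) * (m + 1) * Nat.card (cent u 2) ≤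
        (m + 3) * (m + 2) * (m + 1) * m.factorial := by
      rw [← e2]
      calc _ = (∑ j : Fin (m + 2), ((j : ℕ) + 1)) * (2 * (m + 1) * Nat.card (cent u 2)) := by
            rw [← e1]; ring
        _ ≤ _ := (Nat.mul_le_mul_left _ h1).trans h0
    exact Nat.le_of_mul_le_mul_left e3 (by positivity)
  have h3 : ∀ j, 2 ≤ j → j ≤ k → Nat.card (cent u j) ≤ (k - j).factorial := by
    intro j hj
    induction j, hj using Nat.le_induction with
    | base => exact fun _ => h2
    | succ j hj ih =>
      intro h
      have h4 := (hstep j (by omega)).trans (ih (by omega))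
      rw [show k - j = k - (j + 1) + 1 by omega, Nat.factorial_succ] at h4
      exact Nat.le_of_mul_le_mul_left h4 (by omega)
  have h4 := h3 (k - 2) (by omega) (by omega)
  rw [show k - (k - 2) = 2 by omega] at h4
  have hmem : u (k - 1) ∈ cent u (k - 2) :=
    mem_cent.2 fun i hi => hu.comm _ _ (by omega) (by omega)
  have hlast : u (k - 1) * u (k - 1) = 1 := by
    by_contra hne
    have hne1 : u (k - 1) ≠ 1 := fun e => hne (by rw [e, one_mul])
    have : 3 ≤ Nat.card (cent u (k - 2)) := by
      have hinj : Function.Injective (![1, ⟨u (k - 1), hmem⟩, ⟨u (k - 1), hmem⟩ * ⟨u (k - 1), hmem⟩] :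
          Fin 3 → cent u (k - 2)) := by
        intro a b
        fin_cases a <;> fin_cases b <;> simp [Subtype.ext_iff, hne, hne1, Ne.symm hne, Ne.symm hne1]
      simpa using Nat.card_le_card_of_injective _ hinj
    simp [Nat.factorial] at h4
    omega
  intro i hi
  obtain ⟨g, hg⟩ := braidSeq_isConj hu (i := k - 1) (j := i) (by omega) hi
  rw [hg]
  calc _ = g * (u (k - 1) * u (k - 1)) * g⁻¹ := by group
    _ = 1 := by rw [hlast]; group

/-- If two neighbouring elements of a braid sequence commute, all elements coincide. -/
theorem braidSeq_const (hu : BraidSeq k u) {i : ℕ} (hi : i + 1 < k)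
    (h : Commute (u i) (u (i + 1))) : ∀ j < k, u j = u 0 := by
  have e : ∀ i, i + 1 < k → Commute (u i) (u (i + 1)) → u i = u (i + 1) := by
    intro i hi h
    have := hu.braid i hi
    rw [h.eq, mul_assoc, mul_assoc, mul_right_inj, mul_right_inj] at this
    exact this
  have up : ∀ j, i ≤ j → j + 1 < k → Commute (u j) (u (j + 1)) := by
    intro j hj
    induction j, hj using Nat.le_induction with
    | base => exact fun _ => h
    | succ j hj ih =>
      intro hk
      rw [← e j (by omega) (ih (by omega))]
      exact hu.comm _ _ (by omega) hk
  have down : ∀ d, d ≤ i → Commute (u (i - d)) (u (i - d + 1)) := by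
    intro d
    induction d with
    | zero => exact fun _ => h
    | succ d ih =>
      intro hd
      have h1 := e (i - d) (by omega) (ih (by omega))
      rw [show i - (d + 1) + 1 = i - d by omega, h1]
      exact hu.comm _ _ (by omega) (by omega)
  intro j
  induction j with
  | zero => exact fun _ => rfl
  | succ j ih =>
    intro hj
    rw [← ih (by omega)]
    refine (e j hj ?_).symm
    rcases Nat.le_total i j with h1 | h1
    · exact up j h1 hj
    · have := down (i - j) (by omega)
      rwa [show i - (i - j) = j by omega] at this

end count

end DG

namespace DG

/-! ### Permutations of the images of the generators -/

open Equiv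

/-- The crossings of each pair of strands are counted twice, once for each order. -/
theorem sum_cr {k : ℕ} (b : Br k) :
    ∑ i : Fin (k + 1), ∑ j : Fin (k + 1), cr b i j = 2 * (expo k b).toAdd := by
  have hre : ∀ (g : Br k) (c : ℕ → ℕ → ℤ), ∑ i : Fin (k + 1), ∑ j : Fin (k + 1),
      c ((perm k g)⁻¹ i) ((perm k g)⁻¹ j) = ∑ i : Fin (k + 1), ∑ j : Fin (k + 1), c i j := by
    intro g c
    rw [← Equiv.sum_comp (permF k g)]
    refine Finset.sum_congr rfl fun i _ => ?_
    rw [← Equiv.sum_comp (permF k g)]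
    refine Finset.sum_congr rfl fun j _ => ?_
    simp [permF_val]
  induction b using ind with
  | h1 => simp [cr_one]
  | hs i hi =>
    rw [cr_s hi, expo_s hi]
    have : ∀ a b : Fin (k + 1), E i (i + 1) a b =
        (if a = ⟨i, by omega⟩ then (if b = ⟨i + 1, by omega⟩ then 1 else 0) else 0) +
        (if a = ⟨i + 1, by omega⟩ then (if b = ⟨i, by omega⟩ then 1 else 0) else 0) := by
      intro a b
      simp only [E, Fin.ext_iff]
      split_ifs <;> omega
    simp [this, Finset.sum_add_distrib]
  | hm a b ha hb =>
    simp only [cr_mul, Finset.sum_add_distrib]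
    rw [hre, ha, hb, map_mul, toAdd_mul]
    ring
  | hi a ha =>
    have : ∑ i : Fin (k + 1), ∑ j : Fin (k + 1), cr (a⁻¹ * a) i j = 0 := by simp [cr_one]
    simp only [cr_mul, Finset.sum_add_distrib] at this
    rw [hre, ha] at this
    rw [map_inv, toAdd_inv]
    linarith

/-- An automorphism multiplies exponent sums by a sign. -/
theorem expo_aut {k : ℕ} (hk : 1 ≤ k) (φ : Br k ≃* Br k) :
    ∃ m : ℤ, IsUnit m ∧ ∀ b, (expo k (φ b)).toAdd = m * (expo k b).toAdd := by
  have key : ∀ b, (expo k (φ b)).toAdd = (expo k (φ (s k 0))).toAdd * (expo k b).toAdd := by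
    intro b
    induction b using ind with
    | h1 => simp
    | hs i hi =>
      obtain ⟨g, hg⟩ := isConj_iff.1 (s_isConj (k := k) (i := 0) (j := i) (by omega) hi)
      rw [← hg]
      simp [expo_s (show 0 < k by omega)]
    | hm a b ha hb => simp only [map_mul, toAdd_mul, ha, hb]; ring
    | hi a ha => simp only [map_inv, toAdd_inv, ha]; ring
  refine ⟨_, ?_, key⟩
  have := key (φ.symm (s k 0))
  rw [MulEquiv.apply_symm_apply, expo_s (by omega), toAdd_ofAdd] at this
  exact IsUnit.of_mul_eq_one _ this.symm

section
variable {k : ℕ} (φ : Br k ≃* Br k)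

/-- The permutations induced by the images of the generators. -/
def ug (i : ℕ) : Perm (Fin (k + 1)) := permF k (φ (s k i))

theorem ug_braidSeq : BraidSeq k (ug φ) where
  comm i j h _ := by
    rw [commute_iff_eq]
    simp only [ug, ← map_mul, s_comm h]
  braid i h := by simp only [ug, ← map_mul, s_braid h]

theorem permF_aut_surj (g : Perm (Fin (k + 1))) : ∃ b, permF k (φ b) = g := by
  obtain ⟨b, hb⟩ := permF_surj k g
  exact ⟨φ.symm b, by rw [MulEquiv.apply_symm_apply, hb]⟩

/-- The `ug φ i` are conjugate and generate the symmetric group, so they cannot all be even. -/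
theorem ug_sign (hk : 1 ≤ k) {i : ℕ} (hi : i < k) : Perm.sign (ug φ i) = -1 := by
  have hall : ∀ j < k, Perm.sign (ug φ j) = Perm.sign (ug φ i) := by
    intro j hj
    obtain ⟨g, hg⟩ := braidSeq_isConj (ug_braidSeq φ) hi hj
    rw [hg]
    rw [map_mul, map_mul, map_inv, mul_inv_cancel_comm]
  rcases Int.units_eq_one_or (Perm.sign (ug φ i)) with h | h
  · exfalso
    have : ∀ b, Perm.sign (permF k (φ b)) = 1 := by
      intro b
      induction b using ind with
      | h1 => simp
      | hs j hj => exact (hall j hj).trans h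
      | hm a b ha hb => simp [ha, hb]
      | hi a ha => simp [ha]
    obtain ⟨b, hb⟩ := permF_aut_surj φ (swap ⟨0, by omega⟩ ⟨1, by omega⟩)
    have h2 := this b
    rw [hb, Perm.sign_swap (by simp)] at h2
    exact absurd h2 (by decide)
  · exact h

theorem ug_ncomm {i : ℕ} (hi : i + 1 < k) : ¬ Commute (ug φ i) (ug φ (i + 1)) := by
  intro h
  have hconst := braidSeq_const (ug_braidSeq φ) hi h
  have : ∀ b, permF k (φ b) ∈ Subgroup.zpowers (ug φ 0) := by
    intro b
    induction b using ind with
    | h1 => simp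
    | hs j hj =>
      change ug φ j ∈ _
      rw [hconst j hj]
      exact Subgroup.mem_zpowers _
    | hm a b ha hb => rw [map_mul, map_mul]; exact mul_mem ha hb
    | hi a ha => rw [map_inv, map_inv]; exact inv_mem ha
  obtain ⟨a, ha⟩ := permF_aut_surj φ (swap ⟨0, by omega⟩ ⟨1, by omega⟩)
  obtain ⟨b, hb⟩ := permF_aut_surj φ (swap ⟨1, by omega⟩ ⟨2, by omega⟩)
  obtain ⟨x, hx⟩ := this a
  obtain ⟨y, hy⟩ := this b
  have h1 : permF k (φ a) * permF k (φ b) = permF k (φ b) * permF k (φ a) := by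
    rw [← hx, ← hy]
    exact (Commute.refl (ug φ 0)).zpow_zpow x y
  rw [ha, hb] at h1
  have h2 := congrArg (fun p => p ⟨0, by omega⟩) h1
  simp [swap_apply_def, Fin.ext_iff] at h2

end

theorem perm_three : ∀ p : Perm (Fin 3), Perm.sign p = -1 → p * p = 1 := by decide

set_option maxRecDepth 100000 in
theorem perm_four : ∀ p : Perm (Fin 4), Perm.sign p = -1 → p * p ≠ 1 →
    Function.Injective (fun j : Fin 4 => (p ^ (j : ℕ)) 0) ∧ p ^ 4 = 1 := by decide

end DG

namespace DG

/-! ### Identities for four strands -/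

open Equiv

theorem four_cycle_centraliser {p c : Perm (Fin 4)} (hp : Perm.sign p = -1) (hp2 : p * p ≠ 1)
    (h : Commute c p) : ∃ j < 4, c = p ^ j := by
  obtain ⟨hinj, h4⟩ := perm_four p hp hp2
  have hsurj := (Finite.injective_iff_surjective.1 hinj)
  obtain ⟨j, hj⟩ := hsurj (c 0)
  refine ⟨j, j.2, Equiv.ext fun y => ?_⟩
  obtain ⟨i, rfl⟩ := hsurj y
  have e1 : c ((p ^ (i : ℕ)) 0) = (p ^ (i : ℕ)) (c 0) := by
    rw [← Perm.mul_apply, ← Perm.mul_apply, (h.pow_right i).eq]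
  have e2 : (p ^ (j : ℕ)) ((p ^ (i : ℕ)) 0) = (p ^ (i : ℕ)) ((p ^ (j : ℕ)) 0) := by
    rw [← Perm.mul_apply, ← Perm.mul_apply, ← pow_add, ← pow_add, add_comm]
  change c ((p ^ (i : ℕ)) 0) = (p ^ (j : ℕ)) ((p ^ (i : ℕ)) 0)
  rw [e1, e2, ← hj]

/-- Linking numbers of a pure braid commuting with `g` are invariant under the permutation of
`g`. -/
theorem cr_invariant {k : ℕ} {g h : Br k} (hh : h ∈ Pure k) (hc : Commute g h)
    (a b : Fin (k + 1)) : cr h (permF k g a) (permF k g b) = cr h a b := by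
  have h1 := cr_conj g hh (permF k g a) (permF k g b)
  rw [hc.eq, mul_inv_cancel_right, permF_val, permF_val] at h1
  simpa [permF_val] using h1

theorem cr_invariant_pow {k : ℕ} {g h : Br k} (hh : h ∈ Pure k) (hc : Commute g h) (j : ℕ)
    (a b : Fin (k + 1)) : cr h ((permF k g ^ j) a : Fin (k + 1)) ((permF k g ^ j) b : Fin (k + 1))
      = cr h a b := by
  rw [← map_pow]
  exact cr_invariant hh (hc.pow_left j) a b

section delta
variable {G : Type*} [Group G] {a b c : G}

theorem delta_left (hab : a * b * a = b * a * b) (hbc : b * c * b = c * b * c)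
    (hac : a * c = c * a) : (a * b * c * a * b * a) * a = c * (a * b * c * a * b * a) := by
  calc (a * b * c * a * b * a) * a = a * b * c * (a * b * a) * a := by group
    _ = a * b * c * (b * a * b) * a := by rw [hab]
    _ = a * (b * c * b) * (a * b * a) := by group
    _ = a * (c * b * c) * (a * b * a) := by rw [hbc]
    _ = (a * c) * (b * c * a * b * a) := by group
    _ = (c * a) * (b * c * a * b * a) := by rw [hac]
    _ = _ := by group

theorem delta_right (hab : a * b * a = b * a * b) (hbc : b * c * b = c * b * c)
    (hac : a * c = c * a) : (a * b * c * a * b * a) * c = a * (a * b * c * a * b * a) := by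
  suffices b * c * a * b * a * c = a * b * c * a * b * a by
    calc _ = a * (b * c * a * b * a * c) := by group
      _ = _ := by rw [this]
  calc b * c * a * b * a * c = b * c * (a * b * a) * c := by group
    _ = b * c * (b * a * b) * c := by rw [hab]
    _ = (b * c * b) * (a * b * c) := by group
    _ = (c * b * c) * (a * b * c) := by rw [hbc]
    _ = c * b * (c * a) * (b * c) := by group
    _ = c * b * (a * c) * (b * c) := by rw [hac]
    _ = c * b * a * (c * b * c) := by group
    _ = c * b * a * (b * c * b) := by rw [hbc]
    _ = c * (b * a * b) * (c * b) := by group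
    _ = c * (a * b * a) * (c * b) := by rw [hab]
    _ = (c * a) * (b * (a * c) * b) := by group
    _ = (a * c) * (b * (c * a) * b) := by rw [hac]
    _ = a * (c * b * c) * (a * b) := by group
    _ = a * (b * c * b) * (a * b) := by rw [hbc]
    _ = a * b * c * (b * a * b) := by group
    _ = a * b * c * (a * b * a) := by rw [hab]
    _ = _ := by group

theorem conj_b_inv (hbc : b * c * b = c * b * c) : b * c⁻¹ * b⁻¹ = c⁻¹ * b⁻¹ * c := by
  have h4 : b⁻¹ * c⁻¹ * b⁻¹ = c⁻¹ * b⁻¹ * c⁻¹ := by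
    have := congrArg (·⁻¹) hbc
    simpa only [mul_inv_rev, ← mul_assoc] using this
  calc b * c⁻¹ * b⁻¹ = b * (c⁻¹ * b⁻¹ * c⁻¹) * c := by group
    _ = b * (b⁻¹ * c⁻¹ * b⁻¹) * c := by rw [h4]
    _ = _ := by group

theorem conj_b (hab : a * b * a = b * a * b) : a⁻¹ * b * a = b * a * b⁻¹ := by
  calc a⁻¹ * b * a = a⁻¹ * (b * a * b) * b⁻¹ := by group
    _ = a⁻¹ * (a * b * a) * b⁻¹ := by rw [hab]
    _ = _ := by group

theorem uv_a (hab : a * b * a = b * a * b) (hbc : b * c * b = c * b * c) :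
    a * (b * (a * c⁻¹) * b⁻¹) * a⁻¹ = (b * (a * c⁻¹) * b⁻¹) * (a * c⁻¹)⁻¹ := by
  calc a * (b * (a * c⁻¹) * b⁻¹) * a⁻¹ = (a * b * a) * c⁻¹ * b⁻¹ * a⁻¹ := by group
    _ = b * a * (b * c⁻¹ * b⁻¹) * a⁻¹ := by rw [hab]; group
    _ = b * a * (c⁻¹ * b⁻¹ * c) * a⁻¹ := by rw [conj_b_inv hbc]
    _ = _ := by group

theorem uv_b (hab : a * b * a = b * a * b) (hbc : b * c * b = c * b * c)
    (hac : a * c = c * a) :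
    b * (b * (a * c⁻¹) * b⁻¹) * b⁻¹ =
      (b * (a * c⁻¹) * b⁻¹) * (a * c⁻¹)⁻¹ * (b * (a * c⁻¹) * b⁻¹) := by
  have h2 : c⁻¹ * b⁻¹ * c⁻¹ = b⁻¹ * c⁻¹ * b⁻¹ := by
    have := congrArg (·⁻¹) hbc
    simp only [mul_inv_rev, ← mul_assoc] at this
    exact this.symm
  have h3 : c⁻¹ * a = a * c⁻¹ := by
    rw [inv_mul_eq_iff_eq_mul, ← mul_assoc, ← hac, mul_inv_cancel_right]
  symm
  calc _ = b * a * (c⁻¹ * b⁻¹ * c) * (a⁻¹ * b * a) * c⁻¹ * b⁻¹ := by group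
    _ = b * a * (b * c⁻¹ * b⁻¹) * (b * a * b⁻¹) * c⁻¹ * b⁻¹ := by
      rw [← conj_b_inv hbc, conj_b hab]
    _ = b * a * b * (c⁻¹ * a) * (b⁻¹ * c⁻¹ * b⁻¹) := by group
    _ = b * a * b * (a * c⁻¹) * (b⁻¹ * c⁻¹ * b⁻¹) := by rw [h3]
    _ = b * (a * b * a) * (c⁻¹ * b⁻¹ * c⁻¹) * b⁻¹ := by group
    _ = b * (b * a * b) * (b⁻¹ * c⁻¹ * b⁻¹) * b⁻¹ := by rw [hab, h2]
    _ = _ := by group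

theorem conj_closure {S : Set G} {x : G} (h : ∀ g ∈ S, x * g * x⁻¹ ∈ Subgroup.closure S) :
    ∀ m ∈ Subgroup.closure S, x * m * x⁻¹ ∈ Subgroup.closure S := by
  have : Subgroup.closure S ≤ (Subgroup.closure S).comap (MulAut.conj x).toMonoidHom := by
    rw [Subgroup.closure_le]
    intro g hg
    simpa using h g hg
  intro m hm
  simpa using this hm

/-- The subgroup generated by `a c⁻¹` and `b a c⁻¹ b⁻¹` is normalised by `a`, `b`, `c`. For
`a, b, c = σ₀, σ₁, σ₂` it is the kernel of the exceptional homomorphism `B₄ → B₃`. -/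
theorem uv_normal (hab : a * b * a = b * a * b) (hbc : b * c * b = c * b * c)
    (hac : a * c = c * a) {x : G} (hx : x = a ∨ x = b ∨ x = c) :
    (∀ m ∈ Subgroup.closure {a * c⁻¹, b * (a * c⁻¹) * b⁻¹},
      x * m * x⁻¹ ∈ Subgroup.closure {a * c⁻¹, b * (a * c⁻¹) * b⁻¹}) ∧
    (∀ m ∈ Subgroup.closure {a * c⁻¹, b * (a * c⁻¹) * b⁻¹},
      x⁻¹ * m * x ∈ Subgroup.closure {a * c⁻¹, b * (a * c⁻¹) * b⁻¹}) := by
  have h3 : c⁻¹ * a = a * c⁻¹ := by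
    rw [inv_mul_eq_iff_eq_mul, ← mul_assoc, ← hac, mul_inv_cancel_right]
  have ha1 : a * (a * c⁻¹) * a⁻¹ = a * c⁻¹ := by
    rw [mul_inv_eq_iff_eq_mul, mul_assoc, h3]
  have ha2 := uv_a hab hbc
  have hb2 := uv_b hab hbc hac
  have hc : c = (a * c⁻¹)⁻¹ * a := by group
  generalize hv : b * (a * c⁻¹) * b⁻¹ = v at *
  generalize hu : a * c⁻¹ = u at *
  have mu : u ∈ Subgroup.closure {u, v} := Subgroup.subset_closure (by simp)
  have mv : v ∈ Subgroup.closure {u, v} := Subgroup.subset_closure (by simp)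
  have Ha : ∀ m ∈ Subgroup.closure {u, v}, a * m * a⁻¹ ∈ Subgroup.closure {u, v} := by
    apply conj_closure
    rintro g (rfl | rfl)
    · rwa [ha1]
    · rw [ha2]; exact mul_mem mv (inv_mem mu)
  have Ha' : ∀ m ∈ Subgroup.closure {u, v}, a⁻¹ * m * a ∈ Subgroup.closure {u, v} := by
    have := conj_closure (S := {u, v}) (x := a⁻¹) ?_
    · simpa using this
    rintro g (rfl | rfl)
    · have : a⁻¹ * g * a⁻¹⁻¹ = g := by nth_rw 1 [← ha1]; group
      rwa [this]
    · have : a⁻¹ * g * a⁻¹⁻¹ = g * u := by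
        calc a⁻¹ * g * a⁻¹⁻¹ = a⁻¹ * (g * u⁻¹ * u) * a := by group
          _ = a⁻¹ * ((a * g * a⁻¹) * (a * u * a⁻¹)) * a := by rw [ha2, ha1]
          _ = _ := by group
      rw [this]; exact mul_mem mv mu
  rcases hx with rfl | rfl | rfl
  · exact ⟨Ha, Ha'⟩
  · refine ⟨conj_closure ?_, ?_⟩
    · rintro g (rfl | rfl)
      · rwa [hv]
      · rw [hb2]; exact mul_mem (mul_mem mv (inv_mem mu)) mv
    · have := conj_closure (S := {u, v}) (x := x⁻¹) ?_
      · simpa using this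
      rintro g (rfl | rfl)
      · have : x⁻¹ * g * x⁻¹⁻¹ = g * v⁻¹ * g := by
          calc x⁻¹ * g * x⁻¹⁻¹ = x⁻¹ * (v * (v * g⁻¹ * v)⁻¹ * v) * x := by group
            _ = x⁻¹ * ((x * g * x⁻¹) * (x * v * x⁻¹)⁻¹ * (x * g * x⁻¹)) * x := by rw [hb2, hv]
            _ = _ := by group
        rw [this]; exact mul_mem (mul_mem mu (inv_mem mv)) mu
      · have : x⁻¹ * g * x⁻¹⁻¹ = u := by rw [← hv]; group
        rwa [this]
  · constructor
    · intro m hm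
      have : x * m * x⁻¹ = u⁻¹ * (a * m * a⁻¹) * u := by rw [hc]; group
      rw [this]
      exact mul_mem (mul_mem (inv_mem mu) (Ha m hm)) mu
    · intro m hm
      have : x⁻¹ * m * x = a⁻¹ * (u * m * u⁻¹) * a := by rw [hc]; group
      rw [this]
      exact Ha' _ (mul_mem (mul_mem mu hm) (inv_mem mu))

end delta

theorem uv_normal_three (b : Br 3) :
    ∀ m ∈ Subgroup.closure {s 3 0 * (s 3 2)⁻¹, s 3 1 * (s 3 0 * (s 3 2)⁻¹) * (s 3 1)⁻¹},
      b * m * b⁻¹ ∈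
        Subgroup.closure {s 3 0 * (s 3 2)⁻¹, s 3 1 * (s 3 0 * (s 3 2)⁻¹) * (s 3 1)⁻¹} := by
  have H : ∀ i < 3, _ := fun i hi => uv_normal (s_braid (k := 3) (i := 0) (by omega))
    (s_braid (k := 3) (i := 1) (by omega)) (s_comm (k := 3) (i := 0) (j := 2) (by omega))
    (x := s 3 i) (by interval_cases i <;> simp)
  induction b using ind_left with
  | h1 => simp
  | hs i hi b ih =>
    intro m hm
    have := (H i hi).1 _ (ih m hm)
    convert this using 1
    group
  | hs' i hi b ih =>
    intro m hm
    have := (H i hi).2 _ (ih m hm)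
    convert this using 1
    group

end DG

namespace DG

/-! ### The pure braid group is characteristic -/

open Equiv

theorem cr_ext {k : ℕ} {g h : Br k} (H : ∀ a b : Fin (k + 1), cr g a b = cr h a b) :
    cr g = cr h := by
  funext a b
  by_cases ha : a ≤ k
  · by_cases hb : b ≤ k
    · exact H ⟨a, by omega⟩ ⟨b, by omega⟩
    · rw [cr_symm, cr_symm h, cr_out _ _ (by omega), cr_out _ _ (by omega)]
  · rw [cr_out _ _ (by omega), cr_out _ _ (by omega)]

/-- A four-cycle has one orbit of size four and one of size two on the pairs of strands; the linking
numbers are constant on orbits and even. -/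
theorem cr_sum_four {g y : Br 3} (hy : y ∈ Pure 3) (hc : Commute g y)
    (hp : Perm.sign (permF 3 g) = -1) (hp2 : permF 3 g * permF 3 g ≠ 1) :
    (8 : ℤ) ∣ ∑ i : Fin 4, ∑ j : Fin 4, cr y i j := by
  obtain ⟨hinj, h4⟩ := perm_four _ hp hp2
  have hbij : Function.Bijective (fun j : Fin 4 => (permF 3 g ^ (j : ℕ)) 0) :=
    ⟨hinj, Finite.injective_iff_surjective.1 hinj⟩
  let e := Equiv.ofBijective _ hbij
  have inv := cr_invariant hy hc
  rw [← Equiv.sum_comp e]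
  simp only [← Equiv.sum_comp e (fun j => cr y _ j)]
  simp only [Fin.sum_univ_four]
  have e0 : e 0 = 0 := rfl
  have e1 : e 1 = permF 3 g (e 0) := rfl
  have e2 : e 2 = permF 3 g (e 1) := rfl
  have e3 : e 3 = permF 3 g (e 2) := rfl
  have e4 : e 0 = permF 3 g (e 3) := by
    have := congrArg (fun q => q 0) h4
    exact this.symm
  have c12 : cr y (e 1) (e 2) = cr y (e 0) (e 1) := by
    rw [e2]; nth_rw 1 [e1]; rw [inv]
  have c23 : cr y (e 2) (e 3) = cr y (e 1) (e 2) := by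
    rw [e3]; nth_rw 1 [e2]; rw [inv]
  have c30 : cr y (e 3) (e 0) = cr y (e 2) (e 3) := by
    rw [e4]; nth_rw 1 [e3]; rw [inv]
  have c13 : cr y (e 1) (e 3) = cr y (e 0) (e 2) := by
    rw [e3]; nth_rw 1 [e1]; rw [inv]
  rw [cr_symm y (e 1) (e 0), cr_symm y (e 2) (e 0), cr_symm y (e 2) (e 1), cr_symm y (e 3) (e 1),
    cr_symm y (e 3) (e 2), cr_symm y (e 0) (e 3), c30, c23, c12, c13]
  simp only [cr_diag]
  obtain ⟨u, hu⟩ := cr_even hy (e 0) (e 2)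
  rw [hu]
  exact ⟨cr y (e 0) (e 1) + u, by ring⟩

/-- The pure braid `φ (s 3 0 * s 3 2)` would have exponent sum `± 2`, which is not divisible by `4`. -/
theorem four_case_inv (φ : Br 3 ≃* Br 3) (hp2 : ug φ 0 * ug φ 0 ≠ 1)
    (h : ug φ 2 = (ug φ 0)⁻¹) : False := by
  have hy : φ (s 3 0 * s 3 2) ∈ Pure 3 := by
    rw [mem_Pure', map_mul, map_mul]
    change ug φ 0 * ug φ 2 = 1
    rw [h, mul_inv_cancel]
  have hc : Commute (φ (s 3 0)) (φ (s 3 0 * s 3 2)) :=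
    ((Commute.refl _).mul_right (s_comm' (by omega))).map φ
  obtain ⟨c, hd⟩ := cr_sum_four hy hc (ug_sign φ (by omega) (by omega)) hp2
  have hs := sum_cr (φ (s 3 0 * s 3 2))
  obtain ⟨m, hm, he⟩ := expo_aut (by omega) φ
  rw [he, map_mul (expo 3), expo_s (by omega), expo_s (by omega)] at hs
  have := hd.symm.trans hs
  rcases Int.isUnit_iff.1 hm with rfl | rfl
  · simp at this; omega
  · simp at this; omega

/-- The half twist exchanges `s 3 0` and `s 3 2`, and its image commutes with a four-cycle, so the
linking numbers of `φ (s 3 0 * (s 3 2)⁻¹)` vanish and `fg_normal_pure` applies. -/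
theorem four_case_same (φ : Br 3 ≃* Br 3) (hp2 : ug φ 0 * ug φ 0 ≠ 1)
    (h : ug φ 2 = ug φ 0) : False := by
  have hab := s_braid (k := 3) (i := 0) (by omega)
  have hbc := s_braid (k := 3) (i := 1) (by omega)
  have hac := s_comm (k := 3) (i := 0) (j := 2) (by omega)
  simp only [zero_add, Nat.reduceAdd] at hab hbc hac
  set a := s 3 0
  set b := s 3 1
  set c := s 3 2
  set e := φ (a * c⁻¹) with he
  have hy : e ∈ Pure 3 := by
    rw [mem_Pure', he, map_mul, map_mul, map_inv, map_inv]
    change ug φ 0 * (ug φ 2)⁻¹ = 1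
    rw [h, mul_inv_cancel]
  have hc : Commute (φ a) e :=
    ((Commute.refl _).mul_right (Commute.inv_right hac)).map φ
  have hdl := delta_left hab hbc hac
  have hdr := delta_right hab hbc hac
  generalize hg : a * b * c * a * b * a = g at hdl hdr
  have hcomm : Commute (permF 3 (φ g)) (ug φ 0) := by
    have := congrArg (fun t => permF 3 (φ t)) hdl
    simp only [map_mul] at this
    change _ * ug φ 0 = ug φ 2 * _ at this
    rw [h] at this
    exact this
  obtain ⟨j, -, hj⟩ := four_cycle_centraliser (ug_sign φ (by omega) (by omega)) hp2 hcomm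
  have hconj : φ g * e * (φ g)⁻¹ = e⁻¹ := by
    rw [he, ← map_inv, ← map_inv, ← map_mul, ← map_mul]
    congr 1
    have hac' : c * a⁻¹ = a⁻¹ * c := by
      rw [eq_inv_mul_iff_mul_eq, ← mul_assoc, hac, mul_inv_cancel_right]
    calc g * (a * c⁻¹) * g⁻¹ = (g * a) * (g * c)⁻¹ := by group
      _ = c * a⁻¹ := by rw [hdl, hdr]; group
      _ = _ := by group
  have hcr : cr e = 0 := by
    rw [← cr_one (k := 3)]
    apply cr_ext
    intro x y
    have h1 := cr_conj (φ g) hy (permF 3 (φ g) x) (permF 3 (φ g) y)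
    rw [hconj, cr_inv_pure hy, permF_val, permF_val] at h1
    simp only [Perm.coe_inv, Equiv.symm_apply_apply, Pi.neg_apply] at h1
    have h2 := cr_invariant_pow hy hc j x y
    rw [show permF 3 (φ a) = ug φ 0 from rfl, ← hj, permF_val, permF_val] at h2
    rw [cr_one]
    change _ = (0 : ℤ)
    omega
  set K := Subgroup.closure {a * c⁻¹, b * (a * c⁻¹) * b⁻¹} with hK
  have hKp : ∀ m ∈ K, φ m ∈ Pure 3 ∧ cr (φ m) = 0 := by
    intro m hm
    induction hm using Subgroup.closure_induction with
    | mem x hx =>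
      rcases hx with rfl | rfl
      · exact ⟨hy, hcr⟩
      · rw [map_mul, map_mul, map_inv, ← he]
        refine ⟨(inferInstance : (Pure 3).Normal).conj_mem _ hy _, ?_⟩
        funext x y
        rw [cr_conj _ hy, hcr]
        rfl
    | one => simp [cr_one, one_mem]
    | mul x y _ _ h1 h2 =>
      rw [map_mul]
      exact ⟨mul_mem h1.1 h2.1, by rw [cr_mul_pure h1.1, h1.2, h2.2, add_zero]⟩
    | inv x _ h1 =>
      rw [map_inv]
      exact ⟨inv_mem h1.1, by rw [cr_inv_pure h1.1, h1.2, neg_zero]⟩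
  have hbot := fg_normal_pure 3 (K.map φ.toMonoidHom) ?_ ?_ ?_ ?_
  · have h1 : e ∈ K.map φ.toMonoidHom :=
      ⟨a * c⁻¹, Subgroup.subset_closure (by simp), rfl⟩
    rw [hbot, Subgroup.mem_bot, he, map_eq_one_iff φ φ.injective, mul_inv_eq_one] at h1
    have h2 := congrArg (fun t => perm 3 t 0) h1
    simp only [a, c] at h2
    rw [perm_s (by omega), perm_s (by omega)] at h2
    simp [swap_apply_def] at h2
  · exact fg_map _ ((Subgroup.fg_iff _).2 ⟨_, hK.symm, by simp⟩)
  · rintro _ ⟨m, hm, rfl⟩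
    exact (hKp m hm).1
  · rintro _ ⟨m, hm, rfl⟩ g -
    refine ⟨φ.symm g * m * (φ.symm g)⁻¹, uv_normal_three _ m hm, ?_⟩
    simp
  · rintro _ ⟨m, hm, rfl⟩
    exact (hKp m hm).2

theorem ug_sq {k : ℕ} (hk : 1 ≤ k) (φ : Br k ≃* Br k) : ∀ i < k, ug φ i * ug φ i = 1 := by
  by_cases h4 : 4 ≤ k
  · exact artin_involution (by simp [Nat.card_eq_fintype_card, Fintype.card_perm]) h4
      (ug_braidSeq φ) (fun i hi => ug_ncomm φ hi)
  obtain rfl | rfl | rfl : k = 1 ∨ k = 2 ∨ k = 3 := by omega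
  · intro i _
    generalize ug φ i = p
    revert p
    decide
  · intro i hi
    exact perm_three _ (ug_sign φ (by omega) hi)
  · intro i hi
    obtain ⟨g, hg⟩ := braidSeq_isConj (ug_braidSeq φ) (i := 0) (by omega) hi
    suffices h0 : ug φ 0 * ug φ 0 = 1 by
      rw [hg]
      calc g * ug φ 0 * g⁻¹ * (g * ug φ 0 * g⁻¹) = g * (ug φ 0 * ug φ 0) * g⁻¹ := by group
        _ = 1 := by rw [h0]; group
    by_contra hp2
    have hs := ug_sign φ (by omega) (i := 0) (by omega)
    have hs2 := ug_sign φ (by omega) (i := 2) (by omega)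
    obtain ⟨j, hj, e⟩ := four_cycle_centraliser (c := ug φ 2) hs hp2
      ((ug_braidSeq φ).comm 0 2 (by omega) (by omega)).symm
    obtain ⟨-, h4⟩ := perm_four _ hs hp2
    interval_cases j
    · rw [e, pow_zero, map_one] at hs2; exact absurd hs2 (by decide)
    · exact four_case_same φ hp2 (by simpa using e)
    · rw [e, map_pow, hs] at hs2; exact absurd hs2 (by decide)
    · refine four_case_inv φ hp2 ?_
      rw [e, eq_inv_iff_mul_eq_one, ← h4, pow_succ _ 3]

/-- The pure braid group is characteristic. -/
theorem aut_pure {k : ℕ} (hk : 1 ≤ k) (φ : Br k ≃* Br k) {p : Br k} (hp : p ∈ Pure k) :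
    φ p ∈ Pure k :=
  mem_Pure'.2 (kill_sq ((permF k).comp φ.toMonoidHom) (ug_sq hk φ) hp)

end DG

namespace DG

/-! ### Traces on linking numbers -/

open Equiv

/-- The pure generator `A_{ij}` for an ordered pair of distinct strands, and `1` on the diagonal. -/
noncomputable def gen {k : ℕ} (c : Fin (k + 1) × Fin (k + 1)) : Br k :=
  if c.1 < c.2 then A k c.1 c.2 else if c.2 < c.1 then A k c.2 c.1 else 1

theorem gen_pure {k : ℕ} (c : Fin (k + 1) × Fin (k + 1)) : gen c ∈ Pure k := by
  obtain ⟨c, d⟩ := c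
  unfold gen
  split_ifs with h1 h2
  · exact A_pure (by simpa using h1) (by simp; omega)
  · exact A_pure (by simpa using h2) (by simp; omega)
  · exact one_mem _

theorem cr_gen {k : ℕ} (c : Fin (k + 1) × Fin (k + 1)) (a b : ℕ) :
    cr (gen c) a b = if c.1 = c.2 then 0 else 2 * E c.1 c.2 a b := by
  obtain ⟨c, d⟩ := c
  unfold gen
  split_ifs with h1 h2 h3 h4 h5
  · simp at h1 h2; omega
  · exact cr_A (by simpa using h1) (by simp; omega) a b
  · simp at h3 h4; omega
  · rw [E_symm]; exact cr_A (by simpa using h3) (by simp; omega) a b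
  · simp [cr_one]
  · simp at h1 h3 h5; omega

/-- The linking numbers of a braid as a rational vector. -/
def lk {k : ℕ} (p : Br k) (a : Fin (k + 1) × Fin (k + 1)) : ℚ := cr p a.1 a.2

/-- The action of an automorphism on linking numbers. The factor `1 / 4` accounts for
`cr A_{ij} = 2` and for each unordered pair being listed twice. -/
noncomputable def mat {k : ℕ} (φ : Br k ≃* Br k) :
    Matrix (Fin (k + 1) × Fin (k + 1)) (Fin (k + 1) × Fin (k + 1)) ℚ :=
  Matrix.of fun a c => lk (φ (gen c)) a / 4

theorem mat_mulVec {k : ℕ} (hk : 1 ≤ k) (φ : Br k ≃* Br k) {p : Br k} (hp : p ∈ Pure k) :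
    Matrix.mulVec (mat φ) (lk p) = lk (φ p) := by
  have hmul : ∀ {p : Br k} (_ : p ∈ Pure k) (q), lk (p * q) = lk p + lk q := by
    intro p hp q
    funext a
    simp [lk, cr_mul_pure hp]
  have hinv : ∀ {p : Br k} (_ : p ∈ Pure k), lk (p⁻¹) = - lk p := by
    intro p hp
    funext a
    simp [lk, cr_inv_pure hp]
  have h1 : lk (1 : Br k) = 0 := by funext a; simp [lk, cr_one]
  refine pure_ind (p := fun p => Matrix.mulVec (mat φ) (lk p) = lk (φ p)) ?_ ?_ ?_ ?_ hp
  · simp [h1]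
  · intro i j hij hj
    have e : lk (A k i j) = Pi.single (⟨i, by omega⟩, ⟨j, by omega⟩) 2 +
        Pi.single (⟨j, by omega⟩, ⟨i, by omega⟩) 2 := by
      funext ⟨a, b⟩
      simp only [lk, cr_A hij hj, E, Pi.add_apply, Pi.single_apply, Prod.mk.injEq, Fin.ext_iff]
      split_ifs <;> first | (exfalso; omega) | norm_num
    have g1 : gen (k := k) (⟨i, by omega⟩, ⟨j, by omega⟩) = A k i j := by
      simp [gen, hij]
    have g2 : gen (k := k) (⟨j, by omega⟩, ⟨i, by omega⟩) = A k i j := by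
      simp [gen, hij, hij.le]
    funext a
    rw [e, Matrix.mulVec_add, Matrix.mulVec_single, Matrix.mulVec_single]
    simp only [mat, Pi.add_apply, Pi.smul_apply, Matrix.col_apply, Matrix.of_apply, g1, g2]
    simp
    ring
  · intro a ha b hb iha ihb
    rw [hmul ha, Matrix.mulVec_add, iha, ihb, map_mul, hmul (aut_pure hk φ ha)]
  · intro a ha iha
    rw [hinv ha, Matrix.mulVec_neg, iha, map_inv, hinv (aut_pure hk φ ha)]

/-- The action on linking numbers is multiplicative in the automorphism. -/
theorem mat_mul {k : ℕ} (hk : 1 ≤ k) (φ ψ : MulAut (Br k)) : mat φ * mat ψ = mat (φ * ψ) := by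
  ext a c
  have := congrFun (mat_mulVec hk φ (aut_pure hk ψ (gen_pure c))) a
  simp only [Matrix.mulVec, dotProduct] at this
  rw [Matrix.mul_apply]
  simp only [mat, Matrix.of_apply] at this ⊢
  rw [MulAut.mul_apply, ← this, Finset.sum_div]
  refine Finset.sum_congr rfl fun b _ => ?_
  ring

/-- The trace counts the pairs of strands preserved by the permutation of `g`. -/
theorem trace_mat_conj {k : ℕ} (g : Br k) : (mat (MulAut.conj g)).trace =
    (∑ a : Fin (k + 1), ∑ b : Fin (k + 1), if a = b then 0 else
      E a b ((permF k g)⁻¹ a : Fin (k + 1)) ((permF k g)⁻¹ b : Fin (k + 1)) : ℤ) / 2 := by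
  rw [Matrix.trace, Fintype.sum_prod_type]
  push_cast
  rw [Finset.sum_div]
  refine Finset.sum_congr rfl fun a _ => ?_
  rw [Finset.sum_div]
  refine Finset.sum_congr rfl fun b _ => ?_
  have hv : ∀ j : Fin (k + 1), (perm k g)⁻¹ j = ((permF k g)⁻¹ j : Fin (k + 1)) := by
    intro j
    rw [← map_inv, ← map_inv, permF_val]
  simp only [Matrix.diag, mat, Matrix.of_apply, MulAut.conj_apply, lk, cr_conj g (gen_pure _),
    cr_gen, hv]
  split_ifs
  · simp
  · push_cast; ring

theorem trace_aut {k : ℕ} (hk : 1 ≤ k) (φ : MulAut (Br k)) (g : Br k) :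
    (mat (MulAut.conj (φ g))).trace = (mat (MulAut.conj g)).trace := by
  have : MulAut.conj (φ g) = φ * MulAut.conj g * φ⁻¹ := by
    ext x
    simp [MulAut.conj_apply]
  rw [this, ← mat_mul hk, Matrix.trace_mul_comm, mat_mul hk]
  congr 2
  group

/-- Twice the number of pairs preserved by an involution, in terms of the size of its support. -/
theorem sum_E {k : ℕ} {t : Perm (Fin (k + 1))} (ht : t * t = 1) :
    ((∑ a : Fin (k + 1), ∑ b : Fin (k + 1), if a = b then 0 else
      E a b (t⁻¹ a : Fin (k + 1)) (t⁻¹ b : Fin (k + 1)) : ℤ)) =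
      ((k : ℤ) + 1 - t.support.card) * ((k : ℤ) + 1 - t.support.card - 1) + t.support.card := by
  have hti : t⁻¹ = t := inv_eq_of_mul_eq_one_right ht
  have htt : ∀ a, t (t a) = a := fun a => by rw [← Perm.mul_apply, ht, Perm.one_apply]
  rw [hti]
  have hs : ((k : ℤ) + 1 - t.support.card) = ∑ a : Fin (k + 1), if t a = a then 1 else 0 := by
    have := Finset.card_compl t.support
    have h2 := Finset.card_le_univ t.support
    rw [Fintype.card_fin] at this h2
    rw [Finset.sum_boole]
    have e : t.supportᶜ = Finset.univ.filter (fun a => t a = a) := by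
      ext a; simp [Perm.mem_support]
    rw [← e]
    omega
  have hs2 : (t.support.card : ℤ) = ∑ a : Fin (k + 1), if t a = a then 0 else 1 := by
    have : ∑ a : Fin (k + 1), (if t a = a then (0 : ℤ) else 1) =
      ∑ a : Fin (k + 1), (1 - if t a = a then (1 : ℤ) else 0) := by
      refine Finset.sum_congr rfl fun a _ => ?_
      split_ifs <;> simp
    rw [this, Finset.sum_sub_distrib, ← hs]
    simp
  have hterm : ∀ a b : Fin (k + 1), (if a = b then (0 : ℤ) else E a b (t a : Fin (k + 1))
      (t b : Fin (k + 1))) = (if t a = a then 1 else 0) * (if t b = b then 1 else 0) -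
        (if a = b then (if t a = a then 1 else 0) else 0) +
        (if b = t a then (if t a = a then 0 else 1) else 0) := by
    intro a b
    simp only [E, ← Fin.ext_iff]
    by_cases hab : a = b
    · subst hab
      by_cases h : t a = a
      · simp [h]
      · simp [h, Ne.symm h]
    · by_cases h : t a = a
      · by_cases h' : t b = b
        · simp [h, h', hab, Ne.symm hab]
        · simp [h, h', hab, Ne.symm hab]
      · by_cases h' : b = t a
        · subst h'
          simp [htt, h, Ne.symm h]
        · simp [h, hab, h', Ne.symm h']
  simp only [hterm, Finset.sum_add_distrib, Finset.sum_sub_distrib, Finset.sum_ite_eq,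
    Finset.sum_ite_eq',     Finset.mem_univ, if_true, ← Finset.mul_sum, ← Finset.sum_mul, ← hs, ← hs2]
  ring

theorem perm_four' : ∀ p : Perm (Fin 4), Perm.sign p = -1 → p * p = 1 → p.support.card = 2 := by
  decide

/-- By invariance of the trace, the support of `ug φ i` has size `2` or `2 k - 2`, and the second is
excluded by its bound `k + 1` unless `k ≤ 3`. -/
theorem ug_swap {k : ℕ} (hk : 1 ≤ k) (φ : Br k ≃* Br k) {i : ℕ} (hi : i < k) :
    (ug φ i).IsSwap := by
  have hsq := ug_sq hk φ i hi
  have hsign := ug_sign φ hk hi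
  rw [← Perm.card_support_eq_two]
  have h1 := trace_aut hk φ (s k i)
  rw [trace_mat_conj, trace_mat_conj] at h1
  change ((∑ a : Fin (k + 1), ∑ b : Fin (k + 1), if a = b then 0 else
      E a b ((ug φ i)⁻¹ a : Fin (k + 1)) ((ug φ i)⁻¹ b : Fin (k + 1)) : ℤ) : ℚ) / 2 = _ at h1
  have h2 : permF k (s k i) = _ := permF_s ⟨i, hi⟩
  have hne : Fin.castSucc (⟨i, hi⟩ : Fin k) ≠ Fin.succ ⟨i, hi⟩ := by simp [Fin.ext_iff]
  rw [h2, sum_E hsq, sum_E (swap_mul_self _ _), Perm.card_support_swap hne] at h1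
  have hle := Finset.card_le_univ (ug φ i).support
  rw [Fintype.card_fin] at hle
  by_cases h3 : k = 3
  · subst h3
    exact perm_four' _ hsign hsq
  have hpos : (ug φ i).support.card ≠ 0 := by
    rw [Ne, Finset.card_eq_zero, Perm.support_eq_empty_iff]
    intro h
    rw [h, map_one] at hsign
    exact absurd hsign (by decide)
  generalize (ug φ i).support.card = t at *
  have h4 : ((k : ℤ) + 1 - t) * ((k : ℤ) + 1 - t - 1) + t =
    ((k : ℤ) + 1 - (2 : ℕ)) * ((k : ℤ) + 1 - (2 : ℕ) - 1) + (2 : ℕ) := by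
    have := mul_right_cancel₀ (by norm_num) ((div_eq_div_iff (by norm_num) (by norm_num)).1 h1)
    exact_mod_cast this
  have h5 : ((t : ℤ) - 2) * (t + 4 - 2 * (k + 1)) = 0 := by push_cast at h4; linarith
  rcases mul_eq_zero.1 h5 with h | h <;> omega

end DG

namespace DG

/-! ### Normalising the permutations -/

open Equiv

theorem aut_pure_iff {k : ℕ} (hk : 1 ≤ k) (φ : Br k ≃* Br k) {p : Br k} :
    φ p ∈ Pure k ↔ p ∈ Pure k :=
  ⟨fun h => by simpa using aut_pure hk φ.symm h, aut_pure hk φ⟩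

theorem ug_injective {k : ℕ} (hk : 1 ≤ k) (φ : Br k ≃* Br k) {i j : ℕ} (hi : i < k) (hj : j < k)
    (h : ug φ i = ug φ j) : i = j := by
  have h1 : φ (s k i * (s k j)⁻¹) ∈ Pure k := by
    rw [mem_Pure']
    simp only [map_mul, map_inv]
    exact mul_inv_eq_one.2 h
  rw [aut_pure_iff hk, mem_Pure, map_mul, map_inv, perm_s hi, perm_s hj, mul_inv_eq_one] at h1
  have h2 := congrArg (fun p => p i) h1
  have h3 := congrArg (fun p => p j) h1
  simp only [swap_apply_def] at h2 h3
  split_ifs at h2 h3 <;> omega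

section
variable {α : Type*} [DecidableEq α]

theorem swap_eq {p : Perm α} (hp : p.IsSwap) {x : α} (hx : p x ≠ x) : p = swap x (p x) := by
  obtain ⟨a, b, hab, rfl⟩ := hp
  by_cases h1 : x = a
  · subst h1; simp
  by_cases h2 : x = b
  · subst h2; simp [swap_comm]
  exact absurd (swap_apply_of_ne_of_ne h1 h2) hx

theorem swap_disjoint {p q : Perm α} (hp : p.IsSwap) (hq : q.IsSwap) (hc : Commute p q)
    (hne : p ≠ q) : p.Disjoint q := by
  intro x
  by_contra! h
  obtain ⟨h1, h2⟩ := h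
  by_cases h3 : p x = q x
  · exact hne (by rw [swap_eq hp h1, h3, ← swap_eq hq h2])
  · have e1 : p (q x) = q x := by
      rw [swap_eq hp h1]; exact swap_apply_of_ne_of_ne h2 (Ne.symm h3)
    have e2 : q (p x) = p x := by
      rw [swap_eq hq h2]; exact swap_apply_of_ne_of_ne h1 h3
    have := congrArg (fun r => r x) hc.eq
    simp only [Perm.mul_apply, e1, e2] at this
    exact h3 this.symm

end

/-- The chain of points joined by a sequence of transpositions. -/
def chain {α : Type*} (t : ℕ → Perm α) (a : α) : ℕ → α
  | 0 => a
  | i + 1 => t i (chain t a i)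

/-- Distinct transpositions satisfying the braid relations, with noncommuting neighbours, are
simultaneously conjugate to the adjacent transpositions. -/
theorem swap_chain {k : ℕ} (hk : 1 ≤ k) {t : ℕ → Perm (Fin (k + 1))} (ht : BraidSeq k t)
    (hs : ∀ i < k, (t i).IsSwap) (hinj : ∀ i j, i < k → j < k → t i = t j → i = j)
    (hn : ∀ i, i + 1 < k → ¬ Commute (t i) (t (i + 1))) :
    ∃ g : Perm (Fin (k + 1)), ∀ i : Fin k, t i = g * swap i.castSucc i.succ * g⁻¹ := by
  have hdisj : ∀ i j, i + 1 < j → j < k → (t i).Disjoint (t j) := fun i j hij hj =>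
    swap_disjoint (hs i (by omega)) (hs j hj) (ht.comm i j hij hj) fun h => by
      have := hinj i j (by omega) hj h
      omega
  obtain ⟨a, ha, ha'⟩ : ∃ a, t 0 a ≠ a ∧ (1 < k → t 1 a = a) := by
    obtain ⟨a, b, hab, h⟩ := hs 0 hk
    by_contra! H
    have h1 := H a (by rw [h]; simpa using hab.symm)
    have h2 := H b (by rw [h]; simpa using hab)
    refine hn 0 h1.1 ?_
    have : t 1 = t 0 := by
      have e := swap_eq (hs 1 h1.1) h1.2
      have hb : t 1 a = b := by
        by_contra hb
        apply h2.2
        rw [e]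
        exact swap_apply_of_ne_of_ne hab.symm (Ne.symm hb)
      rw [e, hb, h]
    simp [this]
  set c := chain t a
  have hc : ∀ i, c (i + 1) = t i (c i) := fun i => rfl
  have P : ∀ i < k, t i (c i) ≠ c i ∧ (i + 1 < k → t (i + 1) (c i) = c i) := by
    intro i
    induction i with
    | zero => exact fun _ => ⟨ha, ha'⟩
    | succ i ih =>
      intro hi
      obtain ⟨h1, h2⟩ := ih (by omega)
      have e := swap_eq (hs i (by omega)) h1
      constructor
      · intro h
        refine hn i hi (Perm.Disjoint.commute fun x => ?_)
        by_cases hx : x = c i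
        · right; rw [hx, h2 hi]
        by_cases hx' : x = c (i + 1)
        · right; rw [hx', h]
        · left; rw [e]; exact swap_apply_of_ne_of_ne hx hx'
      · intro hi2
        rcases hdisj i (i + 1 + 1) (by omega) hi2 (c (i + 1)) with h | h
        · exfalso
          rw [hc] at h
          exact h1 ((t i).injective h)
        · exact h
  have hm : ∀ i < k, t i (c (i + 1)) ≠ c (i + 1) := by
    intro i hi h
    obtain ⟨h1, -⟩ := P i hi
    exact h1 ((t i).injective h)
  have cinj : ∀ i j, i < j → j ≤ k → c i ≠ c j := by
    intro i j hij hj h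
    obtain ⟨j, rfl⟩ : ∃ l, j = l + 1 := ⟨j - 1, by omega⟩
    have h1 := hm j hj
    rw [← h] at h1
    rcases Nat.lt_trichotomy j (i + 1) with h2 | h2 | h2
    · obtain rfl : j = i := by omega
      exact (P j hj).1 h.symm
    · subst h2
      exact h1 ((P i (by omega)).2 hj)
    · rcases hdisj i j h2 hj (c i) with h3 | h3
      · exact (P i (by omega)).1 h3
      · exact h1 h3
  have hbij : Function.Bijective (fun i : Fin (k + 1) => c i) := by
    rw [← Finite.injective_iff_bijective]
    intro i j h
    by_contra hne
    rcases lt_or_gt_of_ne hne with hlt | hlt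
    · exact cinj i j hlt (by omega) h
    · exact cinj j i hlt (by omega) h.symm
  refine ⟨Equiv.ofBijective _ hbij, fun i => ?_⟩
  rw [← Equiv.swap_apply_apply]
  simp only [Equiv.ofBijective_apply, Fin.val_castSucc, Fin.val_succ]
  rw [hc]
  exact swap_eq (hs i i.2) (P i i.2).1

/-- Every automorphism induces an inner automorphism of the symmetric group. -/
theorem perm_conj {k : ℕ} (hk : 1 ≤ k) (φ : Br k ≃* Br k) :
    ∃ w : Br k, ∀ b, perm k (φ b) = perm k (w * b * w⁻¹) := by
  obtain ⟨g, hg⟩ := swap_chain hk (ug_braidSeq φ) (fun i hi => ug_swap hk φ hi)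
    (fun i j hi hj => ug_injective hk φ hi hj) (fun i hi => ug_ncomm φ hi)
  obtain ⟨w, rfl⟩ := permF_surj k g
  refine ⟨w, fun b => permF_eq_iff.1 ?_⟩
  have : (permF k).comp φ.toMonoidHom = (permF k).comp (MulAut.conj w).toMonoidHom := by
    apply hom_ext
    intro i hi
    have h := hg ⟨i, hi⟩
    rw [← permF_s] at h
    simpa [MulAut.conj_apply, ug] using h
  simpa [MulAut.conj_apply] using DFunLike.congr_fun this b

end DG

namespace DG

/-! ### The action on linking numbers -/

open Equiv

/-- The total linking number of the strand `a` with all others. -/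
def R {k : ℕ} (p : Br k) (a : ℕ) : ℤ := ∑ d : Fin (k + 1), cr p a d

section R
variable {k : ℕ}

theorem R_one (a : ℕ) : R (1 : Br k) a = 0 := by simp [R, cr_one]

theorem R_mul {p : Br k} (hp : p ∈ Pure k) (q : Br k) (a : ℕ) : R (p * q) a = R p a + R q a := by
  simp [R, cr_mul_pure hp, Finset.sum_add_distrib]

theorem R_inv {p : Br k} (hp : p ∈ Pure k) (a : ℕ) : R p⁻¹ a = - R p a := by
  simp [R, cr_inv_pure hp]

theorem R_conj (g : Br k) {p : Br k} (hp : p ∈ Pure k) (a : ℕ) :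
    R (g * p * g⁻¹) a = R p ((perm k g)⁻¹ a) := by
  simp only [R, cr_conj g hp]
  rw [← Equiv.sum_comp (permF k g)]
  refine Finset.sum_congr rfl fun d _ => ?_
  rw [permF_val]
  simp

theorem sum_R (p : Br k) : ∑ a : Fin (k + 1), R p a = 2 * (expo k p).toAdd := sum_cr p

theorem sum_E_row {i j : ℕ} (hij : i ≠ j) (hi : i ≤ k) (hj : j ≤ k) (a : ℕ) :
    ∑ d : Fin (k + 1), 2 * E i j a d = if a = i ∨ a = j then 2 else 0 := by
  have : ∀ d : Fin (k + 1), 2 * E i j a d =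
      (if d = ⟨j, by omega⟩ then (if a = i then 2 else 0) else 0) +
      (if d = ⟨i, by omega⟩ then (if a = j then 2 else 0) else 0) := by
    intro d
    simp only [E, Fin.ext_iff]
    split_ifs <;> omega
  simp only [this, Finset.sum_add_distrib, Finset.sum_ite_eq', Finset.mem_univ, if_true]
  split_ifs <;> omega

theorem R_A {i j : ℕ} (hij : i < j) (hj : j ≤ k) (a : ℕ) :
    R (A k i j) a = if a = i ∨ a = j then 2 else 0 := by
  simp only [R, cr_A hij hj]
  exact sum_E_row hij.ne (by omega) hj a

theorem R_s_sq (hk : 1 ≤ k) (a : ℕ) : R (s k 0 * s k 0) a = if a = 0 ∨ a = 1 then 2 else 0 := by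
  simp only [R, cr_s_sq (show 0 < k by omega)]
  exact sum_E_row (by omega) (by omega) hk a

theorem expo_A {i j : ℕ} (hij : i < j) (hj : j ≤ k) : (expo k (A k i j)).toAdd = 2 := by
  obtain ⟨g, t, ht, e⟩ := A_conj hij hj
  rw [e]
  simp [expo_s ht]

end R

/-- The linking numbers of `φ (s k 0 * s k 0)` are invariant under the permutations of the generators
commuting with `s k 0`, so they take at most three values off the diagonal. -/
theorem cr_formula_base {k : ℕ} (hk : 1 ≤ k) (φ : Br k ≃* Br k)
    (hρ : ∀ b, perm k (φ b) = perm k b) : ∃ α β z : ℤ, Even z ∧ (k < 3 → z = 0) ∧ (k < 2 → β = 0) ∧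
      ∀ a ≤ k, ∀ b ≤ k, a ≠ b → cr (φ (s k 0 * s k 0)) a b = α * cr (s k 0 * s k 0) a b +
        β * (R (s k 0 * s k 0) a + R (s k 0 * s k 0) b) + z * (expo k (s k 0 * s k 0)).toAdd := by
  have hpure : φ (s k 0 * s k 0) ∈ Pure k := by
    rw [mem_Pure, hρ]; exact s_sq_pure (by omega)
  have hexp : (expo k (s k 0 * s k 0)).toAdd = 2 := by simp [expo_s (show 0 < k by omega)]
  have inv : ∀ i, (i = 0 ∨ 2 ≤ i) → i < k → ∀ a b, cr (φ (s k 0 * s k 0)) (swap i (i + 1) a)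
      (swap i (i + 1) b) = cr (φ (s k 0 * s k 0)) a b := by
    intro i hi hik a b
    have hcomm : Commute (s k i) (s k 0 * s k 0) := by
      rcases hi with rfl | hi
      · exact (Commute.refl _).mul_right (Commute.refl _)
      · exact (s_comm' (by omega)).symm.mul_right (s_comm' (by omega)).symm
    have := cr_conj (φ (s k i)) hpure a b
    rw [(hcomm.map φ).eq, mul_inv_cancel_right, hρ, perm_s hik, swap_inv] at this
    exact this.symm
  have hz : cr (φ (s k 0 * s k 0)) 2 3 = 2 * cr (φ (s k 0)) 2 3 := by
    rw [map_mul, cr_mul, hρ, perm_s (by omega)]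
    simp [swap_apply_def]
    ring
  have hzeven : Even (cr (φ (s k 0)) 2 3) := by
    rw [cr_even_iff _ (by omega), hρ, perm_s (by omega)]
    simp [swap_apply_def]
  obtain ⟨x, hx⟩ := cr_even hpure 0 1
  obtain ⟨y, hy⟩ := cr_even hpure 0 2
  have hout : ∀ a b, k < b → cr (φ (s k 0 * s k 0)) a b = 0 := fun a b h => by
    rw [cr_symm]; exact cr_out _ _ h
  set v := cr (φ (s k 0 * s k 0)) with hv
  set z := cr (φ (s k 0)) 2 3
  have h0 : ∀ b, 2 ≤ b → b ≤ k → v 0 b = y + y := by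
    intro b hb
    induction b, hb using Nat.le_induction with
    | base => exact fun _ => hy
    | succ b hb ih =>
      intro h
      have := inv b (Or.inr hb) (by omega) 0 b
      rw [swap_apply_left, swap_apply_of_ne_of_ne (by omega) (by omega)] at this
      rw [this, ih (by omega)]
  have h1 : ∀ b, 2 ≤ b → b ≤ k → v 1 b = y + y := by
    intro b hb hbk
    have := inv 0 (Or.inl rfl) (by omega) 0 b
    rw [zero_add, swap_apply_left, swap_apply_of_ne_of_ne (by omega) (by omega)] at this
    rw [this, h0 b hb hbk]
  have h2' : ∀ a, 2 ≤ a → ∀ b, a + 1 ≤ b → b ≤ k → v a b = v a (a + 1) := by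
    intro a ha b hb
    induction b, hb using Nat.le_induction with
    | base => exact fun _ => rfl
    | succ b hb ih =>
      intro h
      have := inv b (by omega) (by omega) a b
      rw [swap_apply_left, swap_apply_of_ne_of_ne (by omega) (by omega)] at this
      rw [this, ih (by omega)]
  have h2'' : ∀ a, 2 ≤ a → a + 1 ≤ k → v a (a + 1) = 2 * z := by
    intro a ha
    induction a, ha using Nat.le_induction with
    | base => exact fun _ => hz
    | succ a ha ih =>
      intro h
      have := inv a (by omega) (by omega) a (a + 2)
      rw [swap_apply_left, swap_apply_of_ne_of_ne (by omega) (by omega),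
        h2' a ha (a + 2) (by omega) (by omega), ih (by omega)] at this
      exact this
  have hcr := cr_s_sq (show 0 < k by omega)
  refine ⟨x - 2 * y + z, y - z, z, hzeven, fun h => ?_, fun h => ?_, ?_⟩
  · have := hout 2 3 h; omega
  · have := hout 0 2 h; have := hout 2 3 (by omega); omega
  · have key : ∀ a b, a < b → b ≤ k → v a b = (x - 2 * y + z) * cr (s k 0 * s k 0) a b +
        (y - z) * (R (s k 0 * s k 0) a + R (s k 0 * s k 0) b) +
        z * (expo k (s k 0 * s k 0)).toAdd := by
      intro a b hab hb
      rw [R_s_sq hk, R_s_sq hk, hcr, hexp]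
      simp only [E]
      rcases Nat.lt_or_ge b 2 with hb2 | hb2
      · obtain rfl : a = 0 := by omega
        obtain rfl : b = 1 := by omega
        rw [hx]; simp; ring
      rcases Nat.lt_or_ge a 2 with ha2 | ha2
      · have e1 : ¬ (b = 0 ∨ b = 1) := by omega
        have e2 : a = 0 ∨ a = 1 := by omega
        have e3 : v a b = y + y := by
          rcases e2 with rfl | rfl
          · exact h0 b hb2 hb
          · exact h1 b hb2 hb
        rw [e3, if_pos e2, if_neg e1, if_neg (by omega)]
        ring
      · rw [if_neg (by omega), if_neg (by omega), if_neg (by omega), h2' a ha2 b hab hb,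
          h2'' a ha2 (by omega)]
        ring
    intro a ha b hb hab
    rcases Nat.lt_or_gt_of_ne hab with h | h
    · exact key a b h hb
    · rw [hv, cr_symm, cr_symm (s k 0 * s k 0), ← hv, key b a h ha]
      ring

/-- The action on linking numbers is an equivariant combination of the identity, the row sums `R`
and the exponent sum. -/
theorem cr_formula {k : ℕ} (hk : 1 ≤ k) (φ : Br k ≃* Br k)
    (hρ : ∀ b, perm k (φ b) = perm k b) : ∃ α β z : ℤ, Even z ∧ (k < 3 → z = 0) ∧ (k < 2 → β = 0) ∧
      ∀ p ∈ Pure k, ∀ a ≤ k, ∀ b ≤ k, a ≠ b → cr (φ p) a b = α * cr p a b +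
        β * (R p a + R p b) + z * (expo k p).toAdd := by
  obtain ⟨α, β, z, h1, h2, h3, h⟩ := cr_formula_base hk φ hρ
  refine ⟨α, β, z, h1, h2, h3, fun p hp => ?_⟩
  have hP : ∀ p ∈ Pure k, φ p ∈ Pure k := fun p hp => by rw [mem_Pure, hρ]; exact hp
  refine pure_ind (p := fun p => ∀ a ≤ k, ∀ b ≤ k, a ≠ b → cr (φ p) a b = α * cr p a b +
        β * (R p a + R p b) + z * (expo k p).toAdd) ?_ ?_ ?_ ?_ hp
  · intro a _ b _ _
    simp [cr_one, R_one]
  · intro i j hij hj a ha b hb hab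
    obtain ⟨g, t, ht, e⟩ := A_conj hij hj
    obtain ⟨g', e'⟩ := isConj_iff.1 (s_isConj (k := k) (i := 0) (j := t) (by omega) ht)
    have e2 : A k i j = (g * g') * (s k 0 * s k 0) * (g * g')⁻¹ := by
      rw [e, ← e']; group
    generalize g * g' = w at e2
    have hs := s_sq_pure (show 0 < k by omega)
    have hle : ∀ c ≤ k, (perm k w)⁻¹ c ≤ k := fun c hc => by rw [← map_inv]; exact perm_le _ hc
    rw [e2, R_conj _ hs, R_conj _ hs, map_mul, map_mul, map_inv, cr_conj _ (hP _ hs),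
      cr_conj _ hs, hρ, h _ (hle a ha) _ (hle b hb) (fun h => hab ((perm k w)⁻¹.injective h))]
    simp
  · intro p hp q hq hp1 hq1 a ha b hb hab
    rw [map_mul, cr_mul_pure (hP p hp), cr_mul_pure hp, R_mul hp, R_mul hp, map_mul, toAdd_mul]
    simp only [Pi.add_apply]
    rw [hp1 a ha b hb hab, hq1 a ha b hb hab]
    ring
  · intro p hp hp1 a ha b hb hab
    rw [map_inv, cr_inv_pure (hP p hp), cr_inv_pure hp, R_inv hp, R_inv hp, map_inv, toAdd_inv]
    simp only [Pi.neg_apply]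
    rw [hp1 a ha b hb hab]
    ring

end DG

namespace DG

open Equiv

theorem R_formula {k : ℕ} {α β z : ℤ} {p q : Br k}
    (h : ∀ a ≤ k, ∀ b ≤ k, a ≠ b → cr q a b = α * cr p a b +
      β * (R p a + R p b) + z * (expo k p).toAdd) {a : ℕ} (ha : a ≤ k) :
    R q a = (α + (k - 1) * β) * R p a + (2 * β + k * z) * (expo k p).toAdd := by
  have h1 : ∀ d : Fin (k + 1), cr q a d = α * cr p a d + β * R p a + β * R p d +
      z * (expo k p).toAdd - if d = ⟨a, by omega⟩ then 2 * β * R p a + z * (expo k p).toAdd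
        else 0 := by
    intro d
    by_cases hd : d = ⟨a, by omega⟩
    · subst hd
      simp only [cr_diag]
      simp
      ring
    · rw [if_neg hd, h a ha d (by omega) (fun e => hd (by simp [e]))]
      ring
  unfold R at *
  simp only [h1, Finset.sum_sub_distrib, Finset.sum_add_distrib, Finset.sum_ite_eq',
    Finset.mem_univ, if_true, ← Finset.mul_sum, sum_cr]
  simp
  ring

theorem unit_cases {z : ℤ} (h : IsUnit z) : z = 1 ∨ z = -1 := Int.isUnit_iff.1 h

/-- An automorphism inducing the identity on permutations acts on linking numbers by a sign. -/
theorem cr_sign {k : ℕ} (hk : 1 ≤ k) (φ : Br k ≃* Br k)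
    (hρ : ∀ b, perm k (φ b) = perm k b) : ∃ m : ℤ, (m = 1 ∨ m = -1) ∧
      ∀ p ∈ Pure k, ∀ a b, cr (φ p) a b = m * cr p a b := by
  have hρ' : ∀ b, perm k (φ.symm b) = perm k b := fun b => by
    rw [← hρ, MulEquiv.apply_symm_apply]
  obtain ⟨α, β, z, hz, hz3, hb2, h⟩ := cr_formula hk φ hρ
  obtain ⟨α', β', z', -, -, -, h'⟩ := cr_formula hk φ.symm hρ'
  obtain ⟨m, hm, hexp⟩ := expo_aut hk φ
  have hP : ∀ p ∈ Pure k, φ p ∈ Pure k := fun p hp => by rw [mem_Pure, hρ]; exact hp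
  -- the three eigenvalues `m`, `α + (k - 1) β`, `α` of the action on linking numbers are units
  have hmain : 2 * m = 2 * (α + (k - 1) * β) + (k + 1) * (2 * β + k * z) := by
    have hs := s_sq_pure (show 0 < k by omega)
    have h1 := sum_R (φ (s k 0 * s k 0))
    rw [hexp] at h1
    have h2 : ∀ a : Fin (k + 1), R (φ (s k 0 * s k 0)) a = _ :=
      fun a => R_formula (h _ hs) (by omega)
    simp only [h2, Finset.sum_add_distrib, ← Finset.mul_sum, sum_R] at h1
    simp [expo_s (show 0 < k by omega)] at h1
    linarith
  have hl1 : 2 ≤ k → IsUnit (α + (k - 1) * β) := by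
    intro hk2
    have p1 : A k 0 2 ∈ Pure k := A_pure (by omega) hk2
    have p2 : A k 1 2 ∈ Pure k := A_pure (by omega) hk2
    have hp : A k 0 2 * (A k 1 2)⁻¹ ∈ Pure k := mul_mem p1 (inv_mem p2)
    have hR : R (A k 0 2 * (A k 1 2)⁻¹) 0 = 2 := by
      rw [R_mul p1, R_inv p2, R_A (by omega) hk2, R_A (by omega) hk2]
      simp
    have he : (expo k (A k 0 2 * (A k 1 2)⁻¹)).toAdd = 0 := by
      rw [map_mul, map_inv, toAdd_mul, toAdd_inv, expo_A (by omega) hk2, expo_A (by omega) hk2]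
      simp
    generalize A k 0 2 * (A k 1 2)⁻¹ = p at hp hR he
    have h1 := R_formula (h _ hp) (a := 0) (by omega)
    have h2 := R_formula (h' _ (hP p hp)) (a := 0) (by omega)
    rw [MulEquiv.symm_apply_apply, h1, hexp, he, hR] at h2
    refine IsUnit.of_mul_eq_one (α' + (k - 1) * β') ?_
    linarith
  have hl2 : 3 ≤ k → IsUnit α := by
    intro hk3
    have p1 : A k 0 2 ∈ Pure k := A_pure (by omega) (by omega)
    have p2 : A k 1 2 ∈ Pure k := A_pure (by omega) (by omega)
    have p3 : A k 0 3 ∈ Pure k := A_pure (by omega) (by omega)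
    have p4 : A k 1 3 ∈ Pure k := A_pure (by omega) (by omega)
    have hq : (A k 0 2 * (A k 1 2)⁻¹) * (A k 1 3 * (A k 0 3)⁻¹) ∈ Pure k :=
      mul_mem (mul_mem p1 (inv_mem p2)) (mul_mem p4 (inv_mem p3))
    have hR : ∀ a, R ((A k 0 2 * (A k 1 2)⁻¹) * (A k 1 3 * (A k 0 3)⁻¹)) a = 0 := by
      intro a
      rw [R_mul (mul_mem p1 (inv_mem p2)), R_mul p1, R_mul p4, R_inv p2, R_inv p3,
        R_A (by omega) (by omega), R_A (by omega) (by omega), R_A (by omega) (by omega),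
        R_A (by omega) (by omega)]
      split_ifs <;> omega
    have he : (expo k ((A k 0 2 * (A k 1 2)⁻¹) * (A k 1 3 * (A k 0 3)⁻¹))).toAdd = 0 := by
      simp only [map_mul, map_inv, toAdd_mul, toAdd_inv]
      rw [expo_A (by omega) (by omega), expo_A (by omega) (by omega),
        expo_A (by omega) (by omega), expo_A (by omega) (by omega)]
      simp
    have hc : cr ((A k 0 2 * (A k 1 2)⁻¹) * (A k 1 3 * (A k 0 3)⁻¹)) 0 2 = 2 := by
      rw [cr_mul_pure (mul_mem p1 (inv_mem p2)), cr_mul_pure p1, cr_mul_pure p4, cr_inv_pure p2,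
        cr_inv_pure p3]
      simp only [Pi.add_apply, Pi.neg_apply]
      rw [cr_A (by omega) (by omega), cr_A (by omega) (by omega), cr_A (by omega) (by omega),
        cr_A (by omega) (by omega)]
      simp [E]
    generalize (A k 0 2 * (A k 1 2)⁻¹) * (A k 1 3 * (A k 0 3)⁻¹) = p at hq hR he hc
    have r : ∀ a ≤ k, R (φ p) a = 0 := by
      intro a ha
      rw [R_formula (h _ hq) ha, hR, he]; ring
    have h1 := h p hq 0 (by omega) 2 (by omega) (by omega)
    have h2 := h' _ (hP p hq) 0 (by omega) 2 (by omega) (by omega)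
    rw [MulEquiv.symm_apply_apply, h1, hexp, he, r 0 (by omega), r 2 (by omega), hR, hR, hc] at h2
    refine IsUnit.of_mul_eq_one α' ?_
    linarith
  have hfin : β = 0 ∧ z = 0 ∧ α = m := by
    rcases Nat.lt_or_ge k 2 with hk2 | hk2
    · obtain rfl : k = 1 := by omega
      obtain rfl := hz3 (by omega)
      obtain rfl := hb2 (by omega)
      refine ⟨rfl, rfl, ?_⟩
      push_cast at hmain
      linarith
    have u1 := unit_cases (hl1 hk2)
    have u0 := unit_cases hm
    rcases Nat.lt_or_ge k 3 with hk3 | hk3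
    · obtain rfl : k = 2 := by omega
      obtain rfl := hz3 (by omega)
      push_cast at hmain u1
      omega
    have u2 := unit_cases (hl2 hk3)
    by_cases hβ : β = 0
    · subst hβ
      have hz0 : z = 0 := by
        by_contra hne
        have h6 : (12 : ℤ) ≤ (k + 1) * k := by
          have : (3 : ℤ) ≤ k := by exact_mod_cast hk3
          nlinarith
        have h7 : (k + 1) * k * z = 2 * m - 2 * α := by linarith
        rcases lt_or_gt_of_ne hne with hlt | hlt
        · have : (k + 1) * k * z ≤ -12 := by nlinarith
          omega
        · have : 12 ≤ (k + 1) * k * z := by nlinarith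
          omega
      subst hz0
      refine ⟨rfl, rfl, ?_⟩
      linarith
    · exfalso
      -- `(k - 1) β` is a difference of two signs, which leaves only four strands
      have hk4 : k = 3 := by
        by_contra hne
        have h3 : (3 : ℤ) ≤ k - 1 := by
          have : (4 : ℤ) ≤ k := by exact_mod_cast (show 4 ≤ k by omega)
          linarith
        rcases lt_or_gt_of_ne hβ with hlt | hlt
        · have : (k - 1) * β ≤ -3 := by nlinarith
          omega
        · have : 3 ≤ (k - 1) * β := by nlinarith
          omega
      subst hk4
      obtain ⟨y, rfl⟩ := hz
      push_cast at hmain u1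
      omega
  obtain ⟨rfl, rfl, rfl⟩ := hfin
  refine ⟨α, unit_cases hm, fun p hp a b => ?_⟩
  by_cases ha : a ≤ k
  · by_cases hb : b ≤ k
    · by_cases hab : a = b
      · subst hab; simp [cr_diag]
      · rw [h p hp a ha b hb hab]; ring
    · rw [cr_symm, cr_symm p, cr_out _ _ (by omega), cr_out _ _ (by omega)]; simp
  · rw [cr_out _ _ (by omega), cr_out _ _ (by omega)]; simp

end DG

namespace DG

/-! ### Normalised automorphisms -/

open Equiv

/-- Automorphisms acting trivially on permutations and on linking numbers. -/
structure Norm {k : ℕ} (φ : Br k ≃* Br k) : Prop where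
  perm : ∀ b, perm k (φ b) = perm k b
  cr : ∀ p ∈ Pure k, cr (φ p) = cr p

theorem Norm.pure {k : ℕ} {φ : Br k ≃* Br k} (h : Norm φ) {p : Br k} :
    φ p ∈ Pure k ↔ p ∈ Pure k := by rw [mem_Pure, h.perm, mem_Pure]

theorem Norm.symm {k : ℕ} {φ : Br k ≃* Br k} (h : Norm φ) : Norm φ.symm where
  perm b := by rw [← h.perm, MulEquiv.apply_symm_apply]
  cr p hp := by
    rw [← h.cr, MulEquiv.apply_symm_apply]
    rw [← h.pure, MulEquiv.apply_symm_apply]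
    exact hp

theorem Norm.conj {k : ℕ} {φ : Br k ≃* Br k} (h : Norm φ) {w : Br k} (hw : w ∈ Pure k) :
    Norm (φ.trans (MulAut.conj w)) where
  perm b := by
    simp only [MulEquiv.trans_apply, MulAut.conj_apply, map_mul, map_inv]
    rw [mem_Pure.1 hw, h.perm]
    simp
  cr p hp := by
    simp only [MulEquiv.trans_apply, MulAut.conj_apply]
    funext a b
    rw [cr_conj _ (h.pure.2 hp), mem_Pure.1 hw, h.cr p hp]
    simp

/-- An automorphism that preserves an embedded group, together with its inverse, restricts to it. -/
theorem lift_equiv {G H : Type*} [Group G] [Group H] (j : G →* H) (hj : Function.Injective j)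
    (φ : H ≃* H) (h1 : ∀ g, ∃ g', φ (j g) = j g') (h2 : ∀ g, ∃ g', φ.symm (j g) = j g') :
    ∃ ψ : G ≃* G, ∀ g, j (ψ g) = φ (j g) := by
  choose f hf using h1
  choose f' hf' using h2
  refine ⟨{ toFun := f, invFun := f', left_inv := fun g => hj ?_, right_inv := fun g => hj ?_,
            map_mul' := fun a b => hj ?_ }, fun g => (hf g).symm⟩
  · rw [← hf', ← hf, MulEquiv.symm_apply_apply]
  · rw [← hf, ← hf', MulEquiv.apply_symm_apply]
  · rw [← hf, map_mul, map_mul, hf, hf, map_mul]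

section
variable {k : ℕ}

/-- Otherwise forgetting the last strand would produce a nontrivial finitely generated normal subgroup
of the pure braid group with vanishing linking numbers. -/
theorem Norm.map_freeHom {φ : Br (k + 1) ≃* Br (k + 1)} (h : Norm φ) (f : F k) :
    ∃ f', φ (freeHom k f) = freeHom k f' := by
  have hle : ((freeHom k).range.map φ.toMonoidHom) ≤ (freeHom k).range := by
    apply le_range_of (fg_normal_pure k)
    · refine fg_map _ ?_
      rw [freeHom, FreeGroup.range_lift_eq_closure]
      exact (Subgroup.fg_iff _).2 ⟨_, rfl, Set.finite_range _⟩
    · rintro _ ⟨_, ⟨f, rfl⟩, rfl⟩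
      exact h.pure.2 (freeHom_pure f)
    · rintro _ ⟨_, ⟨f, rfl⟩, rfl⟩ g hg
      obtain ⟨t, ht, -⟩ := exists_iota_pure (h.symm.pure.2 hg)
      refine ⟨φ.symm g * freeHom k f * (φ.symm g)⁻¹, ?_, by simp⟩
      refine ⟨t.left * artin k t.right f * t.left⁻¹, ?_⟩
      rw [← ht, iota_eq, map_mul, map_mul, freeHom_artin, map_inv]
      group
    · rintro _ ⟨_, ⟨f, rfl⟩, rfl⟩ a ha b hb
      change DG.cr (φ (freeHom k f)) a b = 0
      rw [h.cr _ (freeHom_pure f), cr_freeHom_le f ha hb]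
  obtain ⟨f', hf'⟩ := hle ⟨_, ⟨f, rfl⟩, rfl⟩
  exact ⟨f', hf'.symm⟩

theorem Norm.exists_theta {φ : Br (k + 1) ≃* Br (k + 1)} (h : Norm φ) :
    ∃ θ : F k ≃* F k, ∀ f, freeHom k (θ f) = φ (freeHom k f) :=
  lift_equiv _ (freeHom_injective k) φ h.map_freeHom h.symm.map_freeHom

theorem Norm.map_up {φ : Br (k + 1) ≃* Br (k + 1)} (h : Norm φ) (b : Br k) :
    ∃ f b', φ (up k b) = freeHom k f * up k b' := by
  obtain ⟨g, hg⟩ := exists_iota (b := φ (up k b)) (by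
    rw [h.perm, perm_up, perm_fix _ (by omega)])
  exact ⟨g.left, g.right, by rw [← hg, iota_eq]⟩

theorem eq_of_freeHom_up {f f' : F k} {b b' : Br k}
    (h : freeHom k f * up k b = freeHom k f' * up k b') : f = f' ∧ b = b' := by
  rw [← iota_inl, ← iota_inl, ← iota_inr, ← iota_inr, ← map_mul, ← map_mul] at h
  have h2 := iota_injective k h
  have e1 := congrArg SemidirectProduct.right h2
  simp at e1
  subst e1
  exact ⟨SemidirectProduct.inl_injective (mul_right_cancel h2), rfl⟩

/-- The automorphism of the braid group on one strand less induced by forgetting the last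
strand. -/
theorem Norm.exists_bar {φ : Br (k + 1) ≃* Br (k + 1)} (h : Norm φ) :
    ∃ ψ : Br k ≃* Br k, Norm ψ ∧ ∀ b, ∃ f, φ (up k b) = freeHom k f * up k (ψ b) := by
  choose f ψ hψ using h.map_up
  choose f' ψ' hψ' using h.symm.map_up
  have hF : ∀ f b, ∃ f', φ (freeHom k f * up k b) = freeHom k f' * up k (ψ b) := by
    intro u b
    obtain ⟨u', hu'⟩ := h.map_freeHom u
    exact ⟨u' * f b, by rw [map_mul, hu', hψ, map_mul, mul_assoc]⟩
  have hF' : ∀ f b, ∃ f', φ.symm (freeHom k f * up k b) = freeHom k f' * up k (ψ' b) := by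
    intro u b
    obtain ⟨u', hu'⟩ := h.symm.map_freeHom u
    exact ⟨u' * f' b, by rw [map_mul, hu', hψ', map_mul, mul_assoc]⟩
  let e : Br k ≃* Br k :=
    { toFun := ψ
      invFun := ψ'
      left_inv := fun b => by
        obtain ⟨u, hu⟩ := hF' (f b) (ψ b)
        rw [← hψ, MulEquiv.symm_apply_apply] at hu
        exact (eq_of_freeHom_up (f := 1) (f' := u) (b := b)
          ((by rw [map_one, one_mul] : freeHom k 1 * up k b = up k b).trans hu)).2.symm
      right_inv := fun b => by
        obtain ⟨u, hu⟩ := hF (f' b) (ψ' b)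
        rw [← hψ', MulEquiv.apply_symm_apply] at hu
        exact (eq_of_freeHom_up (f := 1) (f' := u) (b := b)
          ((by rw [map_one, one_mul] : freeHom k 1 * up k b = up k b).trans hu)).2.symm
      map_mul' := fun a b => by
        have h1 : freeHom k (f (a * b)) * up k (ψ (a * b)) =
            freeHom k (f a * artin k (ψ a) (f b)) * up k (ψ a * ψ b) := by
          rw [← hψ, map_mul, map_mul, hψ, hψ, map_mul, freeHom_artin, map_mul]
          group
        exact (eq_of_freeHom_up h1).2 }
  refine ⟨e, ⟨fun b => ?_, fun p hp => ?_⟩, fun b => ⟨f b, hψ b⟩⟩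
  · have := h.perm (up k b)
    rw [hψ, map_mul, mem_Pure.1 (freeHom_pure _), one_mul, perm_up, perm_up] at this
    exact this
  · have := h.cr (up k p) (up_pure.2 hp)
    rw [hψ, cr_mul_pure (freeHom_pure _), cr_up, cr_up] at this
    apply cr_ext
    intro a b
    rw [← this]
    simp only [Pi.add_apply]
    rw [cr_freeHom_le _ (by omega) (by omega), zero_add]
    rfl

end

end DG

namespace DG

/-! ### Normalised automorphisms are inner -/

open Equiv

/-- The braid `σ_{m-1} ⋯ σ_1 σ_0`. -/
def dl (k : ℕ) : ℕ → Br k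
  | 0 => 1
  | m + 1 => s k m * dl k m

/-- The Artin action of `dl k m`. -/
theorem artin_dl {k m : ℕ} (hm : m ≤ k) : artin k (dl k m) (x k 0) = x k m ∧
    (∀ j, j < m → artin k (dl k m) (x k (j + 1)) = (x k m)⁻¹ * x k j * x k m) ∧
    ∀ j, m < j → artin k (dl k m) (x k j) = x k j := by
  induction m with
  | zero => simp [dl]
  | succ m ih =>
    obtain ⟨h0, h1, h2⟩ := ih (by omega)
    have hm' : m < k := by omega
    refine ⟨?_, fun j hj => ?_, fun j hj => ?_⟩
    · rw [dl, map_mul, MulAut.mul_apply, h0, artin_left hm']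
    · rw [dl, map_mul, MulAut.mul_apply]
      rcases Nat.lt_succ_iff_lt_or_eq.1 hj with hj | rfl
      · rw [h1 j hj, map_mul, map_mul, map_inv, artin_left hm', artin_ne hm' (by omega) (by omega)]
      · rw [h2 _ (by omega), artin_right hm']
    · rw [dl, map_mul, MulAut.mul_apply, h2 j (by omega), artin_ne hm' (by omega) (by omega)]

/-- The cyclic shift `j ↦ j - 1` of the letters. -/
def shift (k : ℕ) : Perm (Fin (k + 1)) := Equiv.addRight (-1)

theorem shift_pow (k m : ℕ) (j : Fin (k + 1)) : (shift k ^ m) j = j + m • (-1) := by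
  induction m generalizing j with
  | zero => simp
  | succ m ih =>
    rw [pow_succ', Perm.mul_apply, ih, succ_nsmul, ← add_assoc]
    rfl

theorem fin_nsmul_one {k : ℕ} (a : Fin (k + 1)) : (a : ℕ) • (1 : Fin (k + 1)) = a := by
  have : ∀ m : ℕ, m • (1 : Fin (k + 1)) = Fin.ofNat (k + 1) m := by
    intro m
    induction m with
    | zero => rw [zero_nsmul]; rfl
    | succ m ih =>
      rw [succ_nsmul, ih]
      apply Fin.ext
      simp [Fin.val_add, Nat.add_mod]
  rw [this, Fin.ofNat_val_eq_self]

theorem shift_pow_card (k : ℕ) : shift k ^ (k + 1) = 1 := by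
  ext j
  rw [shift_pow]
  have := card_nsmul_eq_zero (x := (-1 : Fin (k + 1)))
  rw [Fintype.card_fin] at this
  rw [this, add_zero]
  rfl

/-- The braid rotating the first `k + 1` strands around the last one as an axis; its `(k + 1)`-st
power commutes with the free group. -/
def dd (k : ℕ) : Br (k + 1) := freeHom k (x k k) * up k (dl k k)

/-- Conjugation by `dd` permutes the letters of the free group cyclically. -/
theorem dd_conj {k : ℕ} (f : F k) :
    dd k * freeHom k f * (dd k)⁻¹ = freeHom k (FreeGroup.map (shift k) f) := by
  have h : ((MulAut.conj (x k k)).toMonoidHom.comp (artin k (dl k k)).toMonoidHom) =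
      FreeGroup.map (shift k) := by
    obtain ⟨h0, h1, -⟩ := artin_dl (le_refl k)
    apply FreeGroup.ext_hom
    intro j
    rw [FreeGroup.map.of, of_eq_x, of_eq_x]
    change x k k * artin k (dl k k) (x k j) * (x k k)⁻¹ = _
    obtain ⟨j, hj⟩ := j
    cases j with
    | zero =>
      have : ((shift k ⟨0, hj⟩ : Fin (k + 1)) : ℕ) = k := by
        change (((0 : Fin (k + 1)) + -1 : Fin (k + 1)) : ℕ) = k
        rw [zero_add, Fin.coe_neg_one]
      rw [this, h0, mul_inv_cancel_right]
    | succ j =>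
      have : ((shift k ⟨j + 1, hj⟩ : Fin (k + 1)) : ℕ) = j := by
        have e : (⟨j + 1, hj⟩ : Fin (k + 1)) = ⟨j, by omega⟩ + 1 := by
          apply Fin.ext
          rw [Fin.val_add_one_of_lt]
          exact Fin.lt_def.2 (by simp; omega)
        change ((⟨j + 1, hj⟩ + -1 : Fin (k + 1)) : ℕ) = j
        rw [e, add_neg_cancel_right]
      rw [this, h1 j (by omega)]
      group
  rw [← h]
  change _ = freeHom k (x k k * artin k (dl k k) f * (x k k)⁻¹)
  rw [map_mul, map_mul, freeHom_artin, map_inv, dd]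
  group

/-- Powers of `f * dd` are twisted norms of `f`. -/
theorem dd_tnorm {k : ℕ} (f : F k) (j : ℕ) :
    (freeHom k f * dd k) ^ j =
      freeHom k (Free.tnorm (FreeGroup.map (shift k)) f j) * dd k ^ j := by
  induction j with
  | zero => simp [Free.tnorm]
  | succ j ih =>
    rw [pow_succ', ih, Free.tnorm, map_mul, ← dd_conj, pow_succ']
    group

theorem dd_pow_conj {k : ℕ} (j : ℕ) (f : F k) :
    dd k ^ j * freeHom k f * (dd k ^ j)⁻¹ =
      freeHom k (FreeGroup.map (shift k ^ j : Perm (Fin (k + 1))) f) := by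
  induction j generalizing f with
  | zero => simp
  | succ j ih =>
    have : dd k ^ (j + 1) * freeHom k f * (dd k ^ (j + 1))⁻¹ =
        dd k * (dd k ^ j * freeHom k f * (dd k ^ j)⁻¹) * (dd k)⁻¹ := by
      rw [pow_succ']; group
    rw [this, ih, dd_conj, FreeGroup.map.comp, pow_succ']
    rfl

theorem dd_card_comm {k : ℕ} (f : F k) : Commute (dd k ^ (k + 1)) (freeHom k f) := by
  have := dd_pow_conj (k + 1) f
  rw [shift_pow_card] at this
  have h1 : FreeGroup.map ⇑(1 : Perm (Fin (k + 1))) f = f := FreeGroup.map.id f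
  rw [h1, mul_inv_eq_iff_eq_mul] at this
  exact this

theorem free_commute_eq_one {k : ℕ} (hk : 1 ≤ k) {f : F k} (h : ∀ g, g * f = f * g) : f = 1 := by
  have : Nontrivial (Fin (k + 1)) := Fin.nontrivial_iff_two_le.2 (by omega)
  exact Free.center_trivial h

section
variable {k : ℕ} {φ : Br (k + 1) ≃* Br (k + 1)}

/-- If `φ` covers the identity on the quotient by the free group, it can be corrected by an inner
automorphism coming from the free group so as to fix `dd`. -/
theorem Norm.fix_dd (hk : 1 ≤ k) (h : Norm φ)
    (hb : ∀ b, ∃ f, φ (up k b) = freeHom k f * up k b) :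
    ∃ g : F k, φ (dd k) = freeHom k g * dd k * (freeHom k g)⁻¹ := by
  obtain ⟨θ, hθ⟩ := h.exists_theta
  obtain ⟨f, hf⟩ := hb (dl k k)
  have h0 : φ (dd k) = freeHom k (θ (x k k) * f * (x k k)⁻¹) * dd k := by
    conv_lhs => rw [dd, map_mul, ← hθ, hf]
    rw [map_mul, map_mul, map_inv, dd]
    group
  set f0 := θ (x k k) * f * (x k k)⁻¹
  have h1 := dd_tnorm f0 (k + 1)
  rw [← h0, ← map_pow] at h1
  have h2 : Free.tnorm (FreeGroup.map (shift k)) f0 (k + 1) = 1 := by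
    apply free_commute_eq_one hk
    intro u
    apply freeHom_injective k
    have c1 : Commute (φ (dd k ^ (k + 1))) (freeHom k u) := by
      have := (dd_card_comm (θ.symm u)).map φ
      rwa [← hθ, MulEquiv.apply_symm_apply] at this
    have c2 : Commute (freeHom k (Free.tnorm (FreeGroup.map (shift k)) f0 (k + 1)))
        (freeHom k u) := by
      rw [← mul_inv_eq_iff_eq_mul.2 h1]
      exact c1.mul_left (dd_card_comm u).inv_left
    rw [map_mul, map_mul]
    exact c2.symm
  obtain ⟨g, hg⟩ := Free.hilbert90 (shift k) (k + 1) (by omega) (shift_pow_card k) f0 h2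
  refine ⟨g, ?_⟩
  rw [h0, hg, map_mul, map_inv, ← dd_conj]
  group

/-- An automorphism fixing `dd` and covering the identity is the identity. -/
theorem Norm.eq_id (hk : 1 ≤ k) (h : Norm φ)
    (hb : ∀ b, ∃ f, φ (up k b) = freeHom k f * up k b) (hd : φ (dd k) = dd k) (y : Br (k + 1)) :
    φ y = y := by
  obtain ⟨θ, hθ⟩ := h.exists_theta
  have hcomm : ∀ f, θ (FreeGroup.map (shift k) f) = FreeGroup.map (shift k) (θ f) := by
    intro f
    apply freeHom_injective k
    rw [hθ, ← dd_conj, ← dd_conj, map_mul, map_mul, map_inv, hd, hθ]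
  have hpow : ∀ (m : ℕ) f, θ (FreeGroup.map (shift k ^ m : Perm (Fin (k + 1))) f) =
      FreeGroup.map (shift k ^ m : Perm (Fin (k + 1))) (θ f) := by
    intro m
    induction m with
    | zero =>
      intro f
      have h1 : ∀ f, FreeGroup.map ⇑(1 : Perm (Fin (k + 1))) f = f := FreeGroup.map.id
      rw [pow_zero, h1, h1]
    | succ m ih =>
      intro f
      have h1 : ∀ f, FreeGroup.map ⇑(shift k ^ (m + 1)) f =
          FreeGroup.map (shift k) (FreeGroup.map ⇑(shift k ^ m) f) := by
        intro f
        rw [FreeGroup.map.comp, pow_succ']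
        rfl
      rw [h1, h1, hcomm, ih]
  have hid : ∀ u, θ u = u := by
    apply Free.rigid θ
    · intro a
      have e : ∀ j : Fin (k + 1), (shift k ^ ((-a : Fin (k + 1)) : ℕ)) j = j + a := by
        intro j
        rw [shift_pow]
        congr 1
        rw [neg_nsmul, fin_nsmul_one, neg_neg]
      have e' : ⇑(shift k ^ ((-a : Fin (k + 1)) : ℕ)) = (· + a) := funext e
      have := hpow ((-a : Fin (k + 1)) : ℕ) (FreeGroup.of 0)
      rw [e', FreeGroup.map.of, zero_add] at this
      exact this
    · intro j u
      have h1 := cr_freeHom_last (θ u) j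
      rw [hθ, h.cr _ (freeHom_pure u), cr_freeHom_last] at h1
      apply Multiplicative.toAdd.injective
      omega
  have hF : ∀ f, φ (freeHom k f) = freeHom k f := fun f => by rw [← hθ, hid]
  have hup : ∀ b, φ (up k b) = up k b := by
    intro b
    obtain ⟨f, hf⟩ := hb b
    have : f = 1 := by
      apply free_commute_eq_one hk
      intro g
      apply freeHom_injective k
      obtain ⟨g, rfl⟩ := (artin k b).surjective g
      have h1 := hF (artin k b g)
      rw [freeHom_artin, map_mul, map_mul, map_inv, hF, hf] at h1
      rw [map_mul, map_mul, freeHom_artin]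
      rw [mul_inv_rev] at h1
      calc _ = (freeHom k f * up k b * freeHom k g * ((up k b)⁻¹ * (freeHom k f)⁻¹)) *
            freeHom k f := by rw [h1]
        _ = _ := by group
    rw [hf, this, map_one, one_mul]
  have hP : ∀ p ∈ Pure (k + 1), φ p = p := by
    intro p hp
    obtain ⟨g, rfl, -⟩ := exists_iota_pure hp
    rw [iota_eq, map_mul, hF, hup]
  set t := s (k + 1) k with ht
  set e := (φ t)⁻¹ * t with he
  have heP : e ∈ Pure (k + 1) := by
    rw [mem_Pure, he, map_mul, map_inv, h.perm, inv_mul_cancel]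
  have hec : ∀ b, Commute b e := by
    apply pure_centre heP
    intro p hp
    have h1 := hP (t * p * t⁻¹) ((inferInstance : (Pure (k + 1)).Normal).conj_mem p hp t)
    rw [map_mul, map_mul, map_inv, hP p hp] at h1
    change p * e = e * p
    calc p * e = (φ t)⁻¹ * (φ t * p * (φ t)⁻¹) * t := by rw [he]; group
      _ = e * p := by rw [h1, he]; group
  have hte : φ t = t * e⁻¹ := by rw [he]; group
  have he1 : e = 1 := by
    obtain ⟨i, rfl⟩ : ∃ i, k = i + 1 := ⟨k - 1, by omega⟩
    have hr : s (i + 1 + 1) i * t * s (i + 1 + 1) i = t * s (i + 1 + 1) i * t := s_braid (by omega)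
    have hri : φ (s (i + 1 + 1) i) = s (i + 1 + 1) i := by rw [← up_s (by omega), hup]
    have h1 := congrArg φ hr
    simp only [map_mul] at h1
    rw [hri, hte] at h1
    set r := s (i + 1 + 1) i
    have c1 : r * (t * e⁻¹) * r = r * t * r * e⁻¹ := by
      have := (hec r).inv_right.eq
      rw [mul_assoc (r * t) r, this]; group
    have c2 : t * e⁻¹ * r * (t * e⁻¹) = t * r * t * e⁻¹ * e⁻¹ := by
      have := (hec (r * t)).inv_right.eq
      calc _ = t * (e⁻¹ * (r * t)) * e⁻¹ := by group
        _ = _ := by rw [← this]; group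
    rw [c1, c2, hr] at h1
    have h3 : (e⁻¹ : Br (i + 1 + 1)) = 1 := by
      rw [left_eq_mul] at h1
      exact h1
    exact inv_eq_one.1 h3
  have : φ.toMonoidHom = MonoidHom.id _ := by
    apply hom_ext
    intro i hi
    change φ _ = _
    rcases Nat.lt_succ_iff_lt_or_eq.1 hi with hi | rfl
    · rw [← up_s hi, hup]; rfl
    · rw [← ht, hte, he1, inv_one, mul_one]; rfl
  exact DFunLike.congr_fun this y

end

/-- Normalised automorphisms are conjugations by pure braids. -/
theorem Norm.inner {k : ℕ} (hk : 1 ≤ k) {φ : Br k ≃* Br k} (h : Norm φ) :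
    ∃ w ∈ Pure k, ∀ y, φ y = w⁻¹ * y * w := by
  induction k, hk using Nat.le_induction with
  | base =>
    refine ⟨1, one_mem _, fun y => ?_⟩
    have hz : ∀ y : Br 1, ∃ m : ℤ, y = s 1 0 ^ m := by
      intro y
      have : y ∈ Subgroup.closure {x : Br 1 | ∃ i < 1, x = s 1 i} := by rw [closure_s]; trivial
      have h1 : {x : Br 1 | ∃ i < 1, x = s 1 i} = {s 1 0} := by
        ext x; simp
      rw [h1, ← Subgroup.zpowers_eq_closure] at this
      obtain ⟨m, hm⟩ := this
      exact ⟨m, hm.symm⟩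
    obtain ⟨m, hm⟩ := hz (φ (s 1 0))
    have h1 := sum_cr (φ (s 1 0 * s 1 0))
    rw [h.cr _ (s_sq_pure (by omega)), sum_cr, map_mul φ, hm, map_mul (expo 1), map_mul (expo 1), map_zpow,
      expo_s (by omega)] at h1
    simp at h1
    have hm1 : m = 1 := by omega
    obtain ⟨l, rfl⟩ := hz y
    rw [map_zpow, hm, hm1]
    simp
  | succ k hk ih =>
    obtain ⟨ψ, hψ, hbar⟩ := h.exists_bar
    obtain ⟨w, hw, hψw⟩ := ih hψ
    have n1 := h.conj (up_pure.2 hw)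
    set φ1 := φ.trans (MulAut.conj (up k w)) with hφ1
    have hb1 : ∀ b, ∃ f, φ1 (up k b) = freeHom k f * up k b := by
      intro b
      obtain ⟨f, hf⟩ := hbar b
      refine ⟨artin k w f, ?_⟩
      rw [hφ1, MulEquiv.trans_apply, MulAut.conj_apply, hf, hψw, freeHom_artin]
      simp only [map_mul, map_inv]
      group
    obtain ⟨g, hg⟩ := n1.fix_dd hk hb1
    have n2 := n1.conj (inv_mem (freeHom_pure (k := k) g))
    have hid := n2.eq_id hk (fun b => by
        obtain ⟨f, hf⟩ := hb1 b
        refine ⟨g⁻¹ * f * artin k b g, ?_⟩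
        rw [MulEquiv.trans_apply, MulAut.conj_apply, hf]
        simp only [map_mul, map_inv, freeHom_artin]
        group) (by
        rw [MulEquiv.trans_apply, MulAut.conj_apply, hg]
        group)
    refine ⟨(freeHom k g)⁻¹ * up k w, mul_mem (inv_mem (freeHom_pure g)) (up_pure.2 hw), ?_⟩
    intro y
    have := hid y
    rw [MulEquiv.trans_apply, MulAut.conj_apply, hφ1, MulEquiv.trans_apply,
      MulAut.conj_apply] at this
    conv_rhs => rw [← this]
    group

/-- Every automorphism is inner up to `eps`. -/
theorem aut_inner {k : ℕ} (hk : 1 ≤ k) (φ : Br k ≃* Br k) :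
    ∃ w, (∀ y, φ y = w⁻¹ * y * w) ∨ ∀ y, φ y = w⁻¹ * eps k y * w := by
  obtain ⟨w, hw⟩ := perm_conj hk φ
  set φ' := φ.trans (MulAut.conj w⁻¹) with hφ'
  have hφ'y : ∀ y, φ y = w * φ' y * w⁻¹ := by
    intro y
    rw [hφ', MulEquiv.trans_apply, MulAut.conj_apply]
    group
  have hp : ∀ b, perm k (φ' b) = perm k b := by
    intro b
    rw [hφ', MulEquiv.trans_apply, MulAut.conj_apply, map_mul, map_mul, hw, ← map_mul, ← map_mul]
    congr 1
    group
  obtain ⟨m, hm, hcr⟩ := cr_sign hk φ' hp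
  rcases hm with rfl | rfl
  · have hn : Norm φ' := ⟨hp, fun p hpp => by funext a b; rw [hcr p hpp, one_mul]⟩
    obtain ⟨v, -, hv⟩ := hn.inner hk
    refine ⟨v * w⁻¹, Or.inl fun y => ?_⟩
    rw [hφ'y, hv]
    group
  · have hn : Norm (φ'.trans (eps k)) := by
      refine ⟨fun b => ?_, fun p hpp => ?_⟩
      · rw [MulEquiv.trans_apply, perm_eps, hp]
      · funext a b
        rw [MulEquiv.trans_apply, cr_eps, hcr p hpp]
        ring
    obtain ⟨v, -, hv⟩ := hn.inner hk
    refine ⟨eps k v * w⁻¹, Or.inr fun y => ?_⟩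
    have h1 := congrArg (eps k) (hv y)
    rw [MulEquiv.trans_apply, eps_eps, map_mul, map_mul, map_inv] at h1
    rw [hφ'y, h1]
    group

end DG

/-- Dyer–Grossman: every automorphism of `B n` is inner or inner
composed with `ε`, and `ε` is not inner; hence `Out (B n)` has order 2. -/
theorem dyer_grossman (n : ℕ) (hn : 2 ≤ n)
    (ε : B n ≃* B n) (hε : ∀ i : Fin (n - 1), ε (σ i) = (σ i)⁻¹) :
    (∀ φ : B n ≃* B n, ∃ w : B n,
      (∀ x : B n, φ x = w⁻¹ * x * w) ∨ (∀ x : B n, φ x = w⁻¹ * ε x * w)) ∧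
    ¬ ∃ w : B n, ∀ x : B n, ε x = w⁻¹ * x * w := by
  have hk : 1 ≤ n - 1 := by omega
  have hεe : ∀ x : DG.Br (n - 1), ε x = DG.eps (n - 1) x := by
    intro x
    have : (ε : DG.Br (n - 1) ≃* DG.Br (n - 1)).toMonoidHom = (DG.eps (n - 1)).toMonoidHom := by
      apply DG.hom_ext
      intro i hi
      change ε (DG.s (n - 1) i) = DG.eps (n - 1) (DG.s (n - 1) i)
      rw [DG.eps_s hi]
      have := hε ⟨i, hi⟩
      have e : σ (⟨i, hi⟩ : Fin (n - 1)) = DG.s (n - 1) i := DG.of_eq_s (⟨i, hi⟩ : Fin (n - 1))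
      rw [e] at this
      exact this
    exact DFunLike.congr_fun this x
  refine ⟨fun φ => ?_, ?_⟩
  · obtain ⟨w, hw⟩ := DG.aut_inner hk φ
    refine ⟨w, hw.imp id fun h x => ?_⟩
    rw [h x, hεe x]
  · rintro ⟨w, hw⟩
    -- The exponent sum is invariant under conjugation, but `ε` changes its sign.
    have h1 : DG.eps (n - 1) (DG.s (n - 1) 0) = w⁻¹ * DG.s (n - 1) 0 * w :=
      (hεe _).symm.trans (hw _)
    rw [DG.eps_s (by omega)] at h1
    have h2 := congrArg (DG.expo (n - 1)) h1
    rw [map_mul, map_mul, map_inv, map_inv, DG.expo_s (by omega)] at h2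
    have h3 := congrArg Multiplicative.toAdd h2
    simp at h3
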